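/- Case F3: Let l be a prime with l ≡ 3 (mod 4) and l > 3, let r ≥ 1, and let N = 4 l^r. Suppose p ≡ 3 (mod 4), the multiplicative order of p modulo l^r is φ(l^r)/2, and f = φ(N)/2 (so f = φ(l^r)). Set h = h(Q(√-l)). If l ≡ 7 (mod 8), then G(χ) = (-1)^{(p+1)/4} p^{f/2}. If l ≡ 3 (mod 8), then there exist integers a, b with 4p^h = a² + l b² and a ≡ -2 p^{(l-1+2h)/4} (mod l) such that G(χ) = (-1)^{(p+1)/4} · p^{f/2 - h} · ((a + b √-l)/2)². -/

import Mathlib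

open Complex Polynomial IntermediateField

/-- The complex primitive `p`-th root of unity `exp(2πi/p)`. -/
noncomputable def zetaP (p : ℕ) : ℂ := Complex.exp (2 * Real.pi * Complex.I / p)

/-- The Gauss sum `G(χ^λ) = ∑_{x ∈ F, x ≠ 0} χ^λ(x) ζ_p^{T(x)}`, where
`T` is the trace map from `F` down to `ZMod p`. -/
noncomputable def gaussSumN (p : ℕ) {F : Type} [Field F] [Fintype F] [Algebra (ZMod p) F]
    (χ : MulChar F ℂ) (lam : ℕ) : ℂ :=
  letI : DecidableEq F := Classical.decEq F
  ∑ x ∈ Finset.univ.filter (fun x : F => x ≠ 0),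
    (χ ^ lam) x * zetaP p ^ (Algebra.trace (ZMod p) F x).val

/-- `√-m = i√m ∈ ℂ`. -/
noncomputable def sqrtNeg (m : ℕ) : ℂ := Real.sqrt m * Complex.I

theorem sqrtNeg_sq (m : ℕ) : sqrtNeg m ^ 2 = -(m : ℂ) := by
  have h : ((Real.sqrt m : ℝ) : ℂ) ^ 2 = ((m : ℝ) : ℂ) := by
    rw [← Complex.ofReal_pow, Real.sq_sqrt (by positivity)]
  simp only [sqrtNeg, mul_pow, Complex.I_sq, h]
  push_cast
  ring

theorem isIntegral_sqrtNeg (m : ℕ) : IsIntegral ℚ (sqrtNeg m) := by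
  refine ⟨X ^ 2 + C (m : ℚ), monic_X_pow_add_C _ (by norm_num), ?_⟩
  simp [sqrtNeg_sq]

/-- The class number `h(ℚ(√-m))` of the quadratic field `ℚ(√-m) ⊆ ℂ`. -/
noncomputable def classNumSqrtNeg (m : ℕ) : ℕ :=
  haveI : FiniteDimensional ℚ ℚ⟮sqrtNeg m⟯ :=
    IntermediateField.adjoin.finiteDimensional (isIntegral_sqrtNeg m)
  haveI : CharZero ℚ⟮sqrtNeg m⟯ :=
    charZero_of_injective_algebraMap (algebraMap ℚ ℚ⟮sqrtNeg m⟯).injective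
  haveI : NumberField ℚ⟮sqrtNeg m⟯ := ⟨⟩
  NumberField.classNumber ℚ⟮sqrtNeg m⟯

/-- `√p* = √p` if `p ≡ 1 (mod 4)` and `i√p` if `p ≡ 3 (mod 4)`. -/
noncomputable def sqrtPStar (p : ℕ) : ℂ :=
  if p % 4 = 1 then (Real.sqrt p : ℂ) else (Real.sqrt p : ℂ) * Complex.I

/-!
Write `z = G(χ)`, `m = f / 2` and `h = h(ℚ(√-l))`. Since `p` generates a subgroup of index two in
`(ℤ/N)ˣ` and `χ` is trivial on `𝔽_pˣ`, the sum `z` is fixed by enough automorphisms to be an integer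
of `ℚ(√-l)`, and `|z| ^ 2 = p ^ f`. The only units being `±1`, such a `z` is determined up to sign
by its valuation at one prime above `p`.

Stickelberger's theorem computes that valuation as `N⁻¹ ∑ (p ^ i c mod N)` for some `c` prime to
`N`. Splitting `(ℤ/N)ˣ` into the two cosets of `⟨p⟩` turns this into
`m + (1 - (2/l)) / 2 · (c/l) · M / l` with `M = ∑_{0 ≤ a < l} (a/l) a`, and `M = ± l h` by the
class number formula. For `l ≡ 7 (mod 8)` the valuation is `m` and `z = ± p ^ m`. For
`l ≡ 3 (mod 8)` it is `m ± h` and `z = ± p ^ (m - h) α ^ 2`, where `α` generates the `h`-th power of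
a prime above `p`.

For the sign, reduce modulo a prime above `l`: there `χ` agrees with a character of order `4`, whose
Gauss sum is `(-1) ^ ((p + 1) / 4) p ^ m`, and `α` agrees with `ᾱ`, so that
`p ^ (m - h) α ^ 2 ≡ p ^ (m - h) α ᾱ = p ^ m`.
-/

/-! ### Gauss sums -/

section Integrality

variable {R R' : Type*} [CommRing R] [CommRing R']

theorem isIntegral_mulChar_apply [Finite R] (χ : MulChar R R') (x : R) :
    IsIntegral ℤ (χ x) := by
  have := Fintype.ofFinite Rˣ
  by_cases hx : IsUnit x
  · obtain ⟨u, rfl⟩ := hx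
    refine IsIntegral.of_pow (n := Fintype.card Rˣ) Fintype.card_pos ?_
    rw [← map_pow, ← Units.val_pow_eq_pow_val, pow_card_eq_one, Units.val_one, map_one]
    exact isIntegral_one
  · rw [χ.map_nonunit hx]
    exact isIntegral_zero

theorem isIntegral_addChar_apply [Finite R] (ψ : AddChar R R') (x : R) :
    IsIntegral ℤ (ψ x) := by
  have := Fintype.ofFinite R
  refine IsIntegral.of_pow (n := Fintype.card R) Fintype.card_pos ?_
  rw [← AddChar.map_nsmul_eq_pow, card_nsmul_eq_zero, AddChar.map_zero_eq_one]
  exact isIntegral_one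

theorem isIntegral_gaussSum [Fintype R] (χ : MulChar R R') (ψ : AddChar R R') :
    IsIntegral ℤ (gaussSum χ ψ) :=
  IsIntegral.sum _ fun x _ ↦ (isIntegral_mulChar_apply χ x).mul (isIntegral_addChar_apply ψ x)

theorem isIntegral_jacobiSum [Fintype R] (χ χ' : MulChar R R') :
    IsIntegral ℤ (jacobiSum χ χ') :=
  IsIntegral.sum _ fun x _ ↦
    (isIntegral_mulChar_apply χ x).mul (isIntegral_mulChar_apply χ' _)

end Integrality

section Conjugation

variable {F : Type*} [Field F] [Fintype F] {χ : MulChar F ℂ} {ψ : AddChar F ℂ}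

theorem gaussSum_mul_conj (hχ : χ ≠ 1) (hψ : ψ.IsPrimitive) :
    gaussSum χ ψ * starRingEnd ℂ (gaussSum χ ψ) = Fintype.card F := by
  rw [starRingEnd_apply, star_gaussSum_eq]
  exact gaussSum_mul_gaussSum_eq_card hχ hψ

end Conjugation

theorem isPrimitiveRoot_zetaP {n : ℕ} (hn : n ≠ 0) : IsPrimitiveRoot (zetaP n) n :=
  Complex.isPrimitiveRoot_exp n hn

section TraceCharacter

variable (p : ℕ) [Fact p.Prime] (F : Type*) [Field F] [Algebra (ZMod p) F]

/-- The additive character `x ↦ exp(2πi Tr(x) / p)` of a field over `ZMod p`, through which the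
sums `gaussSumN` are Gauss sums in the sense of Mathlib. -/
noncomputable def traceChar : AddChar F ℂ :=
  (ZMod.stdAddChar (N := p)).compAddMonoidHom (Algebra.trace (ZMod p) F).toAddMonoidHom

variable {F} in
theorem traceChar_apply (x : F) :
    traceChar p F x = zetaP p ^ (Algebra.trace (ZMod p) F x).val := by
  change ZMod.stdAddChar (Algebra.trace (ZMod p) F x) = _
  conv_lhs => rw [← ZMod.natCast_zmod_val (Algebra.trace (ZMod p) F x)]
  rw [← Int.cast_natCast, ZMod.stdAddChar_coe, zetaP, ← Complex.exp_nat_mul]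
  congr 1
  push_cast
  ring

theorem gaussSumN_eq_gaussSum {F : Type} [Field F] [Fintype F] [Algebra (ZMod p) F]
    (χ : MulChar F ℂ) (n : ℕ) : gaussSumN p χ n = gaussSum (χ ^ n) (traceChar p F) := by
  classical
  simp only [gaussSumN, gaussSum, traceChar_apply]
  rw [Finset.sum_filter]
  refine Finset.sum_congr rfl fun x _ ↦ ?_
  split_ifs with h
  · rfl
  · rw [not_ne_iff.mp h, MulChar.map_zero, zero_mul]

section Finite

variable [Finite F]

theorem traceChar_ne_one : traceChar p F ≠ 1 := by
  intro h
  refine Algebra.trace_ne_zero (ZMod p) F (LinearMap.ext fun b ↦ ?_)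
  have hb : ZMod.stdAddChar (Algebra.trace (ZMod p) F b) = (1 : ℂ) := DFunLike.congr_fun h b
  rwa [← (ZMod.stdAddChar (N := p)).map_zero_eq_one, ZMod.injective_stdAddChar.eq_iff] at hb

theorem isPrimitive_traceChar : (traceChar p F).IsPrimitive :=
  AddChar.IsPrimitive.of_ne_one (traceChar_ne_one p F)

variable {F} in
theorem traceChar_pow_char (x : F) : traceChar p F (x ^ p) = traceChar p F x := by
  have h := Algebra.trace_eq_of_algEquiv
    (FiniteField.frobeniusAlgEquivOfAlgebraic (ZMod p) F) x
  rw [FiniteField.coe_frobeniusAlgEquivOfAlgebraic, ZMod.card] at h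
  rw [traceChar_apply, traceChar_apply, h]

variable {F} in
theorem traceChar_pow_char_pow (x : F) (i : ℕ) :
    traceChar p F (x ^ p ^ i) = traceChar p F x := by
  induction i with
  | zero => simp
  | succ i ih => rw [pow_succ, pow_mul, traceChar_pow_char, ih]

end Finite

section Fintype

variable {p F} [Fintype F] {R : Type*} [CommRing R] {ψ : AddChar F R}

theorem gaussSum_pow_char (hψ : ∀ x, ψ (x ^ p) = ψ x) (χ : MulChar F R) :
    gaussSum (χ ^ p) ψ = gaussSum χ ψ := by
  have hbij := (FiniteField.frobeniusAlgEquivOfAlgebraic (ZMod p) F).bijective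
  rw [FiniteField.coe_frobeniusAlgEquivOfAlgebraic, ZMod.card] at hbij
  unfold gaussSum
  rw [← hbij.sum_comp fun x ↦ χ x * ψ x]
  refine Finset.sum_congr rfl fun x _ ↦ ?_
  rw [hψ, MulChar.pow_apply' _ (NeZero.ne p), map_pow]

theorem gaussSum_pow_char_pow (hψ : ∀ x, ψ (x ^ p) = ψ x) (χ : MulChar F R) (i : ℕ) :
    gaussSum (χ ^ p ^ i) ψ = gaussSum χ ψ := by
  induction i with
  | zero => simp
  | succ i ih => rw [pow_succ, pow_mul, gaussSum_pow_char hψ, ih]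

end Fintype

end TraceCharacter

section Valuation

variable {K : Type*} [Field K]

theorem exists_valuationSubring_natCast_lt_one [CharZero K] {p : ℕ} (hp : p.Prime) :
    ∃ A : ValuationSubring K, A.valuation (p : K) < 1 := by
  let e : ℤ ≃+* (Int.castRingHom K).range :=
    RingEquiv.ofBijective (Int.castRingHom K).rangeRestrict
      ⟨fun a b h ↦ Int.cast_injective (α := K) (congrArg Subtype.val h),
        (Int.castRingHom K).rangeRestrict_surjective⟩
  have hne : Ideal.span {e p} ≠ ⊤ := by
    rw [Ne, Ideal.span_singleton_eq_top, MulEquiv.isUnit_map]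
    exact (Nat.prime_iff_prime_int.mp hp).not_isUnit
  obtain ⟨A, -, hA⟩ := Ideal.image_subset_nonunits_valuationSubring _ hne
  refine ⟨A, A.mem_nonunits_iff.mp (hA ⟨e p, Ideal.mem_span_singleton_self _, ?_⟩)⟩
  exact Int.cast_natCast p

variable (A : ValuationSubring K)

variable {A} in
theorem valuation_le_one_of_isIntegral {x : K} (hx : IsIntegral ℤ x) : A.valuation x ≤ 1 := by
  obtain ⟨y, rfl⟩ := IsIntegrallyClosed.isIntegral_iff.mp (hx.tower_top (A := A))
  exact A.valuation_le_one_iff _ |>.mpr y.2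

variable {A} in
theorem valuation_eq_one_of_pow_eq_one {x : K} {n : ℕ} (hn : n ≠ 0) (hx : x ^ n = 1) :
    A.valuation x = 1 := by
  have h : A.valuation x ^ n = 1 := by rw [← map_pow, hx, map_one]
  exact (pow_eq_one_iff.mp h).resolve_right hn

theorem valuation_natCast_eq_pow {p : ℕ} (hp : p.Prime) {ζ : K} (hζ : IsPrimitiveRoot ζ p) :
    A.valuation (p : K) = A.valuation (ζ - 1) ^ (p - 1) := by
  have : Fact p.Prime := ⟨hp⟩
  have hle {μ ν : K} (hμ : IsPrimitiveRoot μ p) (hν : IsPrimitiveRoot ν p) :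
      A.valuation (ν - 1) ≤ A.valuation (μ - 1) := by
    obtain ⟨i, -, rfl⟩ := hμ.eq_pow_of_pow_eq_one hν.pow_eq_one
    rw [← geom_sum_mul, map_mul]
    exact mul_le_of_le_one_left' <| valuation_le_one_of_isIntegral <|
      IsIntegral.sum _ fun j _ ↦ (hμ.isIntegral hp.pos).pow j
  have hfactor : ∀ μ ∈ primitiveRoots p K,
      A.valuation ((X - C μ).eval 1) = A.valuation (ζ - 1) := by
    intro μ hμ
    rw [mem_primitiveRoots hp.pos] at hμ
    rw [eval_sub, eval_X, eval_C, A.valuation.map_sub_swap]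
    exact le_antisymm (hle hζ hμ) (hle hμ hζ)
  have hprod : (cyclotomic p K).eval 1 = (p : K) := eval_one_cyclotomic_prime
  rw [cyclotomic_eq_prod_X_sub_primitiveRoots hζ, eval_prod] at hprod
  rw [← hprod, map_prod, Finset.prod_congr rfl hfactor, Finset.prod_const,
    hζ.card_primitiveRoots, Nat.totient_prime hp]

variable {A} in
theorem valuation_sub_one_lt_one {p : ℕ} (hp : p.Prime) (hA : A.valuation (p : K) < 1) {ζ : K}
    (hζ : IsPrimitiveRoot ζ p) : A.valuation (ζ - 1) < 1 := by
  contrapose! hA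
  rw [valuation_natCast_eq_pow A hp hζ]
  exact one_le_pow₀ hA

/-- Reduction modulo the maximal ideal of a valuation ring, with values in an algebraic closure of
the residue field so that every finite field of the residue characteristic embeds in its target. -/
noncomputable def reduction : A →+* AlgebraicClosure (IsLocalRing.ResidueField A) :=
  (algebraMap _ _).comp (IsLocalRing.residue A)

variable {A} in
theorem reduction_eq_zero_iff {a : A} : reduction A a = 0 ↔ A.valuation (a : K) < 1 := by
  rw [reduction, RingHom.comp_apply, _root_.map_eq_zero,
    IsLocalRing.residue_eq_zero_iff, ValuationSubring.valuation_lt_one_iff]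

variable {A} in
theorem charP_algebraicClosure_residueField {p : ℕ} [Fact p.Prime]
    (hA : A.valuation (p : K) < 1) :
    CharP (AlgebraicClosure (IsLocalRing.ResidueField A)) p := by
  refine (CharP.charP_iff_prime_eq_zero Fact.out).mpr ?_
  rw [← map_natCast (reduction A), reduction_eq_zero_iff]
  exact_mod_cast hA

theorem nonempty_ringHom_algebraicClosure_residueField {p : ℕ} [Fact p.Prime]
    (hA : A.valuation (p : K) < 1) (F : Type*) [Field F] [Algebra (ZMod p) F]
    [Algebra.IsAlgebraic (ZMod p) F] :
    Nonempty (F →+* AlgebraicClosure (IsLocalRing.ResidueField A)) := by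
  have := charP_algebraicClosure_residueField hA
  let _ := ZMod.algebra (AlgebraicClosure (IsLocalRing.ResidueField A)) p
  exact ⟨(IsAlgClosed.lift : F →ₐ[ZMod p] _).toRingHom⟩

end Valuation

section Teichmuller

theorem injective_restrictRootsOfUnity {A E : Type*} [CommRing A] [IsDomain A] [CommRing E]
    (ρ : A →+* E) {n : ℕ} (hn : (n : E) ≠ 0) :
    Function.Injective (restrictRootsOfUnity ρ n) := by
  rw [injective_iff_map_eq_one]
  intro ζ hζ
  by_contra hne
  have h1 : ((ζ : Aˣ) : A) - 1 ≠ 0 := by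
    rw [sub_ne_zero]
    exact fun h ↦ hne (by ext; exact h)
  have hpow : ((ζ : Aˣ) : A) ^ n = 1 := by
    rw [← Units.val_pow_eq_pow_val, (_root_.mem_rootsOfUnity n _).mp ζ.2, Units.val_one]
  have hsum : ∑ i ∈ Finset.range n, ((ζ : Aˣ) : A) ^ i = 0 := by
    refine (mul_eq_zero.mp ?_).resolve_right h1
    rw [geom_sum_mul, hpow, sub_self]
  have hρζ : ρ ((ζ : Aˣ) : A) = 1 := congrArg (fun z : rootsOfUnity n E ↦ ((z : Eˣ) : E)) hζ
  apply hn
  simpa [hρζ] using congrArg ρ hsum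

theorem exists_mulChar_comp_eq {A E F : Type*} [CommRing A] [IsDomain A] [Field E] [Field F]
    [Fintype F] (ρ : A →+* E) (ι : F →+* E) {μ : A}
    (hμ : IsPrimitiveRoot μ (Fintype.card F - 1)) :
    ∃ ω : MulChar F A, ∀ x, ρ (ω x) = ι x := by
  classical
  set n := Fintype.card F - 1
  have : NeZero n := ⟨by have := Fintype.one_lt_card (α := F); omega⟩
  have hn : (n : E) ≠ 0 := by
    rw [← map_natCast ι, Nat.cast_sub Fintype.card_pos, FiniteField.cast_card_eq_zero]
    simp
  have hbij : Function.Bijective (restrictRootsOfUnity ρ n) :=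
    (injective_restrictRootsOfUnity ρ hn).bijective_of_nat_card_le
      ((_root_.card_rootsOfUnity E n).trans hμ.card_rootsOfUnity.ge)
  let e := MulEquiv.ofBijective _ hbij
  let u : Fˣ →* rootsOfUnity n E := (Units.map (ι : F →* E)).codRestrict _ fun x ↦ by
    have hx : x ^ n = 1 := by rw [← pow_card_eq_one (x := x), Fintype.card_units]
    rw [_root_.mem_rootsOfUnity, ← map_pow, hx, map_one]
  refine ⟨MulChar.ofUnitHom ((rootsOfUnity n A).subtype.comp (e.symm.toMonoidHom.comp u)),
    fun x ↦ ?_⟩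
  rcases eq_or_ne x 0 with rfl | hx
  · rw [MulChar.map_zero, map_zero, map_zero]
  · lift x to Fˣ using hx.isUnit
    rw [MulChar.ofUnitHom_coe]
    exact congrArg (fun z : rootsOfUnity n E ↦ ((z : Eˣ) : E)) (e.apply_symm_apply (u x))

end Teichmuller

/-! ### Stickelberger's valuation formula -/

section Digits

variable {p : ℕ} (hp : 1 < p)
include hp

theorem sub_one_mul_sum_div_pow_add_sum_digits {f n : ℕ} (hn : n < p ^ f) :
    (p - 1) * ∑ i ∈ Finset.range f, n / p ^ (i + 1) + (p.digits n).sum = n := by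
  induction f generalizing n with
  | zero => simp_all
  | succ f ih =>
    rcases Nat.eq_zero_or_pos n with rfl | hn0
    · simp
    have hdiv := ih (Nat.div_lt_of_lt_mul (by rwa [← pow_succ']))
    simp only [Nat.div_div_eq_div_mul, ← pow_succ'] at hdiv
    rw [Nat.digits_def' hp hn0, List.sum_cons, Finset.sum_range_succ', zero_add, pow_one]
    have hmod := Nat.mod_add_div n p
    obtain ⟨d, rfl⟩ : ∃ d, p = d + 1 := ⟨p - 1, by omega⟩
    rw [Nat.add_sub_cancel] at hdiv ⊢
    linarith

theorem sum_digits_add_sum_digits_pow_sub_one_sub {f n : ℕ} (hn : n < p ^ f) :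
    (p.digits n).sum + (p.digits (p ^ f - 1 - n)).sum = f * (p - 1) := by
  induction f generalizing n with
  | zero => simp_all
  | succ f ih =>
    have hsum {c m : ℕ} (hc : c < p) : (p.digits (c + p * m)).sum = c + (p.digits m).sum := by
      rcases eq_or_ne c 0 with rfl | hc0
      · rcases Nat.eq_zero_or_pos m with rfl | hm
        · simp
        · rw [zero_add, Nat.digits_base_mul hp hm, List.sum_cons]
      · rw [Nat.digits_add p hp c m hc (.inl hc0), List.sum_cons]
    obtain ⟨m, c, hc, rfl⟩ : ∃ m c, c < p ∧ n = c + p * m :=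
      ⟨n / p, n % p, Nat.mod_lt n (by omega), (Nat.mod_add_div n p).symm⟩
    have hm : m < p ^ f := Nat.lt_of_mul_lt_mul_left (a := p) (by rw [← pow_succ']; omega)
    obtain ⟨d, hd⟩ := Nat.exists_eq_add_of_lt hm
    have hcompl : p ^ (f + 1) - 1 - (c + p * m) = p - 1 - c + p * (p ^ f - 1 - m) := by
      have hpow : p ^ (f + 1) = p * m + p * d + p := by rw [pow_succ', hd]; ring
      rw [show p ^ f - 1 - m = d by omega]
      omega
    rw [hcompl, hsum hc, hsum (by omega), add_mul, ← ih hm]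
    omega

/-- Multiplying by `p ^ j` modulo `p ^ (i + j) - 1` rotates the base-`p` digits. -/
theorem pow_mul_mod_pow_sub_one {i j n : ℕ} (hn : n < p ^ (i + j) - 1) :
    p ^ j * n % (p ^ (i + j) - 1) = n / p ^ i + p ^ j * (n % p ^ i) := by
  have hdiv := Nat.div_add_mod n (p ^ i)
  have hmod : n % p ^ i + 1 ≤ p ^ i := Nat.mod_lt _ (by positivity)
  have hquot : n / p ^ i + 1 ≤ p ^ j := Nat.div_lt_of_lt_mul (by rw [← pow_add]; omega)
  set a := n / p ^ i
  set b := n % p ^ i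
  obtain ⟨c, hc⟩ := Nat.exists_eq_add_of_le hquot
  obtain ⟨d, hd⟩ := Nat.exists_eq_add_of_le hmod
  have hQ : p ^ (i + j) = p ^ i * p ^ j := pow_add _ _ _
  have hmul : p ^ j * n = a + p ^ j * b + (p ^ (i + j) - 1) * a := by
    have : p ^ j * n = p ^ (i + j) * a + p ^ j * b := by rw [← hdiv, hQ]; ring
    rw [this, Nat.sub_mul, one_mul]
    have : a ≤ p ^ (i + j) * a := Nat.le_mul_of_pos_left _ (by positivity)
    omega
  have hlt : a + p ^ j * b < p ^ (i + j) - 1 := by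
    have hpow : p ^ (i + j) = a + p ^ j * b + 1 + (c + p ^ j * d) := by
      rw [hQ]; nth_rewrite 1 [hd]; linarith
    have hcd : c + p ^ j * d ≠ 0 := by
      intro h0
      have hc0 : c = 0 := by omega
      have hd0 : d = 0 := by
        have : p ^ j ≠ 0 := by positivity
        simp_all
      subst hc0 hd0
      have : p ^ i * p ^ j = p ^ i * a + b + 1 := by rw [hc]; linarith
      omega
    omega
  rw [hmul, Nat.add_mul_mod_self_left, Nat.mod_eq_of_lt hlt]

theorem pow_sub_one_mul_sum_digits {f n : ℕ} (hn : n < p ^ f - 1) :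
    (p ^ f - 1) * (p.digits n).sum =
      (p - 1) * ∑ i ∈ Finset.range f, p ^ i * n % (p ^ f - 1) := by
  have hrot : ∀ i ∈ Finset.range f, p ^ (f - 1 - i) * n % (p ^ f - 1) + (p ^ f - 1) *
      (n / p ^ (i + 1)) = p ^ (f - 1 - i) * n := by
    intro i hi
    have hif : i + 1 + (f - 1 - i) = f := by rw [Finset.mem_range] at hi; omega
    have hmod := pow_mul_mod_pow_sub_one hp (i := i + 1) (j := f - 1 - i) (hif ▸ hn)
    rw [hif] at hmod
    have hpow : p ^ f = p ^ (f - 1 - i) * p ^ (i + 1) := by rw [← pow_add]; congr 1; omega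
    have hle : n / p ^ (i + 1) ≤ p ^ f * (n / p ^ (i + 1)) :=
      Nat.le_mul_of_pos_left _ (by positivity)
    conv_rhs => rw [← Nat.div_add_mod n (p ^ (i + 1)), mul_add, ← mul_assoc, ← hpow]
    rw [hmod, Nat.sub_mul, one_mul]
    omega
  have hsum := Finset.sum_congr rfl hrot
  rw [Finset.sum_add_distrib, Finset.sum_range_reflect fun i ↦ p ^ i * n % (p ^ f - 1),
    Finset.sum_range_reflect fun i ↦ p ^ i * n, ← Finset.mul_sum, ← Finset.sum_mul] at hsum
  have hgeom : (p - 1) * ∑ i ∈ Finset.range f, p ^ i = p ^ f - 1 := by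
    rw [mul_comm]; exact geom_sum_mul_of_one_le hp.le f
  have hlegendre := sub_one_mul_sum_div_pow_add_sum_digits hp (n := n) (f := f) (by omega)
  generalize ∑ i ∈ Finset.range f, n / p ^ (i + 1) = S at hsum hlegendre
  generalize (p.digits n).sum = D at hlegendre ⊢
  rw [← hgeom] at hsum ⊢
  generalize ∑ i ∈ Finset.range f, p ^ i = P at hsum ⊢
  zify at hsum hlegendre ⊢
  linear_combination (-(↑(p - 1) : ℤ)) * hsum + (↑(p - 1) : ℤ) * P * hlegendre

end Digits

theorem sum_inv_mul_algebraMap_trace (k F : Type*) [Field k] [Field F] [Fintype F] [Algebra k F] :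
    ∑ x : F, x⁻¹ * algebraMap k F (Algebra.trace k F x) = -1 := by
  classical
  have : Finite k := Finite.of_injective _ (algebraMap k F).injective
  have hpow {m : ℕ} (hm : 0 < m) (x : F) : x⁻¹ * x ^ (m + 1) = x ^ m := by
    rcases eq_or_ne x 0 with rfl | hx
    · rw [inv_zero, zero_mul, zero_pow hm.ne']
    · rw [pow_succ', inv_mul_cancel_left₀ hx]
  have hzero : ∀ i ∈ (Finset.range (Module.finrank k F)).erase 0,
      ∑ x : F, x⁻¹ * x ^ Nat.card k ^ i = 0 := by
    intro i hi
    rw [Finset.mem_erase, Finset.mem_range] at hi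
    have hk : 1 < Nat.card k := Finite.one_lt_card
    have h1 : 1 < Nat.card k ^ i := Nat.one_lt_pow hi.1 hk
    have h2 : Nat.card k ^ i < Fintype.card F := by
      rw [← Nat.card_eq_fintype_card, Module.natCard_eq_pow_finrank (K := k) (V := F)]
      exact Nat.pow_lt_pow_right hk hi.2
    obtain ⟨m, hm⟩ : ∃ m, Nat.card k ^ i = m + 1 := ⟨_, (Nat.sub_add_cancel h1.le).symm⟩
    simp only [hm, hpow (show 0 < m by omega)]
    exact FiniteField.sum_pow_lt_card_sub_one F m (by omega)
  have hone : ∑ x : F, x⁻¹ * x = -1 := by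
    have (x : F) : x⁻¹ * x = 1 - if x = 0 then 1 else 0 := by
      split_ifs with hx <;> simp [hx]
    simp [this]
  simp only [FiniteField.algebraMap_trace_eq_sum_pow, Finset.mul_sum]
  rw [Finset.sum_comm, ← Finset.sum_erase_add _ _ (Finset.mem_range.mpr Module.finrank_pos),
    Finset.sum_eq_zero hzero, zero_add]
  simpa using hone

theorem orderOf_eq_card_sub_one_of_comp_eq {A E F : Type*} [CommRing A] [CommRing E] [Nontrivial E]
    [Field F] [Fintype F] {ρ : A →+* E} {ι : F →+* E} {ω : MulChar F A}
    (hω : ∀ x, ρ (ω x) = ι x) : orderOf ω = Fintype.card F - 1 := by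
  classical
  obtain ⟨g, hg⟩ := IsCyclic.exists_generator (α := Fˣ)
  have hcard : orderOf g = Fintype.card F - 1 := by
    rw [orderOf_eq_card_of_forall_mem_zpowers hg, Nat.card_eq_fintype_card, Fintype.card_units]
  rw [← hcard, orderOf_eq_orderOf_iff]
  refine fun n ↦ ⟨fun h ↦ Units.ext (ι.injective ?_), fun h ↦ ?_⟩
  · rw [Units.val_pow_eq_pow_val, map_pow, ← hω, ← map_pow, ← MulChar.pow_apply_coe, h,
      MulChar.one_apply_coe, map_one, Units.val_one, map_one]
  · rw [← orderOf_dvd_iff_pow_eq_one, hcard] at h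
    exact orderOf_dvd_iff_pow_eq_one.mp
      (orderOf_dvd_of_pow_eq_one (by rw [← Fintype.card_units, MulChar.pow_card_eq_one]) |>.trans h)

section Stickelberger

variable {p : ℕ} [Fact p.Prime] {F : Type*} [Field F] [Fintype F] [Algebra (ZMod p) F]
  {A : ValuationSubring ℂ}

/-- The Gauss sum of the inverse of the Teichmüller character `ω` is divisible by `ζ - 1`, with
quotient congruent to `∑ x, x⁻¹ * Tr x = -1`. -/
theorem valuation_le_gaussSum_of_comp_eq (hA : A.valuation (p : ℂ) < 1)
    {E : Type*} [Field E] {ρ : A →+* E} (hρ : ∀ {a}, ρ a = 0 ↔ A.valuation (a : ℂ) < 1)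
    {ι : F →+* E} {ω : MulChar F A} (hω : ∀ x, ρ (ω x) = ι x) (hω1 : ω ≠ 1) :
    A.valuation (zetaP p - 1) ≤
      A.valuation (gaussSum (ω⁻¹.ringHomComp A.subtype) (traceChar p F)) := by
  have hp : p.Prime := Fact.out
  have hζ := isPrimitiveRoot_zetaP hp.ne_zero
  let ζ : A := ⟨zetaP p, (A.valuation_le_one_iff _).mp
    (valuation_eq_one_of_pow_eq_one hp.ne_zero hζ.pow_eq_one).le⟩
  have hζ1 : ρ ζ = 1 := by
    rw [← sub_eq_zero, ← map_one ρ, ← map_sub, hρ]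
    exact valuation_sub_one_lt_one hp hA hζ
  let u : A := ∑ x : F, ω⁻¹ x * ∑ j ∈ Finset.range (Algebra.trace (ZMod p) F x).val, ζ ^ j
  have hu : ρ u = -1 := by
    rw [← map_one ι, ← map_neg, ← sum_inv_mul_algebraMap_trace (ZMod p) F, map_sum, map_sum]
    refine Finset.sum_congr rfl fun x _ ↦ ?_
    conv_rhs => rw [← ZMod.natCast_zmod_val (Algebra.trace (ZMod p) F x), map_natCast]
    simp only [map_mul, map_sum, map_pow, map_natCast, hζ1, MulChar.inv_apply', hω, one_pow,
      Finset.sum_const, Finset.card_range, nsmul_eq_mul, mul_one]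
  have hgauss : gaussSum (ω⁻¹.ringHomComp A.subtype) (traceChar p F) = u * (zetaP p - 1) := by
    have hsum : ∑ x, ω⁻¹.ringHomComp A.subtype x = 0 := MulChar.sum_eq_zero_of_ne_one <|
      (MulChar.ringHomComp_ne_one_iff Subtype.val_injective).mpr (inv_ne_one.mpr hω1)
    have hsub : gaussSum (ω⁻¹.ringHomComp A.subtype) (traceChar p F) =
        ∑ x, ω⁻¹.ringHomComp A.subtype x * (traceChar p F x - 1) := by
      simp only [mul_sub, mul_one, Finset.sum_sub_distrib, hsum, sub_zero, gaussSum]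
    rw [hsub, ← A.subtype_apply u, map_sum, Finset.sum_mul]
    refine Finset.sum_congr rfl fun x _ ↦ ?_
    rw [map_mul, mul_assoc, traceChar_apply, ← geom_sum_mul, map_sum]
    simp only [map_pow]
    rfl
  rw [hgauss, map_mul]
  refine le_mul_of_one_le_left' (not_lt.mp fun h ↦ ?_)
  rw [← hρ, hu] at h
  exact neg_ne_zero.mpr one_ne_zero h

theorem exists_orderOf_eq_and_valuation_le_gaussSum (hA : A.valuation (p : ℂ) < 1)
    (hF : 2 < Fintype.card F) :
    ∃ φ : MulChar F ℂ, orderOf φ = Fintype.card F - 1 ∧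
      A.valuation (zetaP p - 1) ≤ A.valuation (gaussSum φ (traceChar p F)) := by
  have hn : Fintype.card F - 1 ≠ 0 := by omega
  have hμ := isPrimitiveRoot_zetaP hn
  obtain ⟨ι⟩ := nonempty_ringHom_algebraicClosure_residueField A hA F
  obtain ⟨ω, hω⟩ := exists_mulChar_comp_eq (reduction A) ι
    (μ := ⟨zetaP _, (A.valuation_le_one_iff _).mp
      (valuation_eq_one_of_pow_eq_one hn hμ.pow_eq_one).le⟩)
    (.of_map_of_injective (f := A.subtype) hμ Subtype.val_injective)
  have horder := orderOf_eq_card_sub_one_of_comp_eq hω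
  refine ⟨ω⁻¹.ringHomComp A.subtype, ?_, ?_⟩
  · rw [← horder, orderOf_eq_orderOf_iff]
    intro n
    rw [MulChar.ringHomComp_pow, MulChar.ringHomComp_eq_one_iff Subtype.val_injective, inv_pow,
      inv_eq_one]
  · refine valuation_le_gaussSum_of_comp_eq hA reduction_eq_zero_iff hω ?_
    rw [Ne, ← orderOf_eq_one_iff, horder]
    omega

theorem valuation_gaussSum_mul_le {χ χ' : MulChar F ℂ} {ψ : AddChar F ℂ} (h : χ * χ' ≠ 1) :
    A.valuation (gaussSum χ ψ) * A.valuation (gaussSum χ' ψ) ≤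
      A.valuation (gaussSum (χ * χ') ψ) := by
  rw [← map_mul, ← jacobiSum_mul_nontrivial h, map_mul]
  exact mul_le_of_le_one_right' (valuation_le_one_of_isIntegral (isIntegral_jacobiSum χ χ'))

section

variable {φ : MulChar F ℂ} (hφ : orderOf φ = Fintype.card F - 1)
  (hv : A.valuation (zetaP p - 1) ≤ A.valuation (gaussSum φ (traceChar p F)))
include hφ hv

theorem valuation_pow_mul_gaussSum_pow_le {k m : ℕ} (hkm : k + m < Fintype.card F - 1) :
    A.valuation (zetaP p - 1) ^ k * A.valuation (gaussSum (φ ^ m) (traceChar p F)) ≤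
      A.valuation (gaussSum (φ ^ (k + m)) (traceChar p F)) := by
  induction k with
  | zero => simp
  | succ k ih =>
    have hne : φ * φ ^ (k + m) ≠ 1 := by
      rw [← pow_succ']
      exact pow_ne_one_of_lt_orderOf (by omega) (by omega)
    calc _ = A.valuation (zetaP p - 1) * (A.valuation (zetaP p - 1) ^ k *
            A.valuation (gaussSum (φ ^ m) (traceChar p F))) := by rw [pow_succ', mul_assoc]
      _ ≤ A.valuation (gaussSum φ (traceChar p F)) *
            A.valuation (gaussSum (φ ^ (k + m)) (traceChar p F)) :=
          mul_le_mul' hv (ih (by omega))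
      _ ≤ _ := valuation_gaussSum_mul_le hne
      _ = _ := by rw [← pow_succ', add_right_comm]

theorem valuation_pow_sum_digits_le {n : ℕ} (hn : n < Fintype.card F - 1) :
    A.valuation (zetaP p - 1) ^ (p.digits n).sum ≤
      A.valuation (gaussSum (φ ^ n) (traceChar p F)) := by
  have hp : 1 < p := (Fact.out : p.Prime).one_lt
  induction n using Nat.strong_induction_on with
  | _ n ih =>
    rcases Nat.eq_zero_or_pos n with rfl | hn0
    · simp [gaussSum_one_left (traceChar_ne_one p F)]
    have hstep := valuation_pow_mul_gaussSum_pow_le hφ hv (k := n % p) (m := n / p * p)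
      (by rwa [Nat.mod_add_div'])
    rw [Nat.mod_add_div', pow_mul, gaussSum_pow_char (traceChar_pow_char p)] at hstep
    rw [Nat.digits_def' hp hn0, List.sum_cons, pow_add]
    refine le_trans (mul_le_mul_right ?_ _) hstep
    exact ih _ (Nat.div_lt_self hn0 hp) ((Nat.div_le_self _ _).trans_lt hn)

theorem valuation_gaussSum_pow {f : ℕ} (hF : Fintype.card F = p ^ f) {n : ℕ} (hn0 : n ≠ 0)
    (hn : n < Fintype.card F - 1) :
    A.valuation (gaussSum (φ ^ n) (traceChar p F)) =
      A.valuation (zetaP p - 1) ^ (p.digits n).sum := by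
  have hp : p.Prime := Fact.out
  have hζ := isPrimitiveRoot_zetaP hp.ne_zero
  set π := A.valuation (zetaP p - 1)
  have hinv : φ ^ (Fintype.card F - 1 - n) = (φ ^ n)⁻¹ := by
    rw [eq_inv_iff_mul_eq_one, ← pow_add, Nat.sub_add_cancel hn.le, ← hφ, pow_orderOf_eq_one]
  have hprod : A.valuation (gaussSum (φ ^ n) (traceChar p F)) *
      A.valuation (gaussSum (φ ^ n)⁻¹ (traceChar p F)) =
      π ^ (p.digits n).sum * π ^ (p.digits (Fintype.card F - 1 - n)).sum := by
    have hsign : A.valuation ((φ ^ n)⁻¹ (-1)) = 1 :=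
      valuation_eq_one_of_pow_eq_one two_ne_zero (by rw [← map_pow]; simp)
    have hcard := gaussSum_mul_gaussSum_eq_card (pow_ne_one_of_lt_orderOf hn0 (hφ ▸ hn))
      (isPrimitive_traceChar p F)
    rw [← map_mul, ← mul_gaussSum_inv_eq_gaussSum (φ ^ n)⁻¹, mul_left_comm, hcard, map_mul, hsign,
      one_mul, hF, Nat.cast_pow, map_pow, valuation_natCast_eq_pow A hp hζ, ← pow_mul, ← pow_add,
      sum_digits_add_sum_digits_pow_sub_one_sub hp.one_lt (by omega), mul_comm f]
  have hle := valuation_pow_sum_digits_le hφ hv hn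
  have hle' := valuation_pow_sum_digits_le hφ hv (n := Fintype.card F - 1 - n) (by omega)
  have hπ : 0 < π := by
    rw [zero_lt_iff, Valuation.ne_zero_iff, sub_ne_zero]
    exact hζ.ne_one hp.one_lt
  rw [hinv] at hle'
  refine hle.antisymm' (not_lt.mp fun hlt ↦ hprod.not_gt ?_)
  exact (mul_le_mul_right hle' _).trans_lt
    (mul_lt_mul_of_pos_right hlt ((pow_pos hπ _).trans_le hle'))

end

theorem exists_pow_eq_of_orderOf_eq {φ : MulChar F ℂ} (hφ : orderOf φ = Fintype.card F - 1)
    (χ : MulChar F ℂ) : ∃ n < Fintype.card F - 1, φ ^ n = χ := by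
  classical
  have htop : Subgroup.zpowers φ = ⊤ := by
    apply Subgroup.eq_top_of_card_eq
    rw [Nat.card_zpowers, hφ, MulChar.card_eq_card_units_of_hasEnoughRootsOfUnity,
      Nat.card_eq_fintype_card, Fintype.card_units]
  have hχ : χ ∈ Subgroup.zpowers φ := htop ▸ Subgroup.mem_top χ
  rw [mem_zpowers_iff_mem_range_orderOf, Finset.mem_image, hφ] at hχ
  simpa only [Finset.mem_range] using hχ

theorem exists_valuation_gaussSum_pow_orderOf (hA : A.valuation (p : ℂ) < 1) {f : ℕ}
    (hF : Fintype.card F = p ^ f) {χ : MulChar F ℂ} (hχ : χ ≠ 1) :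
    ∃ c, c.Coprime (orderOf χ) ∧ A.valuation (gaussSum χ (traceChar p F)) ^ orderOf χ =
      A.valuation (p : ℂ) ^ ∑ i ∈ Finset.range f, p ^ i * c % orderOf χ := by
  have hp : p.Prime := Fact.out
  have hdvd : orderOf χ ∣ Fintype.card F - 1 := MulChar.orderOf_dvd_card_sub_one F χ
  have hF1 := Fintype.one_lt_card (α := F)
  have hF2 : 2 < Fintype.card F := by
    have h1 := Nat.le_of_dvd (by omega) hdvd
    have h2 := Nat.pos_of_dvd_of_pos hdvd (by omega)
    have h3 := mt orderOf_eq_one_iff.mp hχ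
    omega
  obtain ⟨φ, hφ, hv⟩ := exists_orderOf_eq_and_valuation_le_gaussSum hA hF2
  obtain ⟨n, hn, rfl⟩ := exists_pow_eq_of_orderOf_eq hφ χ
  have hn0 : n ≠ 0 := by rintro rfl; exact hχ (pow_zero _)
  obtain ⟨M, N, c, hM, hcop, hq, rfl⟩ :=
    Nat.exists_coprime' (Nat.gcd_pos_of_pos_right (Fintype.card F - 1) (Nat.pos_of_ne_zero hn0))
  have hN : orderOf (φ ^ (c * M)) = N := by
    rw [orderOf_pow, hφ, hq, Nat.gcd_mul_right, hcop, one_mul, Nat.mul_div_cancel _ hM]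
  have hdigits := pow_sub_one_mul_sum_digits hp.one_lt (hF ▸ hn)
  have hmod (i : ℕ) : p ^ i * (c * M) % (N * M) = p ^ i * c % N * M := by
    rw [← mul_assoc, Nat.mul_mod_mul_right]
  rw [← hF, hq, Finset.sum_congr rfl fun i _ ↦ hmod i, ← Finset.sum_mul, ← mul_assoc,
    mul_right_comm] at hdigits
  refine ⟨c, hN ▸ hcop.symm, ?_⟩
  rw [hN, valuation_gaussSum_pow hφ hv hF hn0 hn,
    valuation_natCast_eq_pow A hp (isPrimitiveRoot_zetaP hp.ne_zero), ← pow_mul, ← pow_mul,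
    mul_comm _ N, Nat.eq_of_mul_eq_mul_right hM hdigits]

end Stickelberger

/-! ### Stickelberger sums of index two -/

section IndexTwo

variable {G : Type*} [Group G] [Fintype G] {χ : G →* ℤˣ} {g : G}

theorem ker_eq_zpowers_of_two_mul_orderOf (hχ : χ ≠ 1) (hg : χ g = 1)
    (hG : 2 * orderOf g = Fintype.card G) : χ.ker = Subgroup.zpowers g := by
  refine (Subgroup.eq_of_le_of_card_ge (by simpa [MonoidHom.mem_ker]) ?_).symm
  have hindex : 2 ≤ χ.ker.index := by
    have h0 : χ.ker.index ≠ 0 := χ.ker.index_ne_zero_of_finite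
    have h1 : χ.ker.index ≠ 1 := by rwa [Ne, Subgroup.index_eq_one, MonoidHom.ker_eq_top_iff]
    omega
  have hcard := χ.ker.card_mul_index
  rw [Nat.card_eq_fintype_card (α := G), ← hG] at hcard
  rw [Nat.card_zpowers]
  nlinarith [Nat.mul_le_mul_left (Nat.card χ.ker) hindex]

theorem two_mul_sum_pow_mul (hχ : χ ≠ 1) (hg : χ g = 1) (hG : 2 * orderOf g = Fintype.card G)
    (F : G → ℤ) (c : G) :
    2 * ∑ i ∈ Finset.range (orderOf g), F (g ^ i * c) = ∑ u, (1 + χ c * χ u) * F u := by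
  classical
  have hcoset : ∑ i ∈ Finset.range (orderOf g), F (g ^ i * c) =
      ∑ u with χ u = χ c, F u := by
    refine Finset.sum_nbij (fun i ↦ g ^ i * c) ?_ ?_ ?_ fun _ _ ↦ rfl
    · simp [hg]
    · intro i hi j hj hij
      exact pow_injOn_Iio_orderOf (by simpa using hi) (by simpa using hj) (mul_right_cancel hij)
    · intro u hu
      have hker : u * c⁻¹ ∈ χ.ker := by
        simp only [Finset.coe_filter, Finset.mem_univ, true_and, Set.mem_ofPred_eq] at hu
        simp [MonoidHom.mem_ker, hu]
      rw [ker_eq_zpowers_of_two_mul_orderOf hχ hg hG, mem_zpowers_iff_mem_range_orderOf,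
        Finset.mem_image] at hker
      obtain ⟨i, hi, h⟩ := hker
      exact ⟨i, hi, by simp [h]⟩
  rw [hcoset, Finset.sum_filter, Finset.mul_sum]
  refine Finset.sum_congr rfl fun u _ ↦ ?_
  obtain hc | hc := Int.units_eq_one_or (χ c) <;> obtain hu | hu := Int.units_eq_one_or (χ u) <;>
    simp [hc, hu, one_add_one_eq_two]

end IndexTwo

section UnitsSum

theorem sum_units_val_eq_sum_coprime (N : ℕ) [NeZero N] (F : ℕ → ℤ) :
    ∑ u : (ZMod N)ˣ, F (u : ZMod N).val = ∑ b ∈ Finset.range N with b.Coprime N, F b := by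
  refine Finset.sum_nbij (fun u ↦ (u : ZMod N).val) ?_ ?_ ?_ fun _ _ ↦ rfl
  · intro u _
    simpa using ⟨ZMod.val_lt _, ZMod.val_coe_unit_coprime u⟩
  · intro u _ v _ huv
    exact Units.ext (ZMod.val_injective N huv)
  · intro b hb
    simp only [Finset.coe_filter, Finset.mem_range, Set.mem_ofPred_eq] at hb
    exact ⟨ZMod.unitOfCoprime b hb.2, by simp, by simp [ZMod.val_cast_of_lt hb.1]⟩

theorem two_mul_sum_units_val {N : ℕ} (hN : 1 < N) [NeZero N] :
    2 * ∑ u : (ZMod N)ˣ, ((u : ZMod N).val : ℤ) = N * N.totient := by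
  have : Fact (1 < N) := ⟨hN⟩
  have hneg (u : (ZMod N)ˣ) : (((-u : (ZMod N)ˣ) : ZMod N).val : ℤ) = N - (u : ZMod N).val := by
    have : NeZero (u : ZMod N) := ⟨u.ne_zero⟩
    rw [Units.val_neg, ZMod.val_neg_of_ne_zero, Nat.cast_sub (ZMod.val_lt _).le]
  have hflip := Equiv.sum_comp (Equiv.neg (ZMod N)ˣ) fun u ↦ ((u : ZMod N).val : ℤ)
  simp only [Equiv.neg_apply, hneg, Finset.sum_sub_distrib, Finset.sum_const, Finset.card_univ,
    ZMod.card_units_eq_totient, nsmul_eq_mul] at hflip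
  linarith

end UnitsSum

section Legendre

variable (l : ℕ) [Fact l.Prime]

/-- The first moment `∑_{0 ≤ a < l} (a/l) a` of the Legendre symbol. For `l ≡ 3 (mod 4)` it is
`-l · L(1, χ) √l / π`, whence its relation to the class number of `ℚ(√-l)`. -/
def legendreMoment : ℤ := ∑ a ∈ Finset.range l, legendreSym l a * a

/-- The Legendre symbol modulo `l` as a character of `(ZMod N)ˣ`, for `l ∣ N`. -/
def legendreUnitsHom {N : ℕ} (h : l ∣ N) : (ZMod N)ˣ →* ℤˣ :=
  (quadraticChar (ZMod l)).toUnitHom.comp (ZMod.unitsMap h)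

variable {l}

theorem legendreUnitsHom_apply {N : ℕ} [NeZero N] (h : l ∣ N) (u : (ZMod N)ˣ) :
    (legendreUnitsHom l h u : ℤ) = legendreSym l (u : ZMod N).val := by
  rw [legendreUnitsHom, MonoidHom.comp_apply, MulChar.coe_toUnitHom, ZMod.unitsMap_val,
    legendreSym, Int.cast_natCast, ZMod.natCast_val]

theorem legendreUnitsHom_unitOfCoprime {N a : ℕ} [NeZero N] (h : l ∣ N) (ha : a.Coprime N) :
    (legendreUnitsHom l h (ZMod.unitOfCoprime a ha) : ℤ) = legendreSym l a := by
  rw [legendreUnitsHom_apply, ZMod.coe_unitOfCoprime, ZMod.val_natCast, legendreSym.mod,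
    Int.natCast_mod, Int.emod_emod_of_dvd _ (by exact_mod_cast h), ← legendreSym.mod]

theorem legendreSym_neg_one_of_mod_four_eq_three (hl4 : l % 4 = 3) : legendreSym l (-1) = -1 := by
  rw [legendreSym.at_neg_one (by rintro rfl; omega), ZMod.χ₄_nat_three_mod_four hl4]

theorem legendreUnitsHom_neg_one {N : ℕ} (hl4 : l % 4 = 3) (h : l ∣ N) :
    legendreUnitsHom l h (-1) = -1 := by
  rw [Units.ext_iff, legendreUnitsHom, MonoidHom.comp_apply, MulChar.coe_toUnitHom,
    ZMod.unitsMap_def, Units.coe_map, Units.val_neg, Units.val_one, MonoidHom.coe_coe, map_neg,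
    map_one]
  simpa [legendreSym] using legendreSym_neg_one_of_mod_four_eq_three hl4

theorem legendreUnitsHom_ne_one {N : ℕ} (hl4 : l % 4 = 3) (h : l ∣ N) :
    legendreUnitsHom l h ≠ 1 := by
  intro h1
  simpa [h1] using legendreUnitsHom_neg_one hl4 h

theorem sum_range_legendreSym (hl2 : l ≠ 2) : ∑ a ∈ Finset.range l, legendreSym l a = 0 := by
  have : NeZero l := ⟨(Fact.out : l.Prime).ne_zero⟩
  rw [← quadraticChar_sum_zero (F := ZMod l) (by rwa [ZMod.ringChar_zmod_n]), eq_comm]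
  refine Finset.sum_nbij' ZMod.val (fun a ↦ (a : ZMod l)) ?_ ?_ ?_ ?_ ?_
  all_goals simp +contextual [ZMod.val_lt, Nat.mod_eq_of_lt, legendreSym]

theorem sum_range_mul_legendreSym_mul (hl2 : l ≠ 2) (k : ℕ) :
    ∑ b ∈ Finset.range (l * k), legendreSym l b * b = k * legendreMoment l := by
  induction k with
  | zero => simp
  | succ k ih =>
    have hblock : ∑ x ∈ Finset.range l, legendreSym l (l * k + x : ℕ) * ((l * k + x : ℕ) : ℤ) =
        legendreMoment l + l * k * ∑ a ∈ Finset.range l, legendreSym l a := by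
      rw [legendreMoment, Finset.mul_sum, ← Finset.sum_add_distrib]
      refine Finset.sum_congr rfl fun x _ ↦ ?_
      have hperiod : legendreSym l (l * k + x : ℕ) = legendreSym l x := by simp [legendreSym]
      rw [hperiod]
      push_cast
      ring
    rw [mul_add, mul_one, Finset.sum_range_add, ih, hblock, sum_range_legendreSym hl2]
    push_cast
    ring

theorem sum_coprime_legendreSym_mul (hl2 : l ≠ 2) (r : ℕ) :
    ∑ b ∈ Finset.range (4 * l ^ (r + 1)) with b.Coprime (4 * l ^ (r + 1)), legendreSym l b * b =
      4 * l ^ r * legendreMoment l * (1 - legendreSym l 2) := by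
  have hcop (b : ℕ) : b.Coprime (4 * l ^ (r + 1)) ↔ ¬ Even b ∧ ¬ l ∣ b := by
    rw [Nat.coprime_mul_iff_right, Nat.coprime_pow_right_iff r.succ_pos,
      show 4 = 2 ^ 2 by norm_num, Nat.coprime_pow_right_iff two_pos, Nat.coprime_comm (m := l),
      (Fact.out : l.Prime).coprime_iff_not_dvd, Nat.coprime_two_right, Nat.not_even_iff_odd]
  have hodd : ∑ b ∈ Finset.range (4 * l ^ (r + 1)) with b.Coprime (4 * l ^ (r + 1)),
      legendreSym l b * (b : ℤ) =
      ∑ b ∈ Finset.range (4 * l ^ (r + 1)) with ¬ Even b, legendreSym l b * b := by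
    refine Finset.sum_subset (fun b ↦ by simp only [Finset.mem_filter, hcop]; tauto) ?_
    intro b hb hb'
    have hdvd : l ∣ b := by simp only [Finset.mem_filter, hcop] at hb hb'; tauto
    rw [(legendreSym.eq_zero_iff l b).mpr (by simpa [ZMod.natCast_eq_zero_iff]), zero_mul]
  have heven : ∑ b ∈ Finset.range (4 * l ^ (r + 1)) with Even b, legendreSym l b * (b : ℤ) =
      legendreSym l 2 * 2 * ∑ b ∈ Finset.range (2 * l ^ (r + 1)), legendreSym l b * b := by
    rw [Finset.mul_sum, eq_comm]
    refine Finset.sum_nbij' (2 * ·) (· / 2) ?_ ?_ (by simp) ?_ ?_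
    · grind
    · grind
    · intro b hb
      exact Nat.two_mul_div_two_of_even (Finset.mem_filter.mp hb).2
    · intro b _
      rw [Nat.cast_mul, legendreSym.mul]
      push_cast
      ring
  have hsplit := Finset.sum_filter_add_sum_filter_not (Finset.range (4 * l ^ (r + 1))) Even
    fun b ↦ legendreSym l b * (b : ℤ)
  have hfull := sum_range_mul_legendreSym_mul hl2 (4 * l ^ r)
  have hhalf := sum_range_mul_legendreSym_mul hl2 (2 * l ^ r)
  rw [show l * (4 * l ^ r) = 4 * l ^ (r + 1) by ring] at hfull
  rw [show l * (2 * l ^ r) = 2 * l ^ (r + 1) by ring] at hhalf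
  rw [hfull, heven, hhalf] at hsplit
  rw [hodd]
  push_cast at hsplit ⊢
  linear_combination hsplit

theorem two_mul_sum_pow_mul_mod (hl4 : l % 4 = 3) (r : ℕ) {p c : ℕ}
    (hp : p.Coprime (4 * l ^ (r + 1))) (hlp : legendreSym l p = 1)
    (hord : 2 * orderOf (p : ZMod (4 * l ^ (r + 1))) = (4 * l ^ (r + 1)).totient)
    (hc : c.Coprime (4 * l ^ (r + 1))) :
    2 * ∑ i ∈ Finset.range (orderOf (p : ZMod (4 * l ^ (r + 1)))),
        ((p ^ i * c % (4 * l ^ (r + 1)) : ℕ) : ℤ) =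
      orderOf (p : ZMod (4 * l ^ (r + 1))) * (4 * l ^ (r + 1) : ℕ) +
        legendreSym l c * (4 * l ^ r * legendreMoment l * (1 - legendreSym l 2)) := by
  have hl2 : l ≠ 2 := by rintro rfl; omega
  have hsum := sum_coprime_legendreSym_mul hl2 r
  set N := 4 * l ^ (r + 1) with hN
  have hlN : l ∣ N := ⟨4 * l ^ r, by rw [hN]; ring⟩
  have hN1 : 1 < N := by have := Nat.pow_pos (Fact.out : l.Prime).pos (n := r + 1); omega
  clear_value N
  have : NeZero N := ⟨by omega⟩
  have hordu : orderOf (ZMod.unitOfCoprime p hp) = orderOf (p : ZMod N) := by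
    rw [← orderOf_units, ZMod.coe_unitOfCoprime]
  have key := two_mul_sum_pow_mul (legendreUnitsHom_ne_one hl4 hlN)
    (g := ZMod.unitOfCoprime p hp)
    (by rw [Units.ext_iff, legendreUnitsHom_unitOfCoprime, hlp, Units.val_one])
    (by rw [hordu, hord, ZMod.card_units_eq_totient])
    (fun u ↦ ((u : ZMod N).val : ℤ)) (ZMod.unitOfCoprime c hc)
  have hval (i : ℕ) : ((ZMod.unitOfCoprime p hp ^ i * ZMod.unitOfCoprime c hc : (ZMod N)ˣ) :
      ZMod N).val = p ^ i * c % N := by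
    rw [← ZMod.val_natCast]
    simp
  simp only [hordu, hval, legendreUnitsHom_unitOfCoprime] at key
  simp only [legendreUnitsHom_apply, add_mul, one_mul,
    Finset.sum_add_distrib, mul_assoc (legendreSym l c), ← Finset.mul_sum] at key
  rw [sum_units_val_eq_sum_coprime N fun b ↦ legendreSym l b * b, hsum] at key
  have hunits := two_mul_sum_units_val hN1
  rw [← hord, Nat.cast_mul, Nat.cast_two] at hunits
  linarith

theorem exists_pow_eq_legendreSym_mul {N p c : ℕ} [NeZero N] (hl4 : l % 4 = 3) (hlN : l ∣ N)
    (hp : p.Coprime N) (hlp : legendreSym l p = 1) (hord : 2 * orderOf (p : ZMod N) = N.totient)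
    (hc : c.Coprime N) : ∃ i : ℕ, (p : ZMod N) ^ i = legendreSym l c * c := by
  have hker := ker_eq_zpowers_of_two_mul_orderOf (g := ZMod.unitOfCoprime p hp)
    (legendreUnitsHom_ne_one hl4 hlN)
    (by rw [Units.ext_iff, legendreUnitsHom_unitOfCoprime, hlp, Units.val_one])
    (by rw [← orderOf_units, ZMod.coe_unitOfCoprime, hord, ZMod.card_units_eq_totient])
  have hpow {u : (ZMod N)ˣ} (hu : legendreUnitsHom l hlN u = 1) :
      ∃ i : ℕ, (p : ZMod N) ^ i = u := by
    rw [← MonoidHom.mem_ker, hker, ← mem_powers_iff_mem_zpowers] at hu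
    obtain ⟨i, hi⟩ := hu
    exact ⟨i, by simpa using congrArg (Units.val (α := ZMod N)) hi⟩
  rw [← legendreUnitsHom_unitOfCoprime hlN hc]
  obtain h | h := Int.units_eq_one_or (legendreUnitsHom l hlN (ZMod.unitOfCoprime c hc))
  · simpa [h] using hpow h
  · simpa [h] using hpow (u := -ZMod.unitOfCoprime c hc)
      (by rw [← neg_one_mul, map_mul, legendreUnitsHom_neg_one hl4, h, neg_one_mul, neg_neg])

end Legendre

/-! ### Gauss sums of index two in `ℚ(√-l)` -/

section GaloisDescent

theorem exists_intCast_eq_of_forall_map_eq {E : Type*} [Field E] [Algebra ℚ E] [IsGalois ℚ E]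
    {x : E} (hx : IsIntegral ℤ x) (hfix : ∀ σ : E ≃ₐ[ℚ] E, σ x = x) : ∃ n : ℤ, (n : E) = x := by
  obtain ⟨t, rfl⟩ := (InfiniteGalois.mem_range_algebraMap_iff_fixed x).mpr hfix
  have ht : IsIntegral ℤ t :=
    (isIntegral_algHom_iff ((algebraMap ℚ E).toIntAlgHom) (algebraMap ℚ E).injective).mp hx
  obtain ⟨n, rfl⟩ := IsIntegrallyClosed.isIntegral_iff.mp ht
  exact ⟨n, by simp⟩

theorem exists_coprime_forall_map_eq_pow {E : Type*} [Field E] [CharZero E] [IsAlgClosed E]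
    (n : ℕ) [NeZero n] (σ : E ≃+* E) :
    ∃ k : ℕ, k.Coprime n ∧ ∀ x : E, x ^ n = 1 → σ x = x ^ k := by
  have hn : Nat.card (rootsOfUnity n E) = n := HasEnoughRootsOfUnity.natCard_rootsOfUnity E n
  refine ⟨_, ZMod.val_coe_unit_coprime (modularCyclotomicCharacter E hn σ), fun x hx ↦ ?_⟩
  lift x to Eˣ using IsUnit.of_pow_eq_one hx (NeZero.ne n)
  exact modularCyclotomicCharacter.spec E hn σ (by
    rw [_root_.mem_rootsOfUnity]
    exact Units.ext (by simpa using hx))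

theorem ringHomComp_eq_pow {R E : Type*} [CommRing R] [CommRing E] {χ : MulChar R E} {σ : E →+* E}
    {k : ℕ} (hσ : ∀ u : Rˣ, σ (χ u) = χ u ^ k) :
    χ.ringHomComp σ = χ ^ k := by
  ext u
  rw [MulChar.ringHomComp_apply, hσ, MulChar.pow_apply_coe]

section CommRing

variable {R E E' : Type*} [CommRing R] [Fintype R] [CommRing E] [CommRing E'] {χ : MulChar R E}
  {ψ : AddChar R E}

theorem map_gaussSum (σ : E →+* E') :
    σ (gaussSum χ ψ) = gaussSum (χ.ringHomComp σ) (σ.toMonoidHom.compAddChar ψ) := by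
  simp [gaussSum]

theorem map_gaussSum_of_map_eq_pow {σ : E →+* E} {k : ℕ} {u : Rˣ} (hu : (u : R) = k)
    (hψ : ∀ x, σ (ψ x) = ψ x ^ k) :
    σ (gaussSum χ ψ) = (χ.ringHomComp σ)⁻¹ u * gaussSum (χ.ringHomComp σ) ψ := by
  have hshift : σ.toMonoidHom.compAddChar ψ = ψ.mulShift u := by
    ext x
    rw [AddChar.mulShift_apply, hu, ← nsmul_eq_mul, AddChar.map_nsmul_eq_pow]
    exact hψ x
  rw [map_gaussSum, hshift, gaussSum_mulShift_eq]

end CommRing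

theorem map_eq_legendreSym_mul {E : Type*} [Field E] [CharZero E] {l : ℕ} [Fact l.Prime]
    (hl4 : l % 4 = 3) {ζ : E} (hζ : IsPrimitiveRoot ζ l) {g : E} (hg : g ^ 2 = -l) {σ : E →+* E}
    {k : ℕ} (hk : k.Coprime l) (hσ : ∀ x : E, x ^ l = 1 → σ x = x ^ k) :
    σ g = legendreSym l k * g := by
  have hl2 : ringChar (ZMod l) ≠ 2 := by rw [ZMod.ringChar_zmod_n]; rintro rfl; omega
  set ψ := AddChar.zmodChar l hζ.pow_eq_one
  set Q := (quadraticChar (ZMod l)).ringHomComp (Int.castRingHom E) with hQ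
  have hQ1 : Q ≠ 1 :=
    (MulChar.ringHomComp_ne_one_iff (RingHom.injective_int _)).mpr (quadraticChar_ne_one hl2)
  have hQ2 : Q.IsQuadratic := (quadraticChar_isQuadratic (ZMod l)).comp _
  have hsq : gaussSum Q ψ ^ 2 = -l := by
    rw [gaussSum_sq hQ1 hQ2 (AddChar.zmodChar_primitive_of_primitive_root l hζ), hQ,
      MulChar.ringHomComp_apply, quadraticChar_neg_one hl2, ZMod.card,
      ZMod.χ₄_nat_three_mod_four hl4]
    simp
  have hσQ : Q.ringHomComp σ = Q := by ext u; simp [hQ]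
  have hmap : σ (gaussSum Q ψ) = legendreSym l k * gaussSum Q ψ := by
    have h := map_gaussSum_of_map_eq_pow (χ := Q) (ψ := ψ) (ZMod.coe_unitOfCoprime k hk)
      fun x ↦ hσ _ (by rw [← AddChar.map_nsmul_eq_pow]; simp)
    rw [h, hσQ, hQ2.inv, ZMod.coe_unitOfCoprime]
    simp [hQ, legendreSym, quadraticChar]
  obtain rfl | rfl := sq_eq_sq_iff_eq_or_eq_neg.mp (hg.trans hsq.symm)
  · exact hmap
  · rw [map_neg, hmap, mul_neg]

theorem gaussSum_mul_gaussSum_inv {F E : Type*} [Field F] [Fintype F] [CommRing E] [IsDomain E]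
    {χ : MulChar F E} {ψ : AddChar F E} (hχ1 : χ ≠ 1) (hχ : χ (-1) = 1) (hψ : ψ.IsPrimitive) :
    gaussSum χ ψ * gaussSum χ⁻¹ ψ = Fintype.card F := by
  rw [← mul_gaussSum_inv_eq_gaussSum χ⁻¹, MulChar.inv_apply', inv_neg, inv_one, hχ, one_mul,
    gaussSum_mul_gaussSum_eq_card hχ1 hψ]

section FiniteField

variable {p : ℕ} [Fact p.Prime] {F : Type*} [Field F] [Fintype F] [Algebra (ZMod p) F]
  {E : Type*}

theorem gaussSum_pow_of_coprime [CommRing E] {χ : MulChar F E} {ψ : AddChar F E} {l N c : ℕ}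
    [Fact l.Prime] [NeZero N] (hψ : ∀ x, ψ (x ^ p) = ψ x) (hl4 : l % 4 = 3) (hlN : l ∣ N)
    (hp : p.Coprime N) (hlp : legendreSym l p = 1) (hord : 2 * orderOf (p : ZMod N) = N.totient)
    (hχ : χ ^ N = 1) (hc : c.Coprime N) :
    legendreSym l c = 1 ∧ gaussSum (χ ^ c) ψ = gaussSum χ ψ ∨
      legendreSym l c = -1 ∧ gaussSum (χ ^ c) ψ = gaussSum χ⁻¹ ψ := by
  obtain ⟨i, hi⟩ := exists_pow_eq_legendreSym_mul hl4 hlN hp hlp hord hc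
  have hcl : ((c : ℤ) : ZMod l) ≠ 0 := by
    rw [Int.cast_natCast, Ne, ZMod.natCast_eq_zero_iff]
    exact (Fact.out : l.Prime).coprime_iff_not_dvd.mp (hc.coprime_dvd_right hlN).symm
  obtain h | h := legendreSym.eq_one_or_neg_one l hcl
  · refine .inl ⟨h, ?_⟩
    have hmod : p ^ i ≡ c [MOD N] := by
      rw [← ZMod.natCast_eq_natCast_iff, Nat.cast_pow, hi, h, Int.cast_one, one_mul]
    rw [← pow_eq_pow_of_modEq hmod hχ, gaussSum_pow_char_pow hψ]
  · refine .inr ⟨h, ?_⟩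
    have hdvd : N ∣ p ^ i + c := by
      rw [← ZMod.natCast_eq_zero_iff, Nat.cast_add, Nat.cast_pow, hi, h]
      simp
    have hinv : χ ^ c = χ⁻¹ ^ p ^ i := by
      rw [inv_pow, eq_inv_iff_mul_eq_one, ← pow_add, add_comm]
      exact orderOf_dvd_iff_pow_eq_one.mp ((orderOf_dvd_of_pow_eq_one hχ).trans hdvd)
    rw [hinv, gaussSum_pow_char_pow hψ]

theorem map_gaussSum_of_coprime [CommRing E] {χ : MulChar F E} {ψ : AddChar F E} {σ : E →+* E}
    {N k : ℕ} (hχ : χ ^ N = 1) (htriv : ∀ a : ZMod p, a ≠ 0 → χ (algebraMap (ZMod p) F a) = 1)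
    (hk : k.Coprime (N * p)) (hσ : ∀ x : E, x ^ (N * p) = 1 → σ x = x ^ k) :
    σ (gaussSum χ ψ) = gaussSum (χ ^ k) ψ := by
  have hkp : (k : ZMod p) ≠ 0 := by
    rw [Ne, ZMod.natCast_eq_zero_iff]
    exact (Fact.out : p.Prime).coprime_iff_not_dvd.mp hk.coprime_mul_left_right.symm
  have hkF : algebraMap (ZMod p) F k ≠ 0 := (_root_.map_ne_zero _).mpr hkp
  have hψ (x : F) : σ (ψ x) = ψ x ^ k := by
    have : CharP F p := charP_of_injective_algebraMap (algebraMap (ZMod p) F).injective p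
    refine hσ _ ?_
    rw [mul_comm, pow_mul, ← AddChar.map_nsmul_eq_pow]
    simp
  have hχσ : χ.ringHomComp σ = χ ^ k := ringHomComp_eq_pow fun u ↦ hσ _ <| by
    rw [pow_mul, ← MulChar.pow_apply_coe, hχ, MulChar.one_apply_coe, one_pow]
  have hχk : (χ ^ k)⁻¹ (algebraMap (ZMod p) F k) = 1 := by
    rw [MulChar.inv_apply', ← map_inv₀, MulChar.pow_apply' _ (by rintro rfl; simp at hkp),
      htriv _ (inv_ne_zero hkp), one_pow]
  rw [map_gaussSum_of_map_eq_pow (u := .mk0 _ hkF) (by simp) hψ, hχσ, Units.val_mk0, hχk, one_mul]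

section Descent

variable [Field E] [Algebra ℚ E] [IsAlgClosed E] {χ : MulChar F E} {ψ : AddChar F E} {l N : ℕ}
  [Fact l.Prime] [NeZero N] {g : E}

theorem map_gaussSum_eq_or (hψ : ∀ x, ψ (x ^ p) = ψ x) (hl4 : l % 4 = 3) (hlN : l ∣ N)
    (hp : p.Coprime N) (hlp : legendreSym l p = 1) (hord : 2 * orderOf (p : ZMod N) = N.totient)
    (hχ : χ ^ N = 1) (htriv : ∀ a : ZMod p, a ≠ 0 → χ (algebraMap (ZMod p) F a) = 1)
    (hg : g ^ 2 = -l) (σ : E ≃ₐ[ℚ] E) :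
    σ g = g ∧ σ (gaussSum χ ψ) = gaussSum χ ψ ∧ σ (gaussSum χ⁻¹ ψ) = gaussSum χ⁻¹ ψ ∨
      σ g = -g ∧ σ (gaussSum χ ψ) = gaussSum χ⁻¹ ψ ∧ σ (gaussSum χ⁻¹ ψ) = gaussSum χ ψ := by
  have : CharZero E := algebraRat.charZero E
  obtain ⟨ζ, hζ⟩ := HasEnoughRootsOfUnity.exists_primitiveRoot E l
  have hχ' : χ⁻¹ ^ N = 1 := by rw [inv_pow, hχ, inv_one]
  obtain ⟨k, hk, hσ⟩ := exists_coprime_forall_map_eq_pow (N * p) (σ : E ≃+* E)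
  have hkN : k.Coprime N := hk.coprime_mul_right_right
  have hσl (x : E) (hx : x ^ l = 1) : σ x = x ^ k := by
    obtain ⟨m, rfl⟩ := hlN
    exact hσ x (by rw [mul_assoc, pow_mul, hx, one_pow])
  have hσg := map_eq_legendreSym_mul (σ := (σ : E →+* E)) hl4 hζ hg
    (hkN.coprime_dvd_right hlN) hσl
  have hσχ : σ (gaussSum χ ψ) = gaussSum (χ ^ k) ψ :=
    map_gaussSum_of_coprime (σ := (σ : E →+* E)) hχ htriv hk hσ
  have hσχ' : σ (gaussSum χ⁻¹ ψ) = gaussSum (χ⁻¹ ^ k) ψ :=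
    map_gaussSum_of_coprime (σ := (σ : E →+* E)) hχ' (fun a ha ↦ by
      rw [MulChar.inv_apply', ← map_inv₀, htriv _ (inv_ne_zero ha)]) hk hσ
  have h1 := gaussSum_pow_of_coprime hψ hl4 hlN hp hlp hord hχ hkN
  have h2 := gaussSum_pow_of_coprime hψ hl4 hlN hp hlp hord hχ' hkN
  rw [inv_inv] at h2
  simp only [RingHom.coe_coe] at hσg
  obtain ⟨h, h1⟩ | ⟨h, h1⟩ := h1
  · have h2 := (h2.resolve_right (by rw [h]; norm_num)).2
    exact .inl ⟨by simpa [h] using hσg, hσχ.trans h1, hσχ'.trans h2⟩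
  · have h2 := (h2.resolve_left (by rw [h]; norm_num)).2
    exact .inr ⟨by simpa [h] using hσg, hσχ.trans h1, hσχ'.trans h2⟩

theorem exists_int_two_mul_gaussSum_eq [IsGalois ℚ E] (hψ1 : ψ.IsPrimitive)
    (hψ : ∀ x, ψ (x ^ p) = ψ x) (hl4 : l % 4 = 3) (hlN : l ∣ N) (hp : p.Coprime N)
    (hlp : legendreSym l p = 1) (hord : 2 * orderOf (p : ZMod N) = N.totient) (hχ1 : χ ≠ 1)
    (hχ : χ ^ N = 1) (htriv : ∀ a : ZMod p, a ≠ 0 → χ (algebraMap (ZMod p) F a) = 1)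
    (hg : g ^ 2 = -l) : ∃ a b : ℤ, 2 * gaussSum χ ψ = a + b * g := by
  have : CharZero E := algebraRat.charZero E
  have hgint : IsIntegral ℤ g := .of_pow two_pos (by rw [hg]; exact (isIntegral_natCast l).neg)
  have hconj := map_gaussSum_eq_or hψ hl4 hlN hp hlp hord hχ htriv hg
  obtain ⟨a, ha⟩ := exists_intCast_eq_of_forall_map_eq
    ((isIntegral_gaussSum χ ψ).add (isIntegral_gaussSum χ⁻¹ ψ)) fun σ ↦ by
      obtain ⟨-, h1, h2⟩ | ⟨-, h1, h2⟩ := hconj σ <;> rw [map_add, h1, h2]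
      exact add_comm _ _
  obtain ⟨n, hn⟩ := exists_intCast_eq_of_forall_map_eq
    (((isIntegral_gaussSum χ ψ).sub (isIntegral_gaussSum χ⁻¹ ψ)).mul hgint) fun σ ↦ by
      obtain ⟨h, h1, h2⟩ | ⟨h, h1, h2⟩ := hconj σ <;> rw [map_mul, map_sub, h, h1, h2]
      ring
  have hprod := gaussSum_mul_gaussSum_inv hχ1 (by simpa using htriv (-1) (by simp)) hψ1
  have hsq : n ^ 2 = -(l : ℤ) * (a ^ 2 - 4 * Fintype.card F) := by
    refine Int.cast_injective (α := E) ?_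
    push_cast
    rw [hn, ha, mul_pow, hg, ← hprod]
    ring
  obtain ⟨b, rfl⟩ : (l : ℤ) ∣ n :=
    (Nat.prime_iff_prime_int.mp Fact.out).dvd_of_dvd_pow (hsq ▸ (dvd_neg.mpr dvd_rfl).mul_right _)
  refine ⟨a, -b, ?_⟩
  have hl0 : (l : E) ≠ 0 := NeZero.ne _
  have hdiff : gaussSum χ ψ - gaussSum χ⁻¹ ψ = -(b * g) := by
    refine mul_left_cancel₀ hl0 ?_
    push_cast at hn
    linear_combination (gaussSum χ ψ - gaussSum χ⁻¹ ψ) * hg + g * hn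
  push_cast
  linear_combination hdiff - ha

end Descent

end FiniteField

section Transfer

variable {E E' : Type*} [Field E] [Field E'] (i : E →+* E')

theorem exists_ringHomComp_eq {R : Type*} [CommMonoid R] {χ : MulChar R E'}
    (hχ : ∀ x, χ x ∈ Set.range i) : ∃ χ' : MulChar R E, χ'.ringHomComp i = χ := by
  choose g hg using hχ
  refine ⟨⟨⟨⟨g, ?_⟩, fun x y ↦ ?_⟩, fun x hx ↦ ?_⟩, MulChar.ext fun u ↦ hg u⟩ <;>
    apply i.injective
  · rw [hg, map_one, map_one]
  · rw [map_mul, hg, hg, hg, map_mul]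
  · rw [map_zero]
    exact (hg x).trans (χ.map_nonunit hx)

theorem exists_compAddChar_eq {A : Type*} [AddMonoid A] {ψ : AddChar A E'}
    (hψ : ∀ x, ψ x ∈ Set.range i) : ∃ ψ' : AddChar A E, i.toMonoidHom.compAddChar ψ' = ψ := by
  choose g hg using hψ
  refine ⟨⟨g, ?_, fun x y ↦ ?_⟩, by ext x; exact hg x⟩ <;> apply i.injective
  · rw [hg, AddChar.map_zero_eq_one, map_one]
  · rw [map_mul, hg, hg, hg, AddChar.map_add_eq_mul]

end Transfer

theorem exists_gaussSum_traceChar_eq {p l N : ℕ} [Fact p.Prime] [Fact l.Prime] [NeZero N]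
    {F : Type*} [Field F] [Fintype F] [Algebra (ZMod p) F] {χ : MulChar F ℂ} (hl4 : l % 4 = 3)
    (hlN : l ∣ N) (hp : p.Coprime N) (hlp : legendreSym l p = 1)
    (hord : 2 * orderOf (p : ZMod N) = N.totient) (hχ1 : χ ≠ 1) (hχ : χ ^ N = 1)
    (htriv : ∀ a : ZMod p, a ≠ 0 → χ (algebraMap (ZMod p) F a) = 1) :
    ∃ a b : ℤ, gaussSum χ (traceChar p F) = (a + b * sqrtNeg l) / 2 := by
  set i := algebraMap (algebraicClosure ℚ ℂ) ℂ
  have hi : Function.Injective i := i.injective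
  have hrange {x : ℂ} (hx : IsIntegral ℤ x) : x ∈ Set.range i :=
    ⟨⟨x, mem_algebraicClosure_iff.mpr (hx.tower_top (A := ℚ)).isAlgebraic⟩, rfl⟩
  have : IsAlgClosure ℚ (algebraicClosure ℚ ℂ) := algebraicClosure.isAlgClosure ℚ ℂ
  have : IsAlgClosed (algebraicClosure ℚ ℂ) := (algebraicClosure.isAlgClosure ℚ ℂ).isAlgClosed
  have : IsGalois ℚ (algebraicClosure ℚ ℂ) := IsAlgClosure.isGalois ℚ _
  obtain ⟨χ', rfl⟩ := exists_ringHomComp_eq i fun x ↦ hrange (isIntegral_mulChar_apply χ x)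
  obtain ⟨ψ', hψ'⟩ := exists_compAddChar_eq i
    fun x ↦ hrange (isIntegral_addChar_apply (traceChar p F) x)
  obtain ⟨g, hg⟩ := hrange (.of_pow two_pos (by
    rw [sqrtNeg_sq l]; exact (isIntegral_natCast l).neg) : IsIntegral ℤ (sqrtNeg l))
  have hψi (x : F) : i (ψ' x) = traceChar p F x := DFunLike.congr_fun hψ' x
  have hψ1 : ψ'.IsPrimitive := .of_ne_one <| by
    rintro rfl
    exact traceChar_ne_one p F (by rw [← hψ']; ext; simp)
  obtain ⟨a, b, h⟩ := exists_int_two_mul_gaussSum_eq hψ1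
    (fun x ↦ hi (by rw [hψi, hψi, traceChar_pow_char])) hl4 hlN hp hlp hord
    ((MulChar.ringHomComp_ne_one_iff hi).mp hχ1)
    ((MulChar.ringHomComp_eq_one_iff hi).mp (by rw [← MulChar.ringHomComp_pow, hχ]))
    (fun a ha ↦ hi ((htriv a ha).trans (map_one i).symm))
    (hi (by rw [map_pow, hg, sqrtNeg_sq, map_neg, map_natCast]))
  refine ⟨a, b, ?_⟩
  rw [← hψ', ← map_gaussSum, ← hg, eq_div_iff two_ne_zero, mul_comm]
  simpa only [map_mul, map_add, map_intCast, map_ofNat] using congrArg i h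

end GaloisDescent

/-! ### Quartic Gauss sums -/

section RestrictionToSubfield

variable {K F R : Type*} [Field K] [Field F] [Finite F] [Algebra K F] [CommRing R]

theorem map_algebraMap_eq_one_of_dvd {χ : MulChar F R} {N : ℕ} (hχ : χ ^ N = 1)
    (hN : N ∣ ∑ i ∈ Finset.range (Module.finrank K F), Nat.card K ^ i) {a : K} (ha : a ≠ 0) :
    χ (algebraMap K F a) = 1 := by
  have : Finite K := Finite.of_injective _ (algebraMap K F).injective
  obtain ⟨u, hu⟩ := FiniteField.unitsMap_norm_surjective K F (Units.mk0 a ha)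
  have hu : Algebra.norm K (u : F) = a := congrArg Units.val hu
  obtain ⟨m, hm⟩ := hN
  rw [← hu, FiniteField.algebraMap_norm_eq_pow_sum, hm, pow_mul, map_pow, map_pow,
    ← MulChar.pow_apply_coe, hχ, MulChar.one_apply_coe, one_pow]

end RestrictionToSubfield

section QuadraticExtension

theorem forall_map_smul_eq_one_iff_mem_span {K V R : Type*} [Field K] [AddCommGroup V] [Module K V]
    [CommRing R] (hV : Module.finrank K V = 2) {ψ : AddChar V R} (hψ : ψ ≠ 1) {v : V} (hv : v ≠ 0)
    (h : ∀ c : K, ψ (c • v) = 1) {x : V} : (∀ c : K, ψ (c • x) = 1) ↔ x ∈ K ∙ v := by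
  have : FiniteDimensional K V := FiniteDimensional.of_finrank_pos (by rw [hV]; exact two_pos)
  let T : Submodule K V :=
    { carrier := {x | ∀ c : K, ψ (c • x) = 1}
      add_mem' := fun hx hy c ↦ by rw [smul_add, AddChar.map_add_eq_mul, hx, hy, one_mul]
      zero_mem' := fun c ↦ by rw [smul_zero, AddChar.map_zero_eq_one]
      smul_mem' := fun d x hx c ↦ by rw [smul_smul]; exact hx _ }
  have hT : T ≠ ⊤ := by
    contrapose! hψ
    ext x
    simpa using (hψ ▸ Submodule.mem_top : x ∈ T) 1
  have hle : K ∙ v ≤ T := (Submodule.span_singleton_le_iff_mem v T).mpr h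
  have hlt := Submodule.finrank_lt hT
  rw [hV] at hlt
  have heq : K ∙ v = T :=
    Submodule.eq_of_le_of_finrank_le hle (by rw [finrank_span_singleton hv]; omega)
  rw [heq]
  rfl

section Sums

variable {K R : Type*} [Field K] [Fintype K] [CommRing R]

theorem sum_map_smul_eq_ite [IsDomain R] {V : Type*} [AddCommGroup V] [Module K V]
    (ψ : AddChar V R) (x : V) [Decidable (∀ c : K, ψ (c • x) = 1)] :
    ∑ c : K, ψ (c • x) = if ∀ c : K, ψ (c • x) = 1 then (Fintype.card K : R) else 0 := by
  let ψx : AddChar K R := ψ.compAddMonoidHom (LinearMap.toSpanSingleton K V x).toAddMonoidHom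
  split_ifs with h
  · simp [h]
  · exact AddChar.sum_eq_zero_of_ne_one (ψ := ψx) fun h0 ↦ h fun c ↦ DFunLike.congr_fun h0 c

theorem sum_ite_eq_zero_else [DecidableEq K] (a : R) :
    ∑ c : K, (if c = 0 then 0 else a) = (Fintype.card K - 1) * a := by
  rw [Finset.sum_ite, Finset.sum_const_zero, zero_add, Finset.sum_const, Finset.filter_ne',
    Finset.card_erase_of_mem (Finset.mem_univ _), Finset.card_univ, nsmul_eq_mul,
    Nat.cast_sub Fintype.card_pos, Nat.cast_one]

theorem sum_ite_mem_span_singleton {V : Type*} [AddCommGroup V] [Module K V] [Fintype V] {v : V}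
    [DecidablePred (· ∈ K ∙ v)] (hv : v ≠ 0) (f : V → R) :
    ∑ x : V, (if x ∈ K ∙ v then f x else 0) = ∑ c : K, f (c • v) := by
  rw [← Finset.sum_filter]
  refine (Finset.sum_nbij (· • v) (fun c _ ↦ ?_) (fun c _ d _ hcd ↦ ?_) (fun x hx ↦ ?_)
    fun _ _ ↦ rfl).symm
  · simpa using Submodule.smul_mem _ c (Submodule.mem_span_singleton_self v)
  · exact smul_left_injective K hv hcd
  · obtain ⟨c, rfl⟩ := Submodule.mem_span_singleton.mp (Finset.mem_filter.mp hx).2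
    exact ⟨c, by simp, rfl⟩

end Sums

variable {K F R : Type*} [Field K] [Field F] [Algebra K F] [CommRing R] [IsDomain R]

/- Averaging the sum over the twists of `ψ` by `Kˣ`, which do not change it because `χ` is trivial
on `Kˣ`, leaves the sum of `χ` over the line on which `ψ` is trivial. -/
theorem gaussSum_eq_map_mul_card_of_finrank_eq_two [Fintype K] [Fintype F] [CharZero R]
    (hF : Module.finrank K F = 2) {χ : MulChar F R} (hχ : χ ≠ 1)
    (htriv : ∀ c : K, c ≠ 0 → χ (algebraMap K F c) = 1)
    {ψ : AddChar F R} (hψ : ψ ≠ 1) {x₀ : F} (hx₀ : x₀ ≠ 0) (h : ∀ c : K, ψ (c • x₀) = 1) :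
    gaussSum χ ψ = χ x₀ * Fintype.card K := by
  classical
  have hshift (c : K) :
      gaussSum χ (ψ.mulShift (algebraMap K F c)) = if c = 0 then 0 else gaussSum χ ψ := by
    split_ifs with hc
    · rw [hc, map_zero, AddChar.mulShift_zero, gaussSum_one_right hχ]
    · have hc' : algebraMap K F c ≠ 0 := (_root_.map_ne_zero _).mpr hc
      rw [← gaussSum_mulShift χ ψ (Units.mk0 _ hc'), Units.val_mk0, htriv c hc, one_mul]
  have hcoset (c : K) : χ (c • x₀) = if c = 0 then 0 else χ x₀ := by
    split_ifs with hc
    · rw [hc, zero_smul, MulChar.map_zero]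
    · rw [Algebra.smul_def, map_mul, htriv c hc, one_mul]
  have hline (x : F) : χ x * ∑ c : K, ψ (c • x) =
      (if x ∈ K ∙ x₀ then χ x else 0) * Fintype.card K := by
    simp only [sum_map_smul_eq_ite (K := K),
      forall_map_smul_eq_one_iff_mem_span hF hψ hx₀ h, mul_ite, mul_zero, ite_mul, zero_mul]
  have hK : (Fintype.card K : R) - 1 ≠ 0 :=
    sub_ne_zero.mpr (Nat.cast_ne_one.mpr (Fintype.one_lt_card (α := K)).ne')
  refine mul_left_cancel₀ hK ?_
  calc (Fintype.card K - 1) * gaussSum χ ψ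
      = ∑ c : K, gaussSum χ (ψ.mulShift (algebraMap K F c)) := by
        simp only [hshift, sum_ite_eq_zero_else]
    _ = ∑ x : F, χ x * ∑ c : K, ψ (c • x) := by
        simp only [gaussSum, AddChar.mulShift_apply, ← Algebra.smul_def, Finset.mul_sum]
        exact Finset.sum_comm
    _ = (Fintype.card K - 1) * (χ x₀ * Fintype.card K) := by
        simp only [hline, ← Finset.sum_mul, sum_ite_mem_span_singleton hx₀, hcoset,
          sum_ite_eq_zero_else, mul_assoc]

theorem exists_pow_card_eq_neg [Fintype K] [Finite F] (hF : Module.finrank K F = 2)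
    (hK : Fintype.card K % 4 = 3) {χ : MulChar F R} (hχ : orderOf χ = 4) :
    ∃ x : F, x ^ Fintype.card K = -x ∧ χ x = (-1) ^ ((Fintype.card K + 1) / 4) := by
  have := Fintype.ofFinite F
  set Q := Fintype.card K
  have hcard : Fintype.card F = Q ^ 2 := by rw [Module.card_eq_pow_finrank (K := K), hF]
  have hodd : ringChar F ≠ 2 := by
    rw [Ne, FiniteField.even_card_iff_char_two, hcard, ← Nat.even_iff, Nat.even_pow, Nat.even_iff]
    omega
  obtain ⟨y, hy⟩ : ∃ y : Fˣ, χ y ^ 2 ≠ 1 := by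
    by_contra! h
    have : χ ^ 2 = 1 := MulChar.ext fun u ↦ by rw [MulChar.pow_apply_coe, h, MulChar.one_apply_coe]
    have := Nat.le_of_dvd two_pos (hχ ▸ orderOf_dvd_of_pow_eq_one this)
    omega
  have hχ4 : χ y ^ 4 = 1 := by
    rw [← MulChar.pow_apply_coe, ← hχ, pow_orderOf_eq_one, MulChar.one_apply_coe]
  have hχy : χ y ^ 2 = -1 := 
    (sq_eq_one_iff.mp (by rw [← pow_mul]; exact hχ4)).resolve_left hy
  have hnsq : (y : F) ^ (Q ^ 2 / 2) = -1 := by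
    rw [← hcard]
    refine (FiniteField.pow_dichotomy hodd y.ne_zero).resolve_left fun h ↦ ?_
    obtain ⟨z, hz⟩ := (FiniteField.isSquare_iff hodd y.ne_zero).mpr h
    have hz0 : z ≠ 0 := by rintro rfl; exact y.ne_zero (by rw [hz, zero_mul])
    refine hy ?_
    rw [hz, map_mul, ← sq, ← pow_mul, ← MulChar.pow_apply' _ (by norm_num), show 2 * 2 = 4 from rfl,
      ← hχ, pow_orderOf_eq_one, MulChar.one_apply hz0.isUnit]
  obtain ⟨w, hw⟩ : ∃ w, Q = 4 * w + 3 := ⟨Q / 4, by omega⟩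
  have hexp : Q ^ 2 / 2 + (Q + 1) / 2 = (Q + 1) / 2 * Q := by
    have h1 : Q ^ 2 / 2 = 8 * w ^ 2 + 12 * w + 4 := by
      rw [hw, show (4 * w + 3) ^ 2 = 2 * (8 * w ^ 2 + 12 * w + 4) + 1 by ring]
      omega
    rw [h1, show (Q + 1) / 2 = 2 * w + 2 by omega, hw]
    ring
  refine ⟨y ^ ((Q + 1) / 2), ?_, ?_⟩
  · rw [← pow_mul, ← hexp, pow_add, hnsq, neg_one_mul]
  · rw [map_pow, show (Q + 1) / 2 = 2 * ((Q + 1) / 4) by omega, pow_mul, hχy]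

theorem gaussSum_of_orderOf_eq_four [Fintype K] [Fintype F] [CharZero R]
    (hF : Module.finrank K F = 2)
    (hK : Fintype.card K % 4 = 3) {χ : MulChar F R} (hχ : orderOf χ = 4) {ψ : AddChar F R}
    (hψ : ψ ≠ 1) (hψK : ∀ x, ψ (x ^ Fintype.card K) = ψ x) :
    gaussSum χ ψ = (-1) ^ ((Fintype.card K + 1) / 4) * Fintype.card K := by
  obtain ⟨x₀, hx₀, hχx₀⟩ := exists_pow_card_eq_neg hF hK hχ
  have hx₀0 : x₀ ≠ 0 := by
    rintro rfl
    rw [MulChar.map_zero] at hχx₀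
    exact pow_ne_zero _ (neg_ne_zero.mpr one_ne_zero) hχx₀.symm
  have hχ4 : χ ^ 4 = 1 := hχ ▸ pow_orderOf_eq_one χ
  rw [← hχx₀]
  refine gaussSum_eq_map_mul_card_of_finrank_eq_two hF (by rintro rfl; simp at hχ)
    (fun c hc ↦ map_algebraMap_eq_one_of_dvd hχ4 ?_ hc) hψ hx₀0 fun c ↦ ?_
  · simp only [hF, Finset.sum_range_succ, Finset.sum_range_zero, Nat.card_eq_fintype_card]
    rw [pow_zero, pow_one]
    omega
  · have hneg : (c • x₀) ^ Fintype.card K = -(c • x₀) := by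
      rw [Algebra.smul_def, mul_pow, ← map_pow, FiniteField.pow_card, hx₀, mul_neg]
    have hsq : ψ (c • x₀) ^ 2 = 1 := by
      rw [sq]
      nth_rewrite 2 [← hψK]
      rw [hneg, ← AddChar.map_add_eq_mul, add_neg_cancel, AddChar.map_zero_eq_one]
    have hpow : ψ (c • x₀) ^ Fintype.card K = 1 := by
      rw [← AddChar.map_nsmul_eq_pow, ← Nat.cast_smul_eq_nsmul K, Nat.cast_card_eq_zero, zero_smul,
        AddChar.map_zero_eq_one]
    rwa [show Fintype.card K = 2 * (Fintype.card K / 2) + 1 by omega, pow_succ, pow_mul, hsq,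
      one_pow, one_mul] at hpow

end QuadraticExtension

theorem pow_modEq_self_of_odd {m n : ℕ} (hn : Odd n) (hm : Odd m) : n ^ m ≡ n [MOD 8] := by
  obtain ⟨k, rfl⟩ := hm
  have h : n ^ 2 ≡ 1 [MOD 8] :=
    ((Nat.modEq_iff_dvd' (Nat.one_le_pow 2 n hn.pos)).mpr
      (Nat.eight_dvd_sq_sub_one_of_odd hn)).symm
  simpa only [pow_add, pow_mul, one_pow, one_mul, pow_one] using (h.pow k).mul_right n

section QuarticSum

variable {p : ℕ} [Fact p.Prime] {F : Type*} [Field F] [Fintype F] [Algebra (ZMod p) F]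

theorem gaussSum_traceChar_of_orderOf_eq_four {m : ℕ} (hp : p % 4 = 3) (hm : Odd m)
    (hF : Fintype.card F = p ^ (2 * m)) {χ : MulChar F ℂ} (hχ : orderOf χ = 4) :
    gaussSum χ (traceChar p F) = (-1) ^ ((p + 1) / 4) * (p : ℂ) ^ m := by
  have hp1 := (Fact.out : p.Prime).two_le
  let _ := Fintype.ofFinite (GaloisField p m)
  have hK : Fintype.card (GaloisField p m) = p ^ m := by
    rw [← Nat.card_eq_fintype_card, GaloisField.card p m hm.pos.ne']
  have hfin : Module.finrank (ZMod p) F = 2 * m := by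
    rw [Module.card_eq_pow_finrank (K := ZMod p), ZMod.card] at hF
    exact Nat.pow_right_injective hp1 hF
  obtain ⟨i⟩ : Nonempty (GaloisField p m →ₐ[ZMod p] F) :=
    FiniteField.nonempty_algHom_of_finrank_dvd (by
      rw [GaloisField.finrank p hm.pos.ne', hfin]
      exact dvd_mul_left m 2)
  let _ : Algebra (GaloisField p m) F := i.toRingHom.toAlgebra
  have h2 : Module.finrank (GaloisField p m) F = 2 := by
    rw [Module.card_eq_pow_finrank (K := GaloisField p m), hK, ← pow_mul] at hF
    have := Nat.pow_right_injective hp1 hF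
    rw [mul_comm 2] at this
    exact Nat.eq_of_mul_eq_mul_left hm.pos this
  have h8 : p ^ m % 8 = p % 8 := pow_modEq_self_of_odd (Nat.odd_iff.mpr (by omega)) hm
  have := gaussSum_of_orderOf_eq_four h2 (by rw [hK]; omega) hχ (traceChar_ne_one p F)
    (fun x ↦ by rw [hK, traceChar_pow_char_pow])
  rw [this, hK, Nat.cast_pow]
  congr 1
  rw [neg_one_pow_eq_pow_mod_two, neg_one_pow_eq_pow_mod_two ((p + 1) / 4)]
  congr 1
  omega

end QuarticSum

section Congruence

variable {l : ℕ} [Fact l.Prime] {B : ValuationSubring ℂ}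

theorem gaussSum_pow_prime_pow_modEq {R : Type*} [CommRing R] [Fintype R]
    (hB : B.valuation (l : ℂ) < 1) {χ : MulChar R ℂ} {ψ : AddChar R ℂ} {r : ℕ} {m n : ℤ}
    (hm : B.valuation (gaussSum χ ψ - m) < 1)
    (hn : gaussSum (χ ^ l ^ r) (ψ ^ l ^ r) = n) : m ≡ n [ZMOD l] := by
  have := charP_algebraicClosure_residueField hB
  have hl : l ^ r ≠ 0 := pow_ne_zero r (NeZero.ne l)
  let y (x : R) : B := ⟨χ x * ψ x, (B.valuation_le_one_iff _).mp <| valuation_le_one_of_isIntegral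
    ((isIntegral_mulChar_apply χ x).mul (isIntegral_addChar_apply ψ x))⟩
  have hsum : reduction B (∑ x, y x) = m := by
    rw [← sub_eq_zero, ← map_intCast (reduction B), ← map_sub, reduction_eq_zero_iff]
    simpa [y, gaussSum] using hm
  have hpow : ∑ x, y x ^ l ^ r = n := by
    apply Subtype.val_injective
    simpa [y, gaussSum, mul_pow, MulChar.pow_apply' _ hl] using hn
  have hmn := congrArg (reduction B) hpow
  simp only [map_sum, map_pow, map_intCast] at hmn
  rw [← sum_pow_char_pow, ← map_sum, hsum, ← iterateFrobenius_def, map_intCast] at hmn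
  exact (CharP.intCast_eq_intCast _ l).mp hmn

theorem gaussSum_pow_right {R R' : Type*} [CommRing R] [Fintype R] [CommRing R'] {χ : MulChar R R'}
    {n : ℕ} (hn : IsUnit (n : R)) (hχ : χ n = 1) (ψ : AddChar R R') :
    gaussSum χ (ψ ^ n) = gaussSum χ ψ := by
  rw [AddChar.pow_mulShift, ← gaussSum_mulShift χ ψ hn.unit, hn.unit_spec, hχ, one_mul]

theorem eq_neg_one_pow_of_valuation_gaussSum_sub_lt_one {p f r : ℕ} [Fact p.Prime] {F : Type*}
    [Field F] [Fintype F] [Algebra (ZMod p) F] (hB : B.valuation (l : ℂ) < 1) (hl : l ≠ 2)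
    (hpl : p ≠ l) (hp : p % 4 = 3) (hf : f % 4 = 2) (hF : Fintype.card F = p ^ f)
    {χ : MulChar F ℂ} (hχ : orderOf χ = 4 * l ^ r)
    (htriv : ∀ a : ZMod p, a ≠ 0 → χ (algebraMap (ZMod p) F a) = 1) {δ : ℤ} (hδ : δ = 1 ∨ δ = -1)
    (h : B.valuation (gaussSum χ (traceChar p F) - δ * (p : ℂ) ^ (f / 2)) < 1) :
    δ = (-1) ^ ((p + 1) / 4) := by
  have hl0 := (Fact.out : l.Prime).pos
  have hpl' : p.Coprime l := (Nat.coprime_primes Fact.out Fact.out).mpr hpl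
  have hlp : ((l ^ r : ℕ) : ZMod p) ≠ 0 :=
    ((ZMod.isUnit_iff_coprime _ p).mpr (hpl'.symm.pow_left r)).ne_zero
  have hord : orderOf (χ ^ l ^ r) = 4 := by
    rw [orderOf_pow_of_dvd (by positivity) (by rw [hχ]; exact dvd_mul_left _ 4), hχ,
      Nat.mul_div_cancel _ (by positivity)]
  have hχl : (χ ^ l ^ r) (l ^ r : ℕ) = 1 := by
    rw [MulChar.pow_apply' _ (by positivity), ← map_natCast (algebraMap (ZMod p) F), htriv _ hlp,
      one_pow]
  have hlF : IsUnit ((l ^ r : ℕ) : F) := by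
    rw [← map_natCast (algebraMap (ZMod p) F)]
    exact hlp.isUnit.map _
  have hquartic : gaussSum (χ ^ l ^ r) (traceChar p F ^ l ^ r) =
      (((-1) ^ ((p + 1) / 4) * p ^ (f / 2) : ℤ) : ℂ) := by
    rw [gaussSum_pow_right hlF hχl, gaussSum_traceChar_of_orderOf_eq_four (m := f / 2) hp
      (Nat.odd_iff.mpr (by omega)) (by rw [hF]; congr 1; omega) hord]
    push_cast
    rfl
  have hmod := gaussSum_pow_prime_pow_modEq hB (m := δ * p ^ (f / 2)) (by simpa using h) hquartic
  have hp0 : ((p : ZMod l)) ^ (f / 2) ≠ 0 :=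
    pow_ne_zero _ ((ZMod.isUnit_iff_coprime p l).mpr hpl').ne_zero
  have hcast : ((δ : ℤ) : ZMod l) = (((-1) ^ ((p + 1) / 4) : ℤ) : ZMod l) := by
    refine mul_right_cancel₀ hp0 ?_
    exact_mod_cast (ZMod.intCast_eq_intCast_iff _ _ l).mpr hmod
  refine Int.cast_injOn_of_ringChar_ne_two ((ZMod.ringChar_zmod_n l).trans_ne hl) ?_ ?_ hcast
  · rcases hδ with rfl | rfl <;> simp
  · rcases neg_one_pow_eq_or ℤ ((p + 1) / 4) with h | h <;> simp [h]

end Congruence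

/-! ### Primes of index two modulo `4 * l ^ r` -/

section IndexTwo

variable {l p r : ℕ}

theorem odd_totient_prime_pow_div_two (hl : l.Prime) (hl4 : l % 4 = 3) (hr : r ≠ 0) :
    Odd ((l ^ r).totient / 2) := by
  rw [Nat.totient_prime_pow hl (Nat.pos_of_ne_zero hr), Nat.mul_div_assoc _ (by omega)]
  exact ((Nat.odd_iff.mpr (by omega)).pow).mul (Nat.odd_iff.mpr (by omega))

theorem totient_pow_eq_two_mul (hl2 : 2 < l) (hr : r ≠ 0) :
    (l ^ r).totient = 2 * ((l ^ r).totient / 2) :=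
  (Nat.two_mul_div_two_of_even
    (Nat.totient_even (hl2.trans_le (Nat.le_self_pow hr l)))).symm

theorem totient_four_mul_prime_pow (hl : l.Prime) (hl2 : l ≠ 2) :
    (4 * l ^ r).totient = 2 * (l ^ r).totient := by
  have : Nat.Coprime 4 (l ^ r) :=
    ((Nat.coprime_primes Nat.prime_two hl).mpr hl2.symm).pow 2 r
  rw [Nat.totient_mul this]
  rfl

theorem legendreSym_eq_one_of_odd_orderOf [Fact l.Prime] (hr : r ≠ 0)
    (h : Odd (orderOf (p : ZMod (l ^ r)))) : legendreSym l p = 1 := by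
  have hpow : (p : ZMod l) ^ orderOf (p : ZMod (l ^ r)) = 1 := by
    have := congrArg (ZMod.castHom (dvd_pow_self l hr) (ZMod l))
      (pow_orderOf_eq_one (p : ZMod (l ^ r)))
    simpa only [map_pow, map_natCast, map_one] using this
  have hpl : ((p : ℤ) : ZMod l) ≠ 0 := by
    intro h0
    rw [Int.cast_natCast] at h0
    rw [h0, zero_pow h.pos.ne'] at hpow
    exact zero_ne_one hpow
  refine (legendreSym.eq_one_or_neg_one l hpl).resolve_right fun hneg ↦ ?_
  have := congrArg (quadraticChar (ZMod l)) hpow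
  rw [map_pow, map_one, ← Int.cast_natCast (R := ZMod l) p, ← legendreSym, hneg,
    h.neg_one_pow] at this
  norm_num at this

theorem orderOf_dvd_pow_of_modEq_one {s : ℕ} (h : p ≡ 1 [MOD l]) :
    orderOf (p : ZMod (l ^ (s + 1))) ∣ l ^ s := by
  have hdvd := dvd_sub_pow_of_dvd_sub (Nat.modEq_iff_dvd.mp h.symm : (l : ℤ) ∣ p - (1 : ℕ)) s
  apply orderOf_dvd_of_pow_eq_one
  rw [← sub_eq_zero]
  have := (ZMod.intCast_zmod_eq_zero_iff_dvd _ (l ^ (s + 1))).mpr (by exact_mod_cast hdvd)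
  simpa using this

theorem not_modEq_one_of_orderOf_eq (hl : l.Prime) (hl3 : 3 < l) (hr : r ≠ 0)
    (hord : orderOf (p : ZMod (l ^ r)) = (l ^ r).totient / 2) : ¬ p ≡ 1 [MOD l] := by
  intro h
  obtain ⟨s, rfl⟩ := Nat.exists_eq_add_one_of_ne_zero hr
  have hpos : 0 < l ^ s := pow_pos hl.pos s
  have hl_ne : l ≠ 4 := by rintro rfl; norm_num at hl
  have hlt : l ^ s * 4 ≤ l ^ s * (l - 1) := Nat.mul_le_mul_left _ (by omega)
  have hle := Nat.le_of_dvd hpos (orderOf_dvd_pow_of_modEq_one (s := s) h)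
  rw [hord, Nat.totient_prime_pow_succ hl, Nat.div_le_iff_le_mul_add_pred two_pos] at hle
  omega

theorem four_dvd_sum_range_pow {f : ℕ} (hp : p % 4 = 3) (hf : Even f) :
    4 ∣ ∑ i ∈ Finset.range f, p ^ i := by
  have hp' : (p : ZMod 4) = -1 := (ZMod.natCast_eq_natCast_iff' p 3 4).mpr hp
  rw [← ZMod.natCast_eq_zero_iff, Nat.cast_sum]
  simp only [Nat.cast_pow, hp', neg_one_geom_sum, if_pos hf]

theorem prime_pow_dvd_sum_range_pow {f : ℕ} (hl : l.Prime) (h1 : ¬ p ≡ 1 [MOD l])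
    (hf : orderOf (p : ZMod (l ^ r)) ∣ f) : l ^ r ∣ ∑ i ∈ Finset.range f, p ^ i := by
  have hcop : IsCoprime ((l ^ r : ℕ) : ℤ) (p - 1) := by
    rw [Nat.cast_pow]
    refine ((Nat.prime_iff_prime_int.mp hl).coprime_iff_not_dvd.mpr fun h ↦ h1 ?_).pow_left
    exact (Nat.modEq_iff_dvd.mpr (by exact_mod_cast h)).symm
  rw [← Int.natCast_dvd_natCast]
  refine hcop.dvd_of_dvd_mul_right ?_
  push_cast
  rw [geom_sum_mul]
  have : (((p : ℤ) ^ f - 1 : ℤ) : ZMod (l ^ r)) = 0 := by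
    push_cast
    rw [orderOf_dvd_iff_pow_eq_one.mp hf, sub_self]
  exact_mod_cast (ZMod.intCast_zmod_eq_zero_iff_dvd _ _).mp this

end IndexTwo

/-! ### The class number formula for `ℚ(√-l)` -/

section IdealCount

open Ideal

variable (S : Type*) [CommRing S] [IsDedekindDomain S] [Module.Free ℤ S]

/-- The number of ideals of absolute norm `n`, that is, the `n`-th coefficient of the Dedekind zeta
function when `S` is a ring of integers. -/
noncomputable def idealCount (n : ℕ) : ℕ := Nat.card {I : Ideal S // absNorm I = n}

theorem idealCount_one : idealCount S 1 = 1 := by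
  simp only [idealCount, absNorm_eq_one_iff, Nat.card_unique]

variable {S}

theorem card_absNorm_eq_mul_and_dvd {P : Ideal S} (hP : absNorm P ≠ 0) (n : ℕ) :
    Nat.card {I : Ideal S // absNorm I = absNorm P * n ∧ P ∣ I} = idealCount S n := by
  have hP0 : P ≠ 0 := by
    rintro rfl
    exact hP absNorm_bot
  refine (Nat.card_congr (Equiv.ofBijective (fun I : {I : Ideal S // absNorm I = n} ↦
    ⟨P * I.1, by rw [map_mul, I.2], dvd_mul_right _ _⟩) ⟨fun I J h ↦ ?_, ?_⟩)).symm
  · exact Subtype.ext (mul_left_cancel₀ hP0 (congrArg Subtype.val h))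
  · rintro ⟨_, hI, J, rfl⟩
    rw [map_mul] at hI
    exact ⟨⟨J, Nat.eq_of_mul_eq_mul_left (Nat.pos_of_ne_zero hP) hI⟩, rfl⟩

theorem idealCount_absNorm_mul {P : Ideal S} (hP : absNorm P ≠ 0) {n : ℕ}
    (h : ∀ I : Ideal S, absNorm I = absNorm P * n → P ∣ I) :
    idealCount S (absNorm P * n) = idealCount S n := by
  rw [← card_absNorm_eq_mul_and_dvd hP n, idealCount]
  exact Nat.card_congr (Equiv.subtypeEquivRight fun I ↦ ⟨fun hI ↦ ⟨hI, h I hI⟩, And.left⟩)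

omit [IsDedekindDomain S] [Module.Free ℤ S] in
theorem sup_eq_top_of_natCast_mem_of_coprime {I J : Ideal S} {m n : ℕ} (hmn : m.Coprime n)
    (hm : (m : S) ∈ I) (hn : (n : S) ∈ J) : I ⊔ J = ⊤ := by
  obtain ⟨a, b, hab⟩ := Nat.isCoprime_iff_coprime.mpr hmn
  rw [eq_top_iff_one, show (1 : S) = a * m + b * n by
    exact_mod_cast congrArg (Int.cast : ℤ → S) hab.symm]
  exact Submodule.add_mem_sup (I.mul_mem_left _ hm) (J.mul_mem_left _ hn)

theorem mul_sup_span_absNorm_of_coprime {I J : Ideal S} (h : (absNorm I).Coprime (absNorm J)) :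
    I * J ⊔ span {(absNorm I : S)} = I := by
  rw [mul_sup_eq_of_coprime_right (sup_eq_top_of_natCast_mem_of_coprime h.symm (absNorm_mem J)
    (mem_span_singleton_self _)), sup_eq_left]
  exact span_singleton_absNorm_le I

theorem sup_span_mul_sup_span {K : Ideal S} {m n : ℕ} (hmn : m.Coprime n)
    (hK : absNorm K = m * n) : (K ⊔ span {(m : S)}) * (K ⊔ span {(n : S)}) = K := by
  have htop : K ⊔ span {(m : S)} ⊔ (K ⊔ span {(n : S)}) = ⊤ :=
    sup_eq_top_of_natCast_mem_of_coprime hmn (mem_sup_right (mem_span_singleton_self _))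
      (mem_sup_right (mem_span_singleton_self _))
  have hmem : (m * n : S) ∈ K := by exact_mod_cast hK ▸ absNorm_mem K
  apply le_antisymm
  · rw [Ideal.sup_mul, Ideal.mul_sup (span _), span_singleton_mul_span_singleton]
    exact sup_le mul_le_left (sup_le mul_le_right ((span_singleton_le_iff_mem _).mpr hmem))
  · calc K = K * (K ⊔ span {(m : S)} ⊔ (K ⊔ span {(n : S)})) := by rw [htop, mul_top]
      _ = (K ⊔ span {(m : S)}) * K ⊔ K * (K ⊔ span {(n : S)}) := by
        rw [Ideal.mul_sup, mul_comm K]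
      _ ≤ _ := sup_le (mul_mono_right le_sup_left) (mul_mono_left le_sup_left)

section Finite

variable [Module.Finite ℤ S]

theorem absNorm_sup_span_of_coprime {K : Ideal S} {m n : ℕ} (hmn : m.Coprime n)
    (hK : absNorm K = m * n) : absNorm (K ⊔ span {(m : S)}) = m := by
  have hdvd (k : ℕ) : absNorm (K ⊔ span {(k : S)}) ∣ k ^ Module.finrank ℤ S :=
    absNorm_span_natCast (S := S) k ▸ absNorm_dvd_absNorm_of_le le_sup_right
  have hmul : absNorm (K ⊔ span {(m : S)}) * absNorm (K ⊔ span {(n : S)}) = m * n := by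
    rw [← map_mul, sup_span_mul_sup_span hmn hK, hK]
  apply Nat.dvd_antisymm
  · exact (Nat.Coprime.of_dvd_left (hdvd m) (hmn.pow_left _)).dvd_of_dvd_mul_right
      (hmul ▸ dvd_mul_right _ _)
  · exact (Nat.Coprime.of_dvd_right (hdvd n) (hmn.pow_right _)).dvd_of_dvd_mul_right
      (hmul ▸ dvd_mul_right _ _)

theorem idealCount_mul_of_coprime {m n : ℕ} (hmn : m.Coprime n) :
    idealCount S (m * n) = idealCount S m * idealCount S n := by
  rw [idealCount, idealCount, idealCount, ← Nat.card_prod]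
  refine (Nat.card_congr (Equiv.ofBijective
    (fun x : {I : Ideal S // absNorm I = m} × {J : Ideal S // absNorm J = n} ↦
      ⟨x.1.1 * x.2.1, by rw [map_mul, x.1.2, x.2.2]⟩) ⟨?_, ?_⟩)).symm
  · rintro ⟨⟨I, hI⟩, J, hJ⟩ ⟨⟨I', hI'⟩, J', hJ'⟩ h
    have h : I * J = I' * J' := congrArg Subtype.val h
    simp only [Prod.mk.injEq, Subtype.mk.injEq]
    constructor
    · rw [← mul_sup_span_absNorm_of_coprime (I := I) (J := J) (by rwa [hI, hJ]), h, hI, ← hI',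
        mul_sup_span_absNorm_of_coprime (by rwa [hI', hJ'])]
    · rw [← mul_sup_span_absNorm_of_coprime (I := J) (J := I) (by rw [hI, hJ]; exact hmn.symm),
        mul_comm, h, mul_comm, hJ, ← hJ',
        mul_sup_span_absNorm_of_coprime (by rw [hI', hJ']; exact hmn.symm)]
  · rintro ⟨K, hK⟩
    exact ⟨⟨⟨_, absNorm_sup_span_of_coprime hmn hK⟩,
      ⟨_, absNorm_sup_span_of_coprime hmn.symm (hK.trans (mul_comm m n))⟩⟩,
      Subtype.ext (sup_span_mul_sup_span hmn hK)⟩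

section Quadratic

variable (hS : Module.finrank ℤ S = 2) {p : ℕ} (hp : p.Prime)
include hS hp

theorem absNorm_eq_or_eq_span_of_isMaximal {M : Ideal S} (hM : M.IsMaximal) (hpM : (p : S) ∈ M) :
    absNorm M = p ∨ M = span {(p : S)} := by
  have hle : span {(p : S)} ≤ M := (span_singleton_le_iff_mem _).mpr hpM
  obtain ⟨Q, hQ⟩ := dvd_iff_le.mpr hle
  have hnorm : p ^ 2 = absNorm M * absNorm Q := by
    rw [← map_mul, ← hQ, absNorm_span_natCast, hS]
  obtain ⟨j, hj, hMj⟩ := (Nat.dvd_prime_pow hp).mp (Dvd.intro _ hnorm.symm)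
  interval_cases j
  · exact absurd (absNorm_eq_one_iff.mp (by rwa [pow_zero] at hMj)) hM.ne_top
  · exact .inl (by rwa [pow_one] at hMj)
  · rw [hMj] at hnorm
    have hQ1 : absNorm Q = 1 := Nat.eq_of_mul_eq_mul_left (pow_pos hp.pos 2) (by omega)
    exact .inr (by rw [hQ, absNorm_eq_one_iff.mp hQ1, mul_top])

theorem exists_dvd_absNorm_eq_or_span_dvd {I : Ideal S} {k : ℕ} (hI : absNorm I = p ^ (k + 1)) :
    (∃ M, absNorm M = p ∧ M ∣ I) ∨ ((span {(p : S)}).IsMaximal ∧ span {(p : S)} ∣ I) := by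
  obtain ⟨M, hM, hpM, hMI⟩ :=
    exists_isMaximal_dvd_of_dvd_absNorm' hp I (hI ▸ dvd_pow_self p k.succ_ne_zero)
  have hpM : (p : S) ∈ M := by
    have : (p : ℤ) ∈ M.under ℤ := hpM ▸ mem_span_singleton_self _
    simpa using this
  obtain h | rfl := absNorm_eq_or_eq_span_of_isMaximal hS hp hM hpM
  · exact .inl ⟨M, h, hMI⟩
  · exact .inr ⟨hM, hMI⟩

theorem exists_dvd_of_absNorm_eq {P I : Ideal S} {k : ℕ} (hP : absNorm P = p)
    (hI : absNorm I = p ^ (k + 1)) : ∃ M, absNorm M = p ∧ M ∣ I := by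
  refine (exists_dvd_absNorm_eq_or_span_dvd hS hp hI).resolve_right fun ⟨hmax, _⟩ ↦ ?_
  have hPtop : P ≠ ⊤ := by
    rintro rfl
    exact hp.one_lt.ne (absNorm_top.symm.trans hP)
  have h := hmax.eq_of_le hPtop ((span_singleton_le_iff_mem _).mpr (hP ▸ absNorm_mem P))
  rw [← h, absNorm_span_natCast, hS] at hP
  nlinarith [hp.two_le]

theorem idealCount_prime_pow_add_two (h : idealCount S p = 0) (k : ℕ) :
    idealCount S (p ^ (k + 2)) = idealCount S (p ^ k) := by
  have : IsAddTorsionFree S := .of_isTorsionFree ℤ _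
  have : CharZero S := .of_isAddTorsionFree S S
  have : Finite {I : Ideal S // absNorm I = p} := finite_setOfPred_absNorm_eq p
  have hempty : IsEmpty {I : Ideal S // absNorm I = p} := Finite.card_eq_zero_iff.mp h
  have hnorm : absNorm (span {(p : S)}) = p ^ 2 := by rw [absNorm_span_natCast, hS]
  rw [add_comm, pow_add, ← hnorm]
  refine idealCount_absNorm_mul (by simp [hnorm, hp.ne_zero]) fun I hI ↦ ?_
  rw [hnorm, ← pow_add, add_comm] at hI
  exact ((exists_dvd_absNorm_eq_or_span_dvd hS hp hI).resolve_left
    fun ⟨M, hM, _⟩ ↦ hempty.false ⟨M, hM⟩).2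

theorem idealCount_prime_pow_of_eq_one (h : idealCount S p = 1) (k : ℕ) :
    idealCount S (p ^ k) = 1 := by
  obtain ⟨hs, ⟨P, hP⟩⟩ := Nat.card_eq_one_iff_unique.mp h
  induction k with
  | zero => rw [pow_zero, idealCount_one]
  | succ k ih =>
    rw [pow_succ', ← hP, idealCount_absNorm_mul (hP ▸ hp.ne_zero), hP, ih]
    intro I hI
    rw [hP, ← pow_succ'] at hI
    obtain ⟨M, hM, hMI⟩ := exists_dvd_of_absNorm_eq hS hp hP hI
    obtain rfl : M = P := congrArg Subtype.val (hs.elim ⟨M, hM⟩ ⟨P, hP⟩)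
    exact hMI

theorem eq_pow_of_absNorm_eq_of_not_dvd {P Q : Ideal S} (hQ : absNorm Q = p)
    (h : ∀ M : Ideal S, absNorm M = p → M = P ∨ M = Q) {k : ℕ} {I : Ideal S}
    (hI : absNorm I = p ^ k) (hPI : ¬ P ∣ I) : I = Q ^ k := by
  induction k generalizing I with
  | zero => rw [absNorm_eq_one_iff.mp hI, pow_zero, one_eq_top]
  | succ k ih =>
    obtain ⟨M, hM, J, rfl⟩ := exists_dvd_of_absNorm_eq hS hp hQ hI
    obtain rfl | rfl := h M hM
    · exact absurd (dvd_mul_right _ _) hPI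
    · rw [map_mul, hM, pow_succ'] at hI
      rw [ih (Nat.eq_of_mul_eq_mul_left hp.pos hI) fun hd ↦ hPI (hd.mul_left M), pow_succ']

theorem idealCount_prime_pow_of_eq_two (h : idealCount S p = 2) (k : ℕ) :
    idealCount S (p ^ k) = k + 1 := by
  obtain ⟨⟨P, hP⟩, ⟨Q, hQ⟩, hne, huniv⟩ := Nat.card_eq_two_iff.mp h
  have hall (M : Ideal S) (hM : absNorm M = p) : M = P ∨ M = Q := by
    simpa using huniv.ge (Set.mem_univ ⟨M, hM⟩)
  have hPirr : Irreducible P := irreducible_of_irreducible_absNorm (hP ▸ hp)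
  have hQirr : Irreducible Q := irreducible_of_irreducible_absNorm (hQ ▸ hp)
  have hPQ (k : ℕ) : ¬ P ∣ Q ^ k := fun hd ↦ hne <| Subtype.ext <| associated_iff_eq.mp <|
    (hPirr.dvd_irreducible_iff_associated hQirr).mp (hPirr.prime.dvd_of_dvd_pow hd)
  have : IsAddTorsionFree S := .of_isTorsionFree ℤ _
  have : CharZero S := .of_isAddTorsionFree S S
  induction k with
  | zero => rw [pow_zero, idealCount_one]
  | succ k ih =>
    have hset : {I : Ideal S | absNorm I = p ^ (k + 1)} =
        insert (Q ^ (k + 1)) {I : Ideal S | absNorm I = p ^ (k + 1) ∧ P ∣ I} := by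
      ext I
      simp only [Set.mem_ofPred_eq, Set.mem_insert_iff]
      constructor
      · exact fun hI ↦ or_iff_not_imp_right.mpr fun hd ↦
          eq_pow_of_absNorm_eq_of_not_dvd hS hp hQ hall hI fun hPI ↦ hd ⟨hI, hPI⟩
      · rintro (rfl | hI)
        · rw [map_pow, hQ]
        · exact hI.1
    have hcard := congrArg Set.ncard hset
    rw [Set.ncard_insert_of_notMem (fun hI ↦ hPQ _ hI.2)
      ((finite_setOfPred_absNorm_eq (S := S) (p ^ (k + 1))).subset fun I hI ↦ hI.1)] at hcard
    have hdvd := card_absNorm_eq_mul_and_dvd (hP ▸ hp.ne_zero) (p ^ k)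
    rw [hP, ← pow_succ', ih] at hdvd
    exact hcard.trans (congrArg (· + 1) hdvd)

theorem idealCount_prime_pow {ε : ℤ} (hε : ε = 0 ∨ ε = 1 ∨ ε = -1)
    (h : (idealCount S p : ℤ) = 1 + ε) (k : ℕ) :
    (idealCount S (p ^ k) : ℤ) = ∑ i ∈ Finset.range (k + 1), ε ^ i := by
  obtain rfl | rfl | rfl := hε
  · rw [idealCount_prime_pow_of_eq_one hS hp (by omega)]
    simp [Finset.sum_range_succ']
  · rw [idealCount_prime_pow_of_eq_two hS hp (by omega)]
    simp
  · induction k using Nat.twoStepInduction with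
    | zero => simp [idealCount_one]
    | one => simp [h, Finset.sum_range_succ]
    | more k ih _ =>
      rw [idealCount_prime_pow_add_two hS hp (by omega), ih, Finset.sum_range_succ _ (k + 2),
        Finset.sum_range_succ _ (k + 1)]
      ring

end Quadratic

end Finite

theorem sum_divisors_mul_of_coprime {R : Type*} [CommSemiring R] (χ : ℕ →*₀ R) {m n : ℕ}
    (hmn : m.Coprime n) : ∑ d ∈ (m * n).divisors, χ d =
      (∑ d ∈ m.divisors, χ d) * ∑ d ∈ n.divisors, χ d := by
  let X : ArithmeticFunction R := ⟨χ, map_zero χ⟩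
  have hX : X.IsMultiplicative := ⟨map_one χ, fun _ ↦ map_mul χ _ _⟩
  have := (ArithmeticFunction.isMultiplicative_zeta.natCast.mul hX).map_mul_of_coprime hmn
  rwa [ArithmeticFunction.coe_zeta_mul_apply, ArithmeticFunction.coe_zeta_mul_apply,
    ArithmeticFunction.coe_zeta_mul_apply] at this

theorem idealCount_eq_sum_divisors [Module.Finite ℤ S] (hS : Module.finrank ℤ S = 2)
    {χ : ℕ →*₀ ℤ} (hχ : ∀ p : ℕ, p.Prime → χ p = 0 ∨ χ p = 1 ∨ χ p = -1)
    (h : ∀ p : ℕ, p.Prime → (idealCount S p : ℤ) = 1 + χ p) {n : ℕ} (hn : n ≠ 0) :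
    (idealCount S n : ℤ) = ∑ d ∈ n.divisors, χ d := by
  induction n using Nat.recOnPosPrimePosCoprime with
  | zero => exact absurd rfl hn
  | one => simp [idealCount_one]
  | prime_pow p k hp _ =>
    rw [Nat.sum_divisors_prime_pow hp, idealCount_prime_pow hS hp (hχ p hp) (h p hp)]
    simp only [map_pow]
  | coprime a b ha hb hab iha ihb =>
    rw [idealCount_mul_of_coprime hab, Nat.cast_mul, iha (by omega), ihb (by omega),
      sum_divisors_mul_of_coprime χ hab]

end IdealCount

section DirichletSeriesAtOne

open Filter Topology

theorem abs_rpow_neg_sub_rpow_neg_le {s x : ℝ} (hs1 : 1 ≤ s) (hs2 : s ≤ 2) (hx : 1 ≤ x) :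
    |x ^ (-s) - (x + 1) ^ (-s)| ≤ 2 / x ^ 2 := by
  have hx0 : 0 < x := by linarith
  have hle : (x + 1) ^ (-s) ≤ x ^ (-s) :=
    Real.rpow_le_rpow_of_nonpos hx0 (by linarith) (by linarith)
  have hinv : x ^ (-s) ≤ 1 / x := by
    simpa [Real.rpow_neg_one] using Real.rpow_le_rpow_of_exponent_le hx (neg_le_neg hs1)
  have hratio : x / (x + 1) = 1 + -1 / (x + 1) := by field_simp; ring
  have hbernoulli : 1 - (x / (x + 1)) ^ s ≤ 2 / x := by
    have h : -1 ≤ -1 / (x + 1) := by rw [le_div_iff₀] <;> linarith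
    have hb := one_add_mul_self_le_rpow_one_add h hs1
    have hs : s / (x + 1) ≤ 2 / x := by gcongr; linarith
    rw [← hratio, neg_div, mul_neg, mul_one_div] at hb
    linarith
  have hquot : (x + 1) ^ (-s) = x ^ (-s) * (x / (x + 1)) ^ s := by
    rw [Real.div_rpow hx0.le (by linarith), Real.rpow_neg hx0.le, Real.rpow_neg (by linarith)]
    field_simp
  have hratio_pow : (x / (x + 1)) ^ s ≤ 1 :=
    Real.rpow_le_one (by positivity) ((div_le_one (by linarith)).mpr (by linarith)) (by linarith)
  rw [abs_of_nonneg (sub_nonneg.mpr hle)]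
  calc x ^ (-s) - (x + 1) ^ (-s) = x ^ (-s) * (1 - (x / (x + 1)) ^ s) := by rw [hquot]; ring
    _ ≤ 1 / x * (2 / x) :=
      mul_le_mul hinv hbernoulli (sub_nonneg.mpr hratio_pow) (by positivity)
    _ = 2 / x ^ 2 := by field_simp

variable {E : Type*} [NormedAddCommGroup E] [NormedSpace ℝ E]

/-- The general term of the series obtained from `∑ g i / (i + 1) ^ s` by partial summation. -/
noncomputable def partialSummationTerm (g : ℕ → E) (s : ℝ) (i : ℕ) : E :=
  ((i + 1 : ℝ) ^ (-s) - (i + 2 : ℝ) ^ (-s)) • ∑ j ∈ Finset.range (i + 1), g j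

variable {g : ℕ → E} {C : ℝ} (hg : ∀ n, ‖∑ i ∈ Finset.range n, g i‖ ≤ C)

include hg in
theorem norm_partialSummationTerm_le {s : ℝ} (hs1 : 1 ≤ s) (hs2 : s ≤ 2) (i : ℕ) :
    ‖partialSummationTerm g s i‖ ≤ 2 / ((i : ℝ) + 1) ^ 2 * C := by
  have h := abs_rpow_neg_sub_rpow_neg_le hs1 hs2 (by simp : (1 : ℝ) ≤ i + 1)
  rw [add_assoc, one_add_one_eq_two] at h
  rw [partialSummationTerm, norm_smul]
  exact mul_le_mul h (hg _) (norm_nonneg _) (by positivity)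

theorem summable_two_div_succ_sq_mul (C : ℝ) :
    Summable fun i : ℕ ↦ 2 / ((i : ℝ) + 1) ^ 2 * C := by
  have h := (summable_nat_add_iff 1).mpr (Real.summable_one_div_nat_pow.mpr one_lt_two)
  simpa [div_eq_mul_inv] using (h.mul_left 2).mul_right C

theorem sum_range_succ_rpow_smul (g : ℕ → E) (s : ℝ) (n : ℕ) :
    ∑ i ∈ Finset.range n, (i + 1 : ℝ) ^ (-s) • g i =
      (n + 1 : ℝ) ^ (-s) • ∑ i ∈ Finset.range n, g i +
        ∑ i ∈ Finset.range n, partialSummationTerm g s i := by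
  induction n with
  | zero => simp
  | succ n ih =>
    rw [Finset.sum_range_succ, ih, Finset.sum_range_succ (partialSummationTerm g s),
      partialSummationTerm, Finset.sum_range_succ g]
    push_cast
    rw [add_assoc (n : ℝ) 1 1, one_add_one_eq_two]
    module

variable [CompleteSpace E]

include hg in
theorem tendsto_sum_range_rpow_smul {s : ℝ} (hs1 : 1 ≤ s) (hs2 : s ≤ 2) :
    Tendsto (fun n ↦ ∑ i ∈ Finset.range n, (i + 1 : ℝ) ^ (-s) • g i) atTop
      (𝓝 (∑' i, partialSummationTerm g s i)) := by
  have hsum := Summable.of_norm_bounded (summable_two_div_succ_sq_mul C)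
    (norm_partialSummationTerm_le hg hs1 hs2)
  have hboundary : Tendsto (fun n : ℕ ↦ (n + 1 : ℝ) ^ (-s) • ∑ i ∈ Finset.range n, g i) atTop
      (𝓝 0) := by
    refine Tendsto.zero_smul_isBoundedUnder_le ?_
      (isBoundedUnder_of ⟨C, fun n ↦ hg n⟩)
    exact (tendsto_rpow_neg_atTop (by linarith)).comp
      (tendsto_atTop_add_const_right _ 1 tendsto_natCast_atTop_atTop)
  simpa only [sum_range_succ_rpow_smul, zero_add] using
    hboundary.add hsum.hasSum.tendsto_sum_nat

include hg in
theorem tendsto_tsum_partialSummationTerm :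
    Tendsto (fun s ↦ ∑' i, partialSummationTerm g s i) (𝓝[>] 1)
      (𝓝 (∑' i, partialSummationTerm g 1 i)) := by
  refine tendsto_tsum_of_dominated_convergence (summable_two_div_succ_sq_mul C) (fun i ↦ ?_) ?_
  · have h : ContinuousAt (fun s ↦ partialSummationTerm g s i) 1 := by
      have (x : ℝ) (hx : 0 < x) : ContinuousAt (fun s : ℝ ↦ x ^ (-s)) 1 :=
        continuousAt_const.rpow continuousAt_neg (.inl hx.ne')
      exact ((this _ (by positivity)).sub (this _ (by positivity))).smul continuousAt_const
    exact h.tendsto.mono_left nhdsWithin_le_nhds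
  · filter_upwards [Ioc_mem_nhdsGT one_lt_two] with s hs i
    exact norm_partialSummationTerm_le hg hs.1.le hs.2 i

end DirichletSeriesAtOne

section LSeriesAtOne

open Filter Topology

variable {c : ℕ → ℂ} {C : ℝ}

theorem summable_rpow_smul {g : ℕ → ℂ} (hg : ∀ n, ‖g n‖ ≤ C) {s : ℝ} (hs : 1 < s) :
    Summable fun i : ℕ ↦ (i + 1 : ℝ) ^ (-s) • g i := by
  have h := (summable_nat_add_iff 1).mpr (Real.summable_nat_rpow.mpr (neg_lt_neg hs))
  refine Summable.of_norm_bounded (h.mul_right C) fun i ↦ ?_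
  rw [norm_smul, Nat.cast_succ, Real.norm_of_nonneg (by positivity)]
  exact mul_le_mul_of_nonneg_left (hg i) (by positivity)

theorem LSeries_eq_tsum_rpow_smul (hc : ∀ n, ‖c n‖ ≤ C) {s : ℝ} (hs : 1 < s) :
    LSeries c s = ∑' i : ℕ, (i + 1 : ℝ) ^ (-s) • c (i + 1) := by
  have hterm (i : ℕ) : LSeries.term c s (i + 1) = (i + 1 : ℝ) ^ (-s) • c (i + 1) := by
    rw [LSeries.term_of_ne_zero i.succ_ne_zero, Real.rpow_neg (by positivity), real_smul,
      ofReal_inv, ofReal_cpow (by positivity)]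
    push_cast
    rw [div_eq_inv_mul]
  have hsum : Summable fun n ↦ LSeries.term c s n := by
    rw [← summable_nat_add_iff 1]
    simpa only [hterm] using summable_rpow_smul (fun n ↦ hc (n + 1)) hs
  rw [LSeries, hsum.tsum_eq_zero_add, LSeries.term_zero, zero_add]
  exact tsum_congr hterm

theorem exists_tendsto_sum_range_div_and_LSeries (hc : ∀ n, ‖c n‖ ≤ C)
    (hsum : ∀ n, ‖∑ i ∈ Finset.range n, c (i + 1)‖ ≤ C) :
    ∃ S : ℂ, Tendsto (fun n ↦ ∑ i ∈ Finset.range n, c i / i) atTop (𝓝 S) ∧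
      Tendsto (fun s : ℝ ↦ LSeries c s) (𝓝[>] 1) (𝓝 S) := by
  refine ⟨∑' i, partialSummationTerm (fun i ↦ c (i + 1)) 1 i, ?_, ?_⟩
  · rw [← tendsto_add_atTop_iff_nat 1]
    refine (tendsto_sum_range_rpow_smul hsum le_rfl one_le_two).congr fun n ↦ ?_
    rw [Finset.sum_range_succ', Nat.cast_zero, div_zero, add_zero]
    refine Finset.sum_congr rfl fun i _ ↦ ?_
    rw [Real.rpow_neg_one, real_smul]
    push_cast
    rw [div_eq_inv_mul]
  · refine (tendsto_tsum_partialSummationTerm hsum).congr' ?_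
    filter_upwards [Ioc_mem_nhdsGT one_lt_two] with s hs
    rw [LSeries_eq_tsum_rpow_smul hc hs.1]
    exact tendsto_nhds_unique (tendsto_sum_range_rpow_smul hsum hs.1.le hs.2)
      (summable_rpow_smul (fun n ↦ hc (n + 1)) hs.1).hasSum.tendsto_sum_nat

end LSeriesAtOne

section PeriodicLValue

open Filter Topology

variable {N : ℕ} [NeZero N] {Φ : ZMod N → ℂ}

theorem sum_range_mul_eq_zero (hΦ : ∑ a, Φ a = 0) (m : ℕ) :
    ∑ i ∈ Finset.range (N * m), Φ i = 0 := by
  have hperiod : ∑ i ∈ Finset.range N, Φ i = 0 := by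
    rw [← hΦ]
    refine Finset.sum_nbij' (fun n ↦ (n : ZMod N)) ZMod.val ?_ ?_ ?_ ?_ ?_ <;>
      simp +contextual [ZMod.val_lt, Nat.mod_eq_of_lt]
  induction m with
  | zero => simp
  | succ m ih => rw [Nat.mul_succ, Finset.sum_range_add, ih, zero_add]; simpa using hperiod

theorem exists_norm_sum_range_le (hΦ : ∑ a, Φ a = 0) :
    ∃ C, (∀ a, ‖Φ a‖ ≤ C) ∧ ∀ n, ‖∑ i ∈ Finset.range n, Φ (i + 1 : ℕ)‖ ≤ C := by
  obtain ⟨B, hB⟩ := (Set.finite_range fun a ↦ ‖Φ a‖).bddAbove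
  have hB (a : ZMod N) : ‖Φ a‖ ≤ B := hB ⟨a, rfl⟩
  have hB0 : 0 ≤ B := (norm_nonneg _).trans (hB 0)
  have hpartial (n : ℕ) : ‖∑ i ∈ Finset.range n, Φ i‖ ≤ N * B := by
    rw [← Nat.div_add_mod n N, Finset.sum_range_add, sum_range_mul_eq_zero hΦ, zero_add]
    refine (norm_sum_le_of_le _ fun i _ ↦ hB _).trans ?_
    rw [Finset.sum_const, Finset.card_range, nsmul_eq_mul]
    gcongr
    exact (Nat.mod_lt n (NeZero.pos N)).le
  refine ⟨N * B + B, fun a ↦ (hB a).trans (le_add_of_nonneg_left (by positivity)), fun n ↦ ?_⟩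
  have h := Finset.sum_range_succ' (fun i : ℕ ↦ Φ i) n
  rw [← sub_eq_iff_eq_add] at h
  rw [← h]
  exact (norm_sub_le _ _).trans (add_le_add (hpartial _) (hB _))

theorem tendsto_sum_range_div_LFunction_one (hΦ : ∑ a, Φ a = 0) :
    Tendsto (fun n ↦ ∑ i ∈ Finset.range n, Φ i / i) atTop (𝓝 (ZMod.LFunction Φ 1)) := by
  obtain ⟨C, hC, hsum⟩ := exists_norm_sum_range_le hΦ
  obtain ⟨S, hS, hS'⟩ :=
    exists_tendsto_sum_range_div_and_LSeries (c := fun n ↦ Φ n) (fun n ↦ hC n) hsum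
  have hcont : Tendsto (fun s : ℝ ↦ ZMod.LFunction Φ s) (𝓝[>] 1) (𝓝 (ZMod.LFunction Φ 1)) := by
    have h := ((ZMod.differentiable_LFunction_of_sum_zero hΦ).continuous.comp
      continuous_ofReal).tendsto 1
    simpa [Function.comp_def] using h.mono_left nhdsWithin_le_nhds
  have hlimit := hcont.congr' (by
    filter_upwards [self_mem_nhdsWithin] with s hs
    exact ZMod.LFunction_eq_LSeries Φ (by simpa using hs))
  rwa [tendsto_nhds_unique hlimit hS']

end PeriodicLValue

section StdAddChar

open Filter Topology ZMod

theorem arg_one_sub_exp {θ : ℝ} (h0 : 0 < θ) (h1 : θ < 2 * Real.pi) :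
    Complex.arg (1 - Complex.exp (θ * I)) = (θ - Real.pi) / 2 := by
  have hsin : 0 < Real.sin (θ / 2) := Real.sin_pos_of_pos_of_lt_pi (by linarith) (by linarith)
  have hpolar : 1 - Complex.exp (θ * I) = ((2 * Real.sin (θ / 2) : ℝ) : ℂ) *
      (Complex.cos ((θ - Real.pi) / 2 : ℝ) + Complex.sin ((θ - Real.pi) / 2 : ℝ) * I) := by
    obtain ⟨t, rfl⟩ : ∃ t, θ = 2 * t := ⟨θ / 2, by ring⟩
    rw [Complex.exp_mul_I, sub_div, mul_div_cancel_left₀ t two_ne_zero, ← ofReal_cos, ← ofReal_sin,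
      ← ofReal_cos, ← ofReal_sin, Real.cos_sub_pi_div_two, Real.sin_sub_pi_div_two,
      Real.cos_two_mul, Real.cos_sq', Real.sin_two_mul]
    push_cast
    ring
  rw [hpolar, Complex.arg_mul_cos_add_sin_mul_I (by linarith)
    ⟨by linarith [Real.pi_pos], by linarith⟩]

variable {N : ℕ} [NeZero N]

theorem one_sub_stdAddChar_mem_slitPlane {a : ZMod N} (ha : a ≠ 0) :
    1 - stdAddChar a ∈ slitPlane := by
  have hne : stdAddChar a ≠ 1 := by
    rwa [← AddChar.map_zero_eq_one (stdAddChar (N := N)), injective_stdAddChar.ne_iff]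
  refine .inl (sub_pos.mpr (lt_of_le_of_ne ?_ fun hre ↦ hne ?_))
  · exact (Complex.re_le_norm _).trans_eq (by simp)
  · have hnorm := Complex.sq_norm (stdAddChar a)
    rw [AddChar.norm_apply, Complex.normSq_apply, hre] at hnorm
    exact Complex.ext hre (by simpa using hnorm)

theorem arg_one_sub_stdAddChar {a : ZMod N} (ha : a ≠ 0) :
    Complex.arg (1 - stdAddChar a) = Real.pi * a.val / N - Real.pi / 2 := by
  have hval : (0 : ℝ) < a.val := by
    exact_mod_cast Nat.pos_of_ne_zero ((ZMod.val_ne_zero a).mpr ha)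
  have hlt : (a.val : ℝ) < N := by exact_mod_cast a.val_lt
  have hN : (0 : ℝ) < N := hval.trans hlt
  have hexp : stdAddChar a = Complex.exp ((2 * Real.pi * a.val / N : ℝ) * I) := by
    conv_lhs => rw [← ZMod.natCast_zmod_val a, ← Int.cast_natCast, stdAddChar_coe]
    push_cast
    ring_nf
  rw [hexp, arg_one_sub_exp (by positivity)]
  · ring
  · rw [div_lt_iff₀ hN]
    gcongr

-- Both sides are the limit of `∑ e(a n) x ^ n / n` as `x → 1⁻`: by Abel's theorem on the left,
-- and because this power series is `-log (1 - e(a) x)` on the right.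
theorem LFunction_stdAddChar_mul_one {a : ZMod N} (ha : a ≠ 0) :
    ZMod.LFunction (fun k ↦ stdAddChar (a * k)) 1 = -Complex.log (1 - stdAddChar a) := by
  have hsum : ∑ k, stdAddChar (a * k) = 0 := by
    classical
    simpa [mul_comm, ha] using AddChar.sum_mulShift a (isPrimitive_stdAddChar N)
  have habel := tendsto_tsum_powerSeries_nhdsWithin_lt (tendsto_sum_range_div_LFunction_one hsum)
  rw [tendsto_map'_iff] at habel
  have hlog : Tendsto (fun x : ℝ ↦ -Complex.log (1 - stdAddChar a * x)) (𝓝[<] 1)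
      (𝓝 (-Complex.log (1 - stdAddChar a))) := by
    have h : ContinuousAt (fun x : ℝ ↦ -Complex.log (1 - stdAddChar a * x)) 1 :=
      (ContinuousAt.clog (by fun_prop) (by simpa using one_sub_stdAddChar_mem_slitPlane ha)).neg
    simpa using h.tendsto.mono_left (nhdsWithin_le_nhds (s := Set.Iio 1))
  refine tendsto_nhds_unique habel (hlog.congr' ?_)
  filter_upwards [Ioo_mem_nhdsLT (zero_lt_one' ℝ)] with x hx
  have hnorm : ‖stdAddChar a * x‖ < 1 := by
    rw [norm_mul, AddChar.norm_apply, one_mul, norm_real, Real.norm_of_nonneg hx.1.le]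
    exact hx.2
  rw [← (hasSum_taylorSeries_neg_log hnorm).tsum_eq]
  refine tsum_congr fun n ↦ ?_
  rw [mul_comm a, ← nsmul_eq_mul, AddChar.map_nsmul_eq_pow, mul_pow]
  ring

theorem sum_mul_log_one_sub_stdAddChar {Φ : ZMod N → ℂ} (hΦ : Φ.Odd) :
    ∑ a, Φ a * Complex.log (1 - stdAddChar a) = Real.pi * I / N * ∑ a, Φ a * a.val := by
  have hlog : ∑ a, Φ a * (Real.log ‖1 - stdAddChar a‖ : ℂ) = 0 := by
    refine (hΦ.mul_even fun a ↦ ?_).sum_eq_zero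
    rw [AddChar.map_neg_eq_conj, ← Complex.norm_conj]
    simp
  have harg (a : ZMod N) : Φ a * (Complex.arg (1 - stdAddChar a) : ℂ) =
      Real.pi / N * (Φ a * a.val) - Real.pi / 2 * Φ a := by
    obtain rfl | ha := eq_or_ne a 0
    · simp [hΦ.map_zero]
    · rw [arg_one_sub_stdAddChar ha]
      push_cast
      ring
  have hsplit (a : ZMod N) : Φ a * Complex.log (1 - stdAddChar a) =
      Φ a * (Real.log ‖1 - stdAddChar a‖ : ℂ) +
        I * (Φ a * (Complex.arg (1 - stdAddChar a) : ℂ)) := by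
    rw [Complex.log]
    ring
  simp only [hsplit, harg, Finset.sum_add_distrib, ← Finset.mul_sum, Finset.sum_sub_distrib,
    hlog, hΦ.sum_eq_zero]
  ring

theorem gaussSum_mul_LFunction_inv_one {χ : DirichletCharacter ℂ N} (hprim : χ.IsPrimitive)
    (hodd : χ.Odd) :
    gaussSum χ stdAddChar * χ⁻¹.LFunction 1 = -(Real.pi * I / N * ∑ a, χ a * (a.val : ℂ)) := by
  have hdft : ZMod.LFunction (ZMod.dft χ) 1 = -(gaussSum χ stdAddChar * χ⁻¹.LFunction 1) := by
    have hinv : χ⁻¹ (-1) = -1 := by rw [MulChar.inv_apply_eq_inv', hodd, inv_neg, inv_one]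
    have hfun : ZMod.dft χ = fun k ↦ -gaussSum χ stdAddChar * χ⁻¹ k := by
      ext k
      rw [hprim.fourierTransform_eq_inv_mul_gaussSum, ← neg_one_mul k, map_mul, hinv]
      ring
    rw [hfun, DirichletCharacter.LFunction, ZMod.LFunction, ZMod.LFunction]
    simp only [mul_assoc, ← Finset.mul_sum]
    ring
  have hterm (a : ZMod N) : χ a * HurwitzZeta.expZeta (toAddCircle (-a)) 1 =
      -(χ a * Complex.log (1 - stdAddChar (-a))) := by
    obtain rfl | ha := eq_or_ne a 0
    · simp [hodd.to_fun.map_zero]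
    · rw [← LFunction_stdAddChar_eq_expZeta _ _ (.inl (neg_ne_zero.mpr ha)),
        LFunction_stdAddChar_mul_one (neg_ne_zero.mpr ha), mul_neg]
  have hneg : ∑ a, χ a * Complex.log (1 - stdAddChar (-a)) =
      -∑ a, χ a * Complex.log (1 - stdAddChar a) := by
    rw [← Finset.sum_neg_distrib]
    exact Fintype.sum_equiv (Equiv.neg _) _ _ fun a ↦ by simp [hodd.to_fun a]
  rw [← neg_eq_iff_eq_neg, ← hdft, LFunction_dft χ (.inl hodd.to_fun.map_zero)]
  simp only [hterm, Finset.sum_neg_distrib, hneg, neg_neg,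
    sum_mul_log_one_sub_stdAddChar hodd.to_fun]

end StdAddChar

section ZetaMul

open Filter Topology

variable {N : ℕ} [NeZero N] {χ : DirichletCharacter ℂ N}

theorem LSeries_zetaMul {s : ℂ} (hs : 1 < s.re) :
    LSeries χ.zetaMul s = riemannZeta s * χ.LFunction s := by
  have hfun : LSeries (toArithmeticFunction (χ ·)) s = LSeries (χ ·) s :=
    LSeries_congr (fun hn ↦ by simp [toArithmeticFunction, hn]) s
  have hsum : LSeriesSummable (toArithmeticFunction (χ ·)) s :=
    LSeriesSummable_of_bounded_of_one_lt_re (m := 1)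
      (fun n hn ↦ by simpa [toArithmeticFunction, hn] using χ.norm_le_one n) hs
  rw [χ.LFunction_eq_LSeries hs, ← hfun, ← ArithmeticFunction.LSeries_zeta_eq_riemannZeta hs]
  exact ArithmeticFunction.LSeries_mul' (ArithmeticFunction.LSeriesSummable_zeta_iff.mpr hs) hsum

theorem tendsto_sub_one_mul_LSeries_zetaMul (hχ : χ ≠ 1) :
    Tendsto (fun s : ℝ ↦ ((s : ℂ) - 1) * LSeries χ.zetaMul s) (𝓝[>] 1) (𝓝 (χ.LFunction 1)) := by
  have hzeta : Tendsto (fun s : ℝ ↦ ((s : ℂ) - 1) * riemannZeta s) (𝓝[>] 1) (𝓝 1) := by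
    refine riemannZeta_residue_one.comp (tendsto_nhdsWithin_iff.mpr ⟨?_, ?_⟩)
    · exact (continuous_ofReal.tendsto' 1 1 ofReal_one).mono_left nhdsWithin_le_nhds
    · filter_upwards [self_mem_nhdsWithin] with s hs
      simpa using (ne_of_gt hs : s ≠ 1)
  have hL : Tendsto (fun s : ℝ ↦ χ.LFunction s) (𝓝[>] 1) (𝓝 (χ.LFunction 1)) := by
    have h := ((DirichletCharacter.differentiable_LFunction hχ).continuous.comp
      continuous_ofReal).tendsto 1
    simpa [Function.comp_def] using h.mono_left nhdsWithin_le_nhds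
  rw [← one_mul (χ.LFunction 1)]
  refine (hzeta.mul hL).congr' ?_
  filter_upwards [self_mem_nhdsWithin] with s hs
  rw [LSeries_zetaMul (by simpa using hs), mul_assoc]

end ZetaMul

section LegendreChar

variable {l : ℕ} [Fact l.Prime]

/-- The Legendre symbol modulo `l` as a complex-valued Dirichlet character. -/
noncomputable def legendreChar (l : ℕ) [Fact l.Prime] : DirichletCharacter ℂ l :=
  (quadraticChar (ZMod l)).ringHomComp (Int.castRingHom ℂ)

theorem legendreChar_natCast (n : ℕ) : legendreChar l n = legendreSym l n := by
  simp [legendreChar, legendreSym]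

theorem isQuadratic_legendreChar : (legendreChar l).IsQuadratic :=
  (quadraticChar_isQuadratic (ZMod l)).comp _

theorem legendreChar_ne_one (hl2 : l ≠ 2) : legendreChar l ≠ 1 :=
  (MulChar.ringHomComp_ne_one_iff Int.cast_injective).mpr
    (quadraticChar_ne_one (by rwa [ZMod.ringChar_zmod_n]))

theorem isPrimitive_legendreChar (hl2 : l ≠ 2) : (legendreChar l).IsPrimitive :=
  ((Nat.dvd_prime Fact.out).mp (legendreChar l).conductor_dvd_level).resolve_left
    (mt DirichletCharacter.eq_one_iff_conductor_eq_one.mpr (legendreChar_ne_one hl2))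

theorem odd_legendreChar (hl4 : l % 4 = 3) : (legendreChar l).Odd := by
  have h := legendreSym_neg_one_of_mod_four_eq_three hl4
  rw [legendreSym, Int.cast_neg, Int.cast_one] at h
  simp [DirichletCharacter.Odd, legendreChar, h]

theorem sum_legendreChar_mul_val :
    ∑ a : ZMod l, legendreChar l a * (a.val : ℂ) = legendreMoment l := by
  rw [legendreMoment, Int.cast_sum]
  symm
  refine Finset.sum_nbij' (fun n ↦ (n : ZMod l)) ZMod.val ?_ ?_ ?_ ?_ ?_ <;>
    simp +contextual [ZMod.val_lt, Nat.mod_eq_of_lt, legendreChar_natCast]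

theorem sq_LFunction_legendreChar_one_mul (hl4 : l % 4 = 3) :
    (legendreChar l).LFunction 1 ^ 2 * l = (Real.pi / l * legendreMoment l) ^ 2 := by
  have hl2 : l ≠ 2 := by omega
  have hL := gaussSum_mul_LFunction_inv_one (isPrimitive_legendreChar hl2) (odd_legendreChar hl4)
  rw [isQuadratic_legendreChar.inv, sum_legendreChar_mul_val] at hL
  have hgauss : gaussSum (legendreChar l) ZMod.stdAddChar ^ 2 =
      legendreChar l (-1) * Fintype.card (ZMod l) :=
    gaussSum_sq (legendreChar_ne_one hl2) isQuadratic_legendreChar (ZMod.isPrimitive_stdAddChar l)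
  rw [odd_legendreChar hl4, ZMod.card] at hgauss
  have hsq := congrArg (· ^ 2) hL
  simp only [mul_pow, hgauss, neg_sq] at hsq
  linear_combination -hsq - (Real.pi / l * legendreMoment l : ℂ) ^ 2 * Complex.I_sq

end LegendreChar

section QuadraticBasis

open Module NumberField

theorem regulator_eq_one_of_rank_eq_zero {K : Type*} [Field K] [NumberField K]
    (h : Units.rank K = 0) : Units.regulator K = 1 := by
  classical
  rw [Units.regulator_eq_det', Matrix.det_eq_one_of_card_eq_zero, abs_one]
  rw [← Fintype.card_congr (Units.equivFinRank K), Fintype.card_fin, h]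

/-- The `ℤ`-basis `b` of the ring `S` has the shape `1, θ` with `θ² = θ - m`, so that `S` is the
quadratic order of discriminant `1 - 4 * m`. -/
structure IsQuadraticBasis {S : Type*} [CommRing S] (b : Basis (Fin 2) ℤ S) (m : ℕ) : Prop where
  apply_zero : b 0 = 1
  apply_one_mul_self : b 1 * b 1 = b 1 - m

namespace IsQuadraticBasis

section Ring

variable {S : Type*} [CommRing S] {b : Basis (Fin 2) ℤ S} {m : ℕ}

theorem exists_eq (hb : IsQuadraticBasis b m) (x : S) : ∃ a c : ℤ, x = a + c * b 1 :=
  ⟨b.repr x 0, b.repr x 1, by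
    conv_lhs => rw [← b.sum_repr x]
    simp [hb.apply_zero]⟩

theorem leftMulMatrix_eq (hb : IsQuadraticBasis b m) (a c : ℤ) :
    Algebra.leftMulMatrix b (a + c * b 1) = !![a, -(c * m); c, a + c] := by
  have repr_eq (u v : ℤ) : b.repr (u + v * b 1) = Finsupp.single 0 u + Finsupp.single 1 v := by
    rw [show (u + v * b 1 : S) = u • b 0 + v • b 1 by simp [hb.apply_zero],
      map_add, map_smul, map_smul, b.repr_self, b.repr_self]
    simp
  have hmul : (a + c * b 1) * b 1 = ((-(c * m) : ℤ) : S) + ((a + c : ℤ) : S) * b 1 := by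
    push_cast
    linear_combination (c : S) * hb.apply_one_mul_self
  ext i j
  rw [Algebra.leftMulMatrix_eq_repr_mul]
  fin_cases j
  · fin_cases i <;> simp [hb.apply_zero, repr_eq]
  · fin_cases i <;> simp [hmul, repr_eq, -Int.cast_neg, -Int.cast_add, -Int.cast_mul]

theorem trace_eq (hb : IsQuadraticBasis b m) (a c : ℤ) :
    Algebra.trace ℤ S (a + c * b 1) = 2 * a + c := by
  rw [Algebra.trace_eq_matrix_trace b, hb.leftMulMatrix_eq, Matrix.trace_fin_two_of]
  ring

theorem norm_eq (hb : IsQuadraticBasis b m) (a c : ℤ) :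
    Algebra.norm ℤ (a + c * b 1) = a ^ 2 + a * c + m * c ^ 2 := by
  rw [Algebra.norm_eq_matrix_det b, hb.leftMulMatrix_eq, Matrix.det_fin_two_of]
  ring

theorem algebraDiscr_eq (hb : IsQuadraticBasis b m) : Algebra.discr ℤ b = 1 - 4 * m := by
  have h00 := hb.trace_eq 1 0
  have h01 := hb.trace_eq 0 1
  have h11 := hb.trace_eq (-m) 1
  have hsq : b 1 * b 1 = -m + b 1 := by rw [hb.apply_one_mul_self]; ring
  simp only [Int.cast_one, Int.cast_zero, zero_mul, one_mul, add_zero, zero_add, Int.cast_neg,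
    Int.cast_natCast, ← hsq] at h00 h01 h11
  simp only [Algebra.discr_def, Matrix.det_fin_two, Algebra.traceMatrix_apply,
    Algebra.traceForm_apply, hb.apply_zero, mul_one, one_mul, h00, h01, h11]
  ring

theorem eq_one_or_eq_neg_one_of_isUnit (hb : IsQuadraticBasis b m) (hm : 2 ≤ m) {x : S}
    (hx : IsUnit x) : x = 1 ∨ x = -1 := by
  obtain ⟨a, c, rfl⟩ := hb.exists_eq x
  have hnorm := Int.isUnit_iff.mp (hx.map (Algebra.norm ℤ))
  rw [hb.norm_eq] at hnorm
  have hm' : (2 : ℤ) ≤ m := by exact_mod_cast hm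
  have hc : c = 0 := by
    by_contra hc
    have : 0 < c ^ 2 := by positivity
    rcases hnorm with h | h <;> nlinarith [hm', sq_nonneg (2 * a + c)]
  subst hc
  have ha : a ^ 2 = 1 ∨ a ^ 2 = -1 := by simpa using hnorm
  rcases sq_eq_one_iff.mp (ha.resolve_right (by nlinarith [sq_nonneg a])) with rfl | rfl <;> simp

end Ring

section NumberField

variable {K : Type*} [Field K] [NumberField K] {b : Basis (Fin 2) ℤ (𝓞 K)} {m : ℕ}

theorem discr_eq (hb : IsQuadraticBasis b m) : discr K = 1 - 4 * m := by
  rw [← discr_eq_discr K b, hb.algebraDiscr_eq]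

theorem isTotallyComplex (hb : IsQuadraticBasis b m) (hm : m ≠ 0) : IsTotallyComplex K := by
  rw [isTotallyComplex_iff]
  intro w
  rw [← InfinitePlace.not_isReal_iff_isComplex, InfinitePlace.isReal_iff,
    ComplexEmbedding.isReal_iff]
  intro hreal
  obtain ⟨x, hx⟩ := Complex.conj_eq_iff_real.mp (RingHom.congr_fun hreal (b 1))
  have hroot := congrArg (fun y : 𝓞 K ↦ w.embedding y) hb.apply_one_mul_self
  simp only [map_mul, map_sub, map_natCast, hx] at hroot
  have hroot' : x * x = x - m := by exact_mod_cast hroot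
  have : (1 : ℝ) ≤ m := by exact_mod_cast Nat.one_le_iff_ne_zero.mpr hm
  nlinarith [sq_nonneg (x - 1)]

theorem torsionOrder_eq_two (hb : IsQuadraticBasis b m) (hm : 2 ≤ m) :
    Units.torsionOrder K = 2 := by
  classical
  have hunits (u : (𝓞 K)ˣ) : u ∈ ({1, -1} : Finset (𝓞 K)ˣ) := by
    rw [Finset.mem_insert, Finset.mem_singleton]
    simpa only [← Units.val_inj, Units.val_one, Units.val_neg] using
      hb.eq_one_or_eq_neg_one_of_isUnit hm u.isUnit
  have hle : Units.torsionOrder K ≤ 2 := calc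
    Units.torsionOrder K ≤ Nat.card ({1, -1} : Finset (𝓞 K)ˣ) :=
      Nat.card_le_card_of_injective (fun u ↦ ⟨u.1, hunits u.1⟩) fun u v h ↦ by simpa using h
    _ ≤ 2 := (Nat.card_eq_finsetCard _).trans_le Finset.card_le_two
  obtain ⟨k, hk⟩ := Units.even_torsionOrder K
  have := Units.torsionOrder_pos K
  omega

theorem dedekindZeta_residue_eq (hb : IsQuadraticBasis b m) (hm : 2 ≤ m) :
    dedekindZeta_residue K = Real.pi * classNumber K / √(4 * m - 1) := by
  have hcomplex := hb.isTotallyComplex (by omega)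
  have hreal : InfinitePlace.nrRealPlaces K = 0 := IsTotallyComplex.nrRealPlaces_eq_zero K
  have hrank : finrank ℚ K = 2 := by
    rw [← RingOfIntegers.rank, finrank_eq_card_basis b, Fintype.card_fin]
  have hplaces := InfinitePlace.card_add_two_mul_card_eq_rank K
  have hcard : InfinitePlace.nrComplexPlaces K = 1 := by omega
  have hreg : Units.regulator K = 1 := regulator_eq_one_of_rank_eq_zero <| by
    rw [Units.rank, InfinitePlace.card_eq_nrRealPlaces_add_nrComplexPlaces, hreal, hcard]
  have habs : |((1 - 4 * m : ℤ) : ℝ)| = 4 * m - 1 := by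
    have : (2 : ℝ) ≤ m := by exact_mod_cast hm
    push_cast
    rw [abs_of_neg (by linarith)]
    ring
  rw [dedekindZeta_residue_def, hreal, hcard, hreg, hb.torsionOrder_eq_two hm, hb.discr_eq, habs]
  push_cast
  ring

end NumberField

end IsQuadraticBasis

end QuadraticBasis

section PrimeIdealCount

open Ideal

theorem absNorm_ker_ringHom_zmod {S : Type*} [CommRing S] [IsDedekindDomain S] [Module.Free ℤ S]
    {q : ℕ} (ψ : S →+* ZMod q) : absNorm (RingHom.ker ψ) = q := by
  rw [absNorm_apply, Submodule.cardQuot_apply]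
  exact (Nat.card_congr (RingHom.quotientKerEquivOfSurjective
    (ZMod.ringHom_surjective ψ)).toEquiv).trans (Nat.card_zmod q)

theorem ker_injective_ringHom_zmod {S : Type*} [CommRing S] {q : ℕ} :
    Function.Injective fun ψ : S →+* ZMod q ↦ RingHom.ker ψ := by
  intro φ ψ h
  ext x
  obtain ⟨n, hn⟩ := ZMod.intCast_surjective (φ x)
  have hmem : x - n ∈ RingHom.ker φ := by
    rw [RingHom.mem_ker, map_sub, map_intCast, hn, sub_self]
  rw [show RingHom.ker φ = RingHom.ker ψ from h, RingHom.mem_ker, map_sub, map_intCast, hn] at hmem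
  exact (sub_eq_zero.mp hmem).symm

theorem idealCount_prime_eq_card_ringHom (S : Type*) [CommRing S] [IsDedekindDomain S]
    [Module.Free ℤ S] {q : ℕ} (hq : q.Prime) : idealCount S q = Nat.card (S →+* ZMod q) := by
  refine (Nat.card_eq_of_bijective (fun ψ ↦ (⟨RingHom.ker ψ, absNorm_ker_ringHom_zmod ψ⟩ :
    {I : Ideal S // absNorm I = q})) ⟨fun φ ψ h ↦ ker_injective_ringHom_zmod
      (congrArg Subtype.val h), ?_⟩).symm
  rintro ⟨I, hI⟩
  have hcard : Nat.card (S ⧸ I) = q := by rw [← hI, absNorm_apply, Submodule.cardQuot_apply]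
  have : Finite (S ⧸ I) := Nat.finite_of_card_ne_zero (by rw [hcard]; exact hq.ne_zero)
  have := Fintype.ofFinite (S ⧸ I)
  let e := ZMod.ringEquivOfPrime (S ⧸ I) hq (by rw [← Nat.card_eq_fintype_card, hcard])
  refine ⟨(e.symm : S ⧸ I →+* ZMod q).comp (Ideal.Quotient.mk I), ?_⟩
  ext x
  simp [RingHom.mem_ker, Ideal.Quotient.eq_zero_iff_mem]

namespace IsQuadraticBasis

variable {S : Type*} [CommRing S] {b : Module.Basis (Fin 2) ℤ S} {m : ℕ}

theorem ringHom_apply_injective (hb : IsQuadraticBasis b m) {R : Type*} [CommRing R] :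
    Function.Injective fun φ : S →+* R ↦ φ (b 1) := by
  intro φ ψ h
  ext x
  obtain ⟨a, c, rfl⟩ := hb.exists_eq x
  simp [show φ (b 1) = ψ (b 1) from h]

theorem exists_ringHom_apply_eq (hb : IsQuadraticBasis b m) {R : Type*} [CommRing R] {r : R}
    (hr : r * r = r - m) : ∃ φ : S →+* R, φ (b 1) = r := by
  let φ := b.constr ℤ ![(1 : R), r]
  have hφ (a c : ℤ) : φ (a + c * b 1) = a + c * r := by
    rw [show (a + c * b 1 : S) = a • b 0 + c • b 1 by simp [hb.apply_zero], map_add, map_smul,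
      map_smul, b.constr_basis, b.constr_basis]
    simp
  have map_one : φ 1 = 1 := by simpa using hφ 1 0
  have map_mul (x y : S) : φ (x * y) = φ x * φ y := by
    obtain ⟨a, c, rfl⟩ := hb.exists_eq x
    obtain ⟨a', c', rfl⟩ := hb.exists_eq y
    have hxy : (a + c * b 1) * (a' + c' * b 1) =
        ((a * a' - m * c * c' : ℤ) : S) + ((a * c' + c * a' + c * c' : ℤ) : S) * b 1 := by
      push_cast
      linear_combination (c * c' : S) * hb.apply_one_mul_self
    rw [hxy, hφ, hφ, hφ]
    push_cast
    linear_combination -(c * c' : R) * hr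
  exact ⟨(AlgHom.ofLinearMap φ map_one map_mul : S →ₐ[ℤ] R), by simpa using hφ 0 1⟩

theorem card_ringHom (hb : IsQuadraticBasis b m) (R : Type*) [CommRing R] :
    Nat.card (S →+* R) = Nat.card {r : R // r * r = r - m} :=
  Nat.card_eq_of_bijective (fun φ ↦ ⟨φ (b 1), by
    rw [← map_mul, hb.apply_one_mul_self, map_sub, map_natCast]⟩)
    ⟨fun _ _ h ↦ hb.ringHom_apply_injective (congrArg Subtype.val h), fun r ↦
      (hb.exists_ringHom_apply_eq r.2).imp fun _ h ↦ Subtype.ext h⟩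

end IsQuadraticBasis

theorem legendreSym_two_of_mod_four_eq_three {l : ℕ} [Fact l.Prime] (hl4 : l % 4 = 3) :
    legendreSym l 2 = if l % 8 = 7 then 1 else -1 := by
  rw [legendreSym.at_two (by omega), ZMod.χ₈_nat_eq_if_mod_eight]
  split_ifs <;> omega

theorem legendreSym_neg_natCast_of_mod_four_eq_three {l q : ℕ} [Fact l.Prime] [Fact q.Prime]
    (hl4 : l % 4 = 3) (hq : q ≠ 2) : legendreSym q (-l) = legendreSym l q := by
  have hneg : legendreSym q (-1) = (-1) ^ (q / 2) := by
    rw [legendreSym.at_neg_one hq,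
      ZMod.χ₄_eq_neg_one_pow ((Fact.out : q.Prime).eq_two_or_odd.resolve_left hq)]
  rw [neg_eq_neg_one_mul, legendreSym.mul, hneg,
    legendreSym.quadratic_reciprocity' (p := l) (q := q) (by omega) hq, pow_mul,
    ZMod.neg_one_pow_div_two_of_three_mod_four hl4, ← mul_assoc, ← mul_pow, neg_one_mul, neg_neg,
    one_pow, one_mul]

theorem card_mul_self_eq_self_zmod_two : Nat.card {r : ZMod 2 // r * r = r - 0} = 2 := by
  rw [Nat.card_eq_fintype_card]
  decide

theorem card_mul_self_eq_sub_one_zmod_two : Nat.card {r : ZMod 2 // r * r = r - 1} = 0 := by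
  rw [Nat.card_eq_fintype_card]
  decide

theorem card_mul_self_eq_sub {l m q : ℕ} [Fact l.Prime] [Fact q.Prime] (hm : l + 1 = 4 * m) :
    (Nat.card {r : ZMod q // r * r = r - m} : ℤ) = 1 + legendreSym l q := by
  have hl4 : l % 4 = 3 := by omega
  rcases eq_or_ne q 2 with rfl | hq
  · rw [Nat.cast_ofNat, legendreSym_two_of_mod_four_eq_three hl4]
    rcases Nat.mod_two_eq_zero_or_one m with h | h
    · rw [if_pos (by omega), (ZMod.natCast_eq_zero_iff m 2).mpr (by omega),
        card_mul_self_eq_self_zmod_two]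
      rfl
    · rw [if_neg (by omega), (ZMod.natCast_eq_natCast_iff' m 1 2).mpr h, Nat.cast_one,
        card_mul_self_eq_sub_one_zmod_two]
      rfl
  have hlm : (l : ZMod q) + 1 = 4 * m := by exact_mod_cast congrArg (Nat.cast : ℕ → ZMod q) hm
  have h2 : (2 : ZMod q) ≠ 0 := Ring.two_ne_zero (by rwa [ZMod.ringChar_zmod_n])
  let completeSquare : {r : ZMod q // r * r = r - m} ≃ {x : ZMod q | x ^ 2 = (-l : ℤ)} :=
    { toFun r := ⟨2 * r.1 - 1, by
        rw [Set.mem_ofPred_eq]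
        push_cast
        linear_combination 4 * r.2 + hlm⟩
      invFun x := ⟨(x.1 + 1) / 2, by
        have := x.2
        rw [Set.mem_ofPred_eq] at this
        push_cast at this
        field_simp
        linear_combination this - hlm⟩
      left_inv r := by ext; simp; field_simp
      right_inv x := by ext; simp; field_simp; ring }
  have hsqrts := legendreSym.card_sqrts q hq (-l)
  rw [Set.toFinset_card, ← Nat.card_eq_fintype_card] at hsqrts
  rw [Nat.card_congr completeSquare, hsqrts,
    legendreSym_neg_natCast_of_mod_four_eq_three hl4 hq, add_comm]

end PrimeIdealCount

section ImaginaryQuadraticField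

open Module NumberField

theorem conj_sqrtNeg (l : ℕ) : starRingEnd ℂ (sqrtNeg l) = -sqrtNeg l := by
  simp [sqrtNeg]

/-- The generator `(1 + √-l) / 2` of the ring of integers of `ℚ(√-l)`, for squarefree
`l ≡ 3 (mod 4)`. -/
noncomputable def theta (l : ℕ) : ℂ := (1 + sqrtNeg l) / 2

theorem theta_mul_self {l m : ℕ} (hm : l + 1 = 4 * m) : theta l * theta l = theta l - m := by
  have hlm : (l : ℂ) + 1 = 4 * m := mod_cast hm
  rw [theta]
  linear_combination sqrtNeg_sq l / 4 - hlm / 4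

theorem isIntegral_theta {l : ℕ} (hl4 : l % 4 = 3) : IsIntegral ℤ (theta l) := by
  obtain ⟨m, hm⟩ : ∃ m, l + 1 = 4 * m := ⟨(l + 1) / 4, by omega⟩
  have hroot : theta l * (theta l - 1) = (-m : ℤ) := by
    push_cast
    linear_combination theta_mul_self hm
  refine ⟨X ^ 2 - X + C (m : ℤ), by monicity!, ?_⟩
  rw [eval₂_add, eval₂_sub, eval₂_X_pow, eval₂_X, eval₂_C, eq_intCast]
  push_cast at hroot ⊢
  linear_combination hroot

theorem add_mul_theta_eq (l : ℕ) (a b : ℂ) :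
    a + b * theta l = ((2 * a + b) + b * sqrtNeg l) / 2 := by
  rw [theta]
  ring

theorem four_mul_normSq_add_mul_theta (l : ℕ) (a b : ℤ) :
    4 * normSq (a + b * theta l) = (2 * a + b) ^ 2 + l * b ^ 2 := by
  have h : (4 * normSq (a + b * theta l) : ℂ) = (2 * a + b) ^ 2 + l * b ^ 2 := by
    rw [← mul_conj, add_mul_theta_eq, map_div₀, map_add, map_mul, conj_sqrtNeg]
    simp only [map_add, map_mul, map_ofNat, map_intCast]
    linear_combination -(b : ℂ) ^ 2 * sqrtNeg_sq l
  exact_mod_cast h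

theorem theta_mem_adjoin (l : ℕ) : theta l ∈ ℚ⟮sqrtNeg l⟯ :=
  div_mem (add_mem (one_mem _) (mem_adjoin_simple_self ℚ _)) (ofNat_mem _ 2)

theorem exists_rat_eq_add_mul_sqrtNeg {l : ℕ} {x : ℂ} (hx : x ∈ ℚ⟮sqrtNeg l⟯) :
    ∃ u v : ℚ, x = u + v * sqrtNeg l := by
  rw [← mem_toSubalgebra, adjoin_simple_toSubalgebra_of_isAlgebraic
    (isIntegral_sqrtNeg l).isAlgebraic] at hx
  induction hx using Algebra.adjoin_induction with
  | mem x hx => exact ⟨0, 1, by simpa using hx⟩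
  | algebraMap u => exact ⟨u, 0, by simp⟩
  | add x y _ _ hx hy =>
    obtain ⟨u, v, rfl⟩ := hx
    obtain ⟨s, t, rfl⟩ := hy
    exact ⟨u + s, v + t, by push_cast; ring⟩
  | mul x y _ _ hx hy =>
    obtain ⟨u, v, rfl⟩ := hx
    obtain ⟨s, t, rfl⟩ := hy
    refine ⟨u * s - l * v * t, u * t + v * s, ?_⟩
    push_cast
    linear_combination (v * t : ℂ) * sqrtNeg_sq l

theorem ratCast_add_mul_sqrtNeg_mem_adjoin (l : ℕ) (u v : ℚ) :
    (u + v * sqrtNeg l : ℂ) ∈ ℚ⟮sqrtNeg l⟯ :=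
  add_mem (SubfieldClass.ratCast_mem _ u)
    (mul_mem (SubfieldClass.ratCast_mem _ v) (mem_adjoin_simple_self ℚ _))

theorem conj_mem_adjoin_sqrtNeg {l : ℕ} {x : ℂ} (hx : x ∈ ℚ⟮sqrtNeg l⟯) :
    starRingEnd ℂ x ∈ ℚ⟮sqrtNeg l⟯ := by
  obtain ⟨u, v, rfl⟩ := exists_rat_eq_add_mul_sqrtNeg hx
  convert ratCast_add_mul_sqrtNeg_mem_adjoin l u (-v) using 1
  simp [conj_sqrtNeg]

theorem exists_rat_eq_add_conj_and_eq_mul_conj {l : ℕ} {x : ℂ} (hx : x ∈ ℚ⟮sqrtNeg l⟯) :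
    ∃ t n : ℚ, (t : ℂ) = x + starRingEnd ℂ x ∧ (n : ℂ) = x * starRingEnd ℂ x := by
  obtain ⟨u, v, rfl⟩ := exists_rat_eq_add_mul_sqrtNeg hx
  refine ⟨2 * u, u ^ 2 + l * v ^ 2, ?_, ?_⟩ <;>
    simp only [map_add, map_mul, map_ratCast, conj_sqrtNeg] <;> push_cast
  · ring
  · linear_combination (v : ℂ) ^ 2 * sqrtNeg_sq l

theorem exists_int_eq_of_isIntegral_ratCast {q : ℚ} (hq : IsIntegral ℤ (q : ℂ)) :
    ∃ n : ℤ, q = n := by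
  rw [← eq_ratCast (algebraMap ℚ ℂ),
    isIntegral_algebraMap_iff (algebraMap ℚ ℂ).injective] at hq
  exact (IsIntegrallyClosed.isIntegral_iff.mp hq).imp fun _ h ↦ h.symm

theorem isIntegral_conj {x : ℂ} (hx : IsIntegral ℤ x) : IsIntegral ℤ (starRingEnd ℂ x) :=
  hx.map (starRingEnd ℂ).toIntAlgHom

theorem exists_int_eq_of_squarefree_mul_sq {d : ℕ} (hd : Squarefree d) {w : ℚ} {k : ℤ}
    (h : d * w ^ 2 = k) : ∃ n : ℤ, w = n := by
  have hnum : (w.num : ℚ) = w * w.den := (Rat.mul_den_eq_num w).symm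
  have hint : (d : ℤ) * w.num ^ 2 = k * w.den ^ 2 := by
    have : (d : ℚ) * w.num ^ 2 = k * w.den ^ 2 := by rw [hnum, mul_pow, ← mul_assoc, h]
    exact_mod_cast this
  have hdvd : ((w.den ^ 2 : ℕ) : ℤ) ∣ d :=
    w.isCoprime_num_den.symm.pow.dvd_of_dvd_mul_right ⟨k, by rw [hint, mul_comm]⟩
  have hden : w.den = 1 := Nat.isUnit_iff.mp (hd _ (by rw [← sq]; exact_mod_cast hdvd))
  exact ⟨w.num, (Rat.den_eq_one_iff w).mp hden |>.symm⟩

theorem even_sub_of_four_dvd_sq_add_mul_sq {l : ℕ} (hl4 : l % 4 = 3) {a b : ℤ}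
    (h : 4 ∣ a ^ 2 + l * b ^ 2) : Even (a - b) := by
  have hl : Odd (l : ℤ) := (Int.odd_coe_nat l).mpr (Nat.odd_iff.mpr (by omega))
  have heven : Even (a ^ 2 + l * b ^ 2) := even_iff_two_dvd.mpr (dvd_trans (by norm_num) h)
  simpa [Int.even_add, Int.even_sub, Int.even_mul, Int.even_pow, Int.not_even_iff_odd.mpr hl]
    using heven

theorem exists_int_eq_add_mul_theta {l : ℕ} (hl : Squarefree l) (hl4 : l % 4 = 3) {x : ℂ}
    (hxl : x ∈ ℚ⟮sqrtNeg l⟯) (hx : IsIntegral ℤ x) : ∃ a b : ℤ, x = a + b * theta l := by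
  obtain ⟨u, v, rfl⟩ := exists_rat_eq_add_mul_sqrtNeg hxl
  have hconj : starRingEnd ℂ (u + v * sqrtNeg l) = u - v * sqrtNeg l := by
    simp [conj_sqrtNeg, sub_eq_add_neg]
  have hxc := isIntegral_conj hx
  rw [hconj] at hxc
  have htrace : ((2 * u : ℚ) : ℂ) = u + v * sqrtNeg l + (u - v * sqrtNeg l) := by
    push_cast
    ring
  have hnorm : ((u ^ 2 + l * v ^ 2 : ℚ) : ℂ) = (u + v * sqrtNeg l) * (u - v * sqrtNeg l) := by
    push_cast
    linear_combination (v : ℂ) ^ 2 * sqrtNeg_sq l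
  obtain ⟨a, ha⟩ := exists_int_eq_of_isIntegral_ratCast (htrace ▸ hx.add hxc)
  obtain ⟨n, hn⟩ := exists_int_eq_of_isIntegral_ratCast (hnorm ▸ hx.mul hxc)
  obtain ⟨b, hb⟩ : ∃ b : ℤ, 2 * v = b :=
    exists_int_eq_of_squarefree_mul_sq (k := 4 * n - a ^ 2) hl <| by
      push_cast
      rw [← hn, ← ha]
      ring
  have hab : a ^ 2 + l * b ^ 2 = 4 * n := by
    have : (a : ℚ) ^ 2 + l * b ^ 2 = 4 * n := by rw [← ha, ← hb, ← hn]; ring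
    exact_mod_cast this
  obtain ⟨c, hc⟩ := even_sub_of_four_dvd_sq_add_mul_sq hl4 ⟨n, hab⟩
  refine ⟨c, b, ?_⟩
  have ha' : (2 * u : ℂ) = a := mod_cast congrArg (Rat.cast : ℚ → ℂ) ha
  have hb' : (2 * v : ℂ) = b := mod_cast congrArg (Rat.cast : ℚ → ℂ) hb
  have hc' : (a - b : ℂ) = c + c := mod_cast congrArg (Int.cast : ℤ → ℂ) hc
  rw [add_mul_theta_eq]
  linear_combination ha' / 2 + sqrtNeg l * hb' / 2 + hc' / 2

instance numberField_adjoin_sqrtNeg (l : ℕ) : NumberField ℚ⟮sqrtNeg l⟯ where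
  to_charZero := inferInstance
  to_finiteDimensional := adjoin.finiteDimensional (isIntegral_sqrtNeg l)

theorem isIntegral_ringOfIntegers {l : ℕ} (x : 𝓞 ℚ⟮sqrtNeg l⟯) :
    IsIntegral ℤ ((x : ℚ⟮sqrtNeg l⟯) : ℂ) :=
  x.2.map (algebraMap ℚ⟮sqrtNeg l⟯ ℂ).toIntAlgHom

theorem exists_ringOfIntegers_coe_eq {l : ℕ} {x : ℂ} (hxl : x ∈ ℚ⟮sqrtNeg l⟯)
    (hx : IsIntegral ℤ x) : ∃ y : 𝓞 ℚ⟮sqrtNeg l⟯, ((y : ℚ⟮sqrtNeg l⟯) : ℂ) = x :=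
  ⟨⟨⟨x, hxl⟩, (isIntegral_algHom_iff ((algebraMap ℚ⟮sqrtNeg l⟯ ℂ).toIntAlgHom)
    (algebraMap ℚ⟮sqrtNeg l⟯ ℂ).injective).mp hx⟩, rfl⟩

theorem coe_ringOfIntegers_injective (l : ℕ) :
    Function.Injective fun x : 𝓞 ℚ⟮sqrtNeg l⟯ ↦ ((x : ℚ⟮sqrtNeg l⟯) : ℂ) :=
  Subtype.val_injective.comp RingOfIntegers.coe_injective

theorem exists_isQuadraticBasis_sqrtNeg {l m : ℕ} (hl : Squarefree l) (hm : l + 1 = 4 * m) :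
    ∃ b : Basis (Fin 2) ℤ (𝓞 ℚ⟮sqrtNeg l⟯),
      IsQuadraticBasis b m ∧ ((b 1 : ℚ⟮sqrtNeg l⟯) : ℂ) = theta l := by
  have hl4 : l % 4 = 3 := by omega
  obtain ⟨t, ht⟩ := exists_ringOfIntegers_coe_eq (theta_mem_adjoin l) (isIntegral_theta hl4)
  have hli : LinearIndependent ℤ ![(1 : 𝓞 ℚ⟮sqrtNeg l⟯), t] := by
    rw [LinearIndependent.pair_iff]
    intro a b hab
    have h0 : (a + b * theta l : ℂ) = 0 := by
      rw [← ht]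
      simpa using congrArg (fun x : 𝓞 ℚ⟮sqrtNeg l⟯ ↦ ((x : ℚ⟮sqrtNeg l⟯) : ℂ)) hab
    have h4 := four_mul_normSq_add_mul_theta l a b
    rw [h0, map_zero, mul_zero] at h4
    have hform : 0 = (2 * a + b) ^ 2 + l * b ^ 2 := by exact_mod_cast h4
    have hl0 : (0 : ℤ) < l := by omega
    have hb : b = 0 := by
      by_contra hb
      nlinarith [sq_nonneg (2 * a + b), mul_pos hl0 (sq_pos_of_ne_zero hb)]
    subst hb
    exact ⟨by nlinarith, rfl⟩
  have hspan : ⊤ ≤ Submodule.span ℤ (Set.range ![(1 : 𝓞 ℚ⟮sqrtNeg l⟯), t]) := by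
    intro x _
    obtain ⟨a, b, hab⟩ := exists_int_eq_add_mul_theta hl hl4 (x : ℚ⟮sqrtNeg l⟯).2
      (isIntegral_ringOfIntegers x)
    rw [Matrix.range_cons_cons_empty, Submodule.mem_span_pair]
    refine ⟨a, b, coe_ringOfIntegers_injective l ?_⟩
    simp [ht, hab]
  refine ⟨Basis.mk hli hspan, ⟨by simp, coe_ringOfIntegers_injective l ?_⟩, by simp [ht]⟩
  simp [ht, theta_mul_self hm]

theorem norm_ringOfIntegers_eq_normSq {l : ℕ} (hl : Squarefree l) (hl4 : l % 4 = 3)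
    (x : 𝓞 ℚ⟮sqrtNeg l⟯) : (Algebra.norm ℤ x : ℝ) = normSq (x : ℚ⟮sqrtNeg l⟯) := by
  obtain ⟨m, hm⟩ : ∃ m, l + 1 = 4 * m := ⟨(l + 1) / 4, by omega⟩
  obtain ⟨b, hb, hb1⟩ := exists_isQuadraticBasis_sqrtNeg hl hm
  obtain ⟨a, c, rfl⟩ := hb.exists_eq x
  have hm' : (l : ℝ) + 1 = 4 * m := mod_cast hm
  have hx : ((a + c * b 1 : 𝓞 ℚ⟮sqrtNeg l⟯) : ℚ⟮sqrtNeg l⟯) = (a + c * theta l : ℂ) := by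
    simp [hb1]
  rw [hb.norm_eq, hx]
  push_cast
  linear_combination -four_mul_normSq_add_mul_theta l a c / 4 - c ^ 2 * hm' / 4

end ImaginaryQuadraticField

section ClassNumber

open Module NumberField

variable {l : ℕ} [Fact l.Prime]

theorem legendreSym_eq_zero_or_eq_one_or_eq_neg_one (a : ℤ) :
    legendreSym l a = 0 ∨ legendreSym l a = 1 ∨ legendreSym l a = -1 := by
  by_cases ha : (a : ZMod l) = 0
  · exact .inl ((legendreSym.eq_zero_iff l a).mpr ha)
  · exact .inr (legendreSym.eq_one_or_neg_one l ha)

theorem idealCount_eq_zetaMul_legendreChar {S : Type*} [CommRing S] [IsDedekindDomain S]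
    [Module.Free ℤ S] {b : Basis (Fin 2) ℤ S} {m : ℕ} (hb : IsQuadraticBasis b m)
    (hm : l + 1 = 4 * m) {n : ℕ}
    (hn : n ≠ 0) : (idealCount S n : ℂ) = (legendreChar l).zetaMul n := by
  have : Module.Finite ℤ S := .of_basis b
  let χ : ℕ →*₀ ℤ := (legendreSym.hom l).comp (Nat.castRingHom ℤ).toMonoidWithZeroHom
  have hcount : (idealCount S n : ℤ) = ∑ d ∈ n.divisors, legendreSym l d := by
    refine idealCount_eq_sum_divisors (χ := χ) ?_
      (fun q _ ↦ legendreSym_eq_zero_or_eq_one_or_eq_neg_one q) (fun q hq ↦ ?_) hn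
    · rw [finrank_eq_card_basis b, Fintype.card_fin]
    · have : Fact q.Prime := ⟨hq⟩
      rw [idealCount_prime_eq_card_ringHom S hq, hb.card_ringHom]
      exact card_mul_self_eq_sub hm
  have hcast := congrArg (Int.cast : ℤ → ℂ) hcount
  rw [Int.cast_natCast, Int.cast_sum] at hcast
  rw [hcast, DirichletCharacter.zetaMul, ArithmeticFunction.coe_zeta_mul_apply]
  refine Finset.sum_congr rfl fun d hd ↦ ?_
  simp [toArithmeticFunction, (Nat.pos_of_mem_divisors hd).ne', legendreChar_natCast]

theorem LFunction_legendreChar_one (hl4 : l % 4 = 3) (hl3 : 3 < l) :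
    (legendreChar l).LFunction 1 = (Real.pi * classNumSqrtNeg l / √l : ℝ) := by
  obtain ⟨m, hm⟩ : ∃ m, l + 1 = 4 * m := ⟨(l + 1) / 4, by omega⟩
  obtain ⟨b, hb, -⟩ := exists_isQuadraticBasis_sqrtNeg (Fact.out : l.Prime).squarefree hm
  have hl : (4 * m - 1 : ℝ) = l := by
    have : (l : ℝ) + 1 = 4 * m := mod_cast hm
    linarith
  have hdedekind := tendsto_sub_one_mul_dedekindZeta_nhdsGT ℚ⟮sqrtNeg l⟯
  have hzeta (s : ℝ) : dedekindZeta ℚ⟮sqrtNeg l⟯ s = LSeries (legendreChar l).zetaMul s :=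
    LSeries_congr (fun hn ↦ idealCount_eq_zetaMul_legendreChar hb hm hn) s
  simp only [hzeta] at hdedekind
  rw [hb.dedekindZeta_residue_eq (by omega), hl] at hdedekind
  exact tendsto_nhds_unique
    (tendsto_sub_one_mul_LSeries_zetaMul (legendreChar_ne_one (by omega))) hdedekind

theorem sq_legendreMoment (hl4 : l % 4 = 3) (hl3 : 3 < l) :
    legendreMoment l ^ 2 = (l * classNumSqrtNeg l) ^ 2 := by
  have hl0 : (0 : ℝ) < l := by positivity
  have h := sq_LFunction_legendreChar_one_mul hl4
  rw [LFunction_legendreChar_one hl4 hl3] at h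
  have hreal : (Real.pi * classNumSqrtNeg l / √l) ^ 2 * l =
      (Real.pi / l * legendreMoment l) ^ 2 := by exact_mod_cast h
  rw [div_pow, Real.sq_sqrt hl0.le, div_mul_cancel₀ _ hl0.ne'] at hreal
  have : (legendreMoment l : ℝ) ^ 2 = (l * classNumSqrtNeg l) ^ 2 := by
    field_simp at hreal
    linarith
  exact_mod_cast this

theorem odd_legendreMoment (hl4 : l % 4 = 3) : Odd (legendreMoment l) := by
  have hterm : ∀ a ∈ Finset.range l, ((legendreSym l a * a : ℤ) : ZMod 2) = (a : ZMod 2) := by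
    intro a ha
    rcases legendreSym_eq_zero_or_eq_one_or_eq_neg_one (l := l) a with h | h | h
    · rw [legendreSym.eq_zero_iff, Int.cast_natCast, ZMod.natCast_eq_zero_iff] at h
      simp [Nat.eq_zero_of_dvd_of_lt h (Finset.mem_range.mp ha)]
    · simp [h]
    · simp [h, ZMod.neg_eq_self_mod_two]
  have hsum : Odd (∑ a ∈ Finset.range l, a) := by
    obtain ⟨k, hk⟩ : ∃ k, l = 4 * k + 3 := ⟨l / 4, by omega⟩
    rw [Finset.sum_range_id, hk,
      show (4 * k + 3) * (4 * k + 3 - 1) = 2 * ((4 * k + 3) * (2 * k + 1)) by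
        rw [show 4 * k + 3 - 1 = 2 * (2 * k + 1) by omega]; ring, Nat.mul_div_cancel_left _ two_pos]
    exact Odd.mul ⟨2 * k + 1, by ring⟩ ⟨k, rfl⟩
  rw [← ZMod.intCast_eq_one_iff_odd, legendreMoment, Int.cast_sum, Finset.sum_congr rfl hterm,
    ← Nat.cast_sum, ZMod.natCast_eq_one_iff_odd]
  exact hsum

theorem odd_classNumSqrtNeg (hl4 : l % 4 = 3) (hl3 : 3 < l) : Odd (classNumSqrtNeg l) := by
  have h : Odd ((l * classNumSqrtNeg l : ℤ) ^ 2) :=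
    sq_legendreMoment hl4 hl3 ▸ (odd_legendreMoment hl4).pow
  rw [Int.odd_pow' two_ne_zero, Int.odd_mul] at h
  exact (Int.odd_coe_nat _).mp h.2

end ClassNumber

/-! ### Integers of `ℚ(√-l)` with given norm and valuation -/

section Valuation

open NumberField

variable {A : ValuationSubring ℂ} {p l : ℕ}

theorem dvd_of_valuation_intCast_lt_one (hp : p.Prime) (hA : A.valuation (p : ℂ) < 1) {n : ℤ}
    (hn : A.valuation (n : ℂ) < 1) : (p : ℤ) ∣ n := by
  by_contra hdvd
  obtain ⟨a, b, hab⟩ := ((Nat.prime_iff_prime_int.mp hp).coprime_iff_not_dvd).mpr hdvd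
  have hone : (1 : ℂ) = a * p + b * n := mod_cast congrArg (Int.cast : ℤ → ℂ) hab.symm
  have hle (c : ℤ) : A.valuation (c : ℂ) ≤ 1 :=
    valuation_le_one_of_isIntegral isIntegral_algebraMap
  have hlt : A.valuation (1 : ℂ) < 1 := by
    rw [hone]
    refine A.valuation.map_add_lt ?_ ?_ <;> rw [map_mul]
    · exact mul_lt_one_of_nonneg_of_lt_one_right (hle a) zero_le hA
    · exact mul_lt_one_of_nonneg_of_lt_one_right (hle b) zero_le hn
  exact hlt.ne (map_one _)

theorem exists_int_eq_of_valuation_le_one (hp : p.Prime) (hA : A.valuation (p : ℂ) < 1) {q : ℚ}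
    {k : ℕ} {n : ℤ} (hn : p ^ k * q = n) (hq : A.valuation (q : ℂ) ≤ 1) :
    ∃ n : ℤ, q = n := by
  induction k generalizing n with
  | zero => exact ⟨n, by simpa using hn⟩
  | succ k ih =>
    have hnC : (n : ℂ) = p ^ (k + 1) * q := mod_cast congrArg (Rat.cast : ℚ → ℂ) hn.symm
    have hlt : A.valuation (n : ℂ) < 1 := by
      rw [hnC, map_mul, map_pow]
      exact mul_lt_one_of_nonneg_of_lt_one_left zero_le (pow_lt_one₀ zero_le hA k.succ_ne_zero) hq
    obtain ⟨n', rfl⟩ := dvd_of_valuation_intCast_lt_one hp hA hlt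
    refine ih (n := n') (mul_left_cancel₀ (Nat.cast_ne_zero.mpr hp.ne_zero : (p : ℚ) ≠ 0) ?_)
    rw [← mul_assoc, ← pow_succ', hn]
    push_cast
    rfl

theorem isIntegral_of_valuation_le_one (hp : p.Prime) (hA : A.valuation (p : ℂ) < 1) {x : ℂ}
    (hxl : x ∈ ℚ⟮sqrtNeg l⟯) {k : ℕ} (hx : IsIntegral ℤ (p ^ k * x))
    (hv : A.valuation x ≤ 1) (hv' : A.valuation (starRingEnd ℂ x) ≤ 1) : IsIntegral ℤ x := by
  have hxc : IsIntegral ℤ (p ^ k * starRingEnd ℂ x) := by simpa using isIntegral_conj hx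
  obtain ⟨t, n, ht, hn⟩ := exists_rat_eq_add_conj_and_eq_mul_conj hxl
  have ht' : ((p ^ k * t : ℚ) : ℂ) = p ^ k * x + p ^ k * starRingEnd ℂ x := by
    push_cast
    rw [ht, mul_add]
  have hn' : ((p ^ (k + k) * n : ℚ) : ℂ) = (p ^ k * x) * (p ^ k * starRingEnd ℂ x) := by
    push_cast
    rw [hn]
    ring
  obtain ⟨t₀, ht₀⟩ := exists_int_eq_of_isIntegral_ratCast (ht' ▸ hx.add hxc)
  obtain ⟨n₀, hn₀⟩ := exists_int_eq_of_isIntegral_ratCast (hn' ▸ hx.mul hxc)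
  obtain ⟨s, rfl⟩ := exists_int_eq_of_valuation_le_one hp hA ht₀
    (ht ▸ A.valuation.map_add_le hv hv')
  obtain ⟨m, rfl⟩ := exists_int_eq_of_valuation_le_one hp hA hn₀
    (by rw [hn, map_mul]; exact mul_le_one' hv hv')
  rw [Rat.cast_intCast] at ht hn
  refine ⟨X ^ 2 - C s * X + C m, by monicity!, ?_⟩
  rw [eval₂_add, eval₂_sub, eval₂_mul, eval₂_X_pow, eval₂_X, eval₂_C, eval₂_C, eq_intCast,
    eq_intCast, ht, hn]
  ring

theorem eq_one_or_eq_neg_one_of_mul_conj_eq_one (hl : Squarefree l) (hl4 : l % 4 = 3)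
    (hl3 : 3 < l) {x : ℂ} (hxl : x ∈ ℚ⟮sqrtNeg l⟯) (hx : IsIntegral ℤ x)
    (h : x * starRingEnd ℂ x = 1) : x = 1 ∨ x = -1 := by
  obtain ⟨m, hm⟩ : ∃ m, l + 1 = 4 * m := ⟨(l + 1) / 4, by omega⟩
  obtain ⟨b, hb, -⟩ := exists_isQuadraticBasis_sqrtNeg hl hm
  obtain ⟨y, rfl⟩ := exists_ringOfIntegers_coe_eq hxl hx
  obtain ⟨y', hy'⟩ := exists_ringOfIntegers_coe_eq (conj_mem_adjoin_sqrtNeg hxl)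
    (isIntegral_conj hx)
  have hunit : IsUnit y :=
    IsUnit.of_mul_eq_one y' (coe_ringOfIntegers_injective l (by simpa [hy'] using h))
  exact (hb.eq_one_or_eq_neg_one_of_isUnit (by omega) hunit).imp (by rintro rfl; simp)
    (by rintro rfl; simp)

theorem eq_or_eq_neg_of_mul_conj_eq_pow (hp : p.Prime) (hA : A.valuation (p : ℂ) < 1)
    (hl : Squarefree l) (hl4 : l % 4 = 3) (hl3 : 3 < l) {x y : ℂ} {k : ℕ}
    (hxl : x ∈ ℚ⟮sqrtNeg l⟯) (hyl : y ∈ ℚ⟮sqrtNeg l⟯) (hx : IsIntegral ℤ x)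
    (hy : IsIntegral ℤ y) (hxx : x * starRingEnd ℂ x = p ^ k)
    (hyy : y * starRingEnd ℂ y = p ^ k) (hxy : A.valuation x = A.valuation y) :
    x = y ∨ x = -y := by
  have hp0 : (p : ℂ) ^ k ≠ 0 := pow_ne_zero k (Nat.cast_ne_zero.mpr hp.ne_zero)
  have hy0 : starRingEnd ℂ y ≠ 0 := right_ne_zero_of_mul (hyy ▸ hp0)
  set u : ℂ := x * starRingEnd ℂ y / p ^ k with hu
  have hpu : p ^ k * u = x * starRingEnd ℂ y := mul_div_cancel₀ _ hp0
  have huu : u * starRingEnd ℂ u = 1 := by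
    rw [hu, map_div₀, map_mul, conj_conj, map_pow, conj_natCast, div_mul_div_comm,
      div_eq_one_iff_eq (mul_ne_zero hp0 hp0)]
    linear_combination y * starRingEnd ℂ y * hxx + (p : ℂ) ^ k * hyy
  have hvu : A.valuation u = 1 := by
    rw [hu, map_div₀, map_mul, hxy, ← map_mul, hyy,
      div_self ((Valuation.ne_zero_iff _).mpr hp0)]
  have hvu' : A.valuation (starRingEnd ℂ u) = 1 := by
    simpa [hvu] using congrArg A.valuation huu
  have hul : u ∈ ℚ⟮sqrtNeg l⟯ :=
    div_mem (mul_mem hxl (conj_mem_adjoin_sqrtNeg hyl)) (pow_mem (_root_.natCast_mem _ p) k)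
  have huint : IsIntegral ℤ u := isIntegral_of_valuation_le_one hp hA hul
    (hpu ▸ hx.mul (isIntegral_conj hy)) hvu.le hvu'.le
  refine (eq_one_or_eq_neg_one_of_mul_conj_eq_one hl hl4 hl3 hul huint huu).imp ?_ ?_ <;>
    intro h1 <;> refine mul_right_cancel₀ hy0 ?_ <;> rw [← hpu, h1]
  · rw [mul_one, hyy]
  · rw [neg_mul, hyy, mul_neg_one]

/-- The prime of `ℚ(√-l)` induced by a valuation ring of `ℂ`: the algebraic integers of
valuation less than one. -/
noncomputable def valuationIdeal (A : ValuationSubring ℂ) (l : ℕ) : Ideal (𝓞 ℚ⟮sqrtNeg l⟯) :=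
  (IsLocalRing.maximalIdeal A).comap
    (((algebraMap ℚ⟮sqrtNeg l⟯ ℂ).comp (algebraMap (𝓞 ℚ⟮sqrtNeg l⟯) ℚ⟮sqrtNeg l⟯)).codRestrict
      A fun x ↦ (A.valuation_le_one_iff _).mp
        (valuation_le_one_of_isIntegral (isIntegral_ringOfIntegers x)))

theorem mem_valuationIdeal {x : 𝓞 ℚ⟮sqrtNeg l⟯} :
    x ∈ valuationIdeal A l ↔ A.valuation ((x : ℚ⟮sqrtNeg l⟯) : ℂ) < 1 :=
  A.valuation_lt_one_iff _

theorem valuationIdeal_ne_top : valuationIdeal A l ≠ ⊤ := by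
  simp [Ideal.ne_top_iff_one, mem_valuationIdeal]

theorem valuationIdeal_ne_bot (hp : p.Prime) (hA : A.valuation (p : ℂ) < 1) :
    valuationIdeal A l ≠ ⊥ := by
  refine (Submodule.ne_bot_iff _).mpr ⟨(p : 𝓞 ℚ⟮sqrtNeg l⟯), ?_, Nat.cast_ne_zero.mpr hp.ne_zero⟩
  simpa [mem_valuationIdeal] using hA

theorem absNorm_valuationIdeal (hp : p.Prime) (hA : A.valuation (p : ℂ) < 1)
    (hl : Squarefree l) (hl4 : l % 4 = 3) {w : 𝓞 ℚ⟮sqrtNeg l⟯} (hw : w ∈ valuationIdeal A l)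
    (hw' : A.valuation (starRingEnd ℂ (w : ℚ⟮sqrtNeg l⟯)) = 1) :
    (valuationIdeal A l).absNorm = p := by
  obtain ⟨m, hm⟩ : ∃ m, l + 1 = 4 * m := ⟨(l + 1) / 4, by omega⟩
  obtain ⟨b, -, -⟩ := exists_isQuadraticBasis_sqrtNeg hl hm
  have hpmem : (p : 𝓞 ℚ⟮sqrtNeg l⟯) ∈ valuationIdeal A l := by simpa [mem_valuationIdeal] using hA
  obtain ⟨Q, hQ⟩ := Ideal.dvd_span_singleton.mpr hpmem
  have hmul : (valuationIdeal A l).absNorm * Q.absNorm = p ^ 2 := by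
    rw [← map_mul, ← hQ, Ideal.absNorm_span_natCast, Module.finrank_eq_card_basis b,
      Fintype.card_fin]
  refine ((hp.mul_eq_prime_sq_iff ?_ ?_).mp hmul).1 <;> rw [Ne, Ideal.absNorm_eq_one_iff]
  · exact valuationIdeal_ne_top
  · rintro rfl
    rw [Ideal.mul_top] at hQ
    obtain ⟨y, rfl⟩ := Ideal.mem_span_singleton.mp (hQ ▸ hw)
    have hconj : starRingEnd ℂ ((p * y : 𝓞 ℚ⟮sqrtNeg l⟯) : ℚ⟮sqrtNeg l⟯) =
        p * starRingEnd ℂ (y : ℚ⟮sqrtNeg l⟯) := by simp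
    rw [hconj, map_mul] at hw'
    exact (mul_lt_one_of_nonneg_of_lt_one_left zero_le hA (valuation_le_one_of_isIntegral
      (isIntegral_conj (isIntegral_ringOfIntegers y)))).ne hw'

theorem isPrincipal_pow_classNumSqrtNeg {I : Ideal (𝓞 ℚ⟮sqrtNeg l⟯)} (hI : I ≠ ⊥) :
    (I ^ classNumSqrtNeg l).IsPrincipal := by
  have hmem := mem_nonZeroDivisors_of_ne_zero hI
  have hone : ClassGroup.mk0 ⟨I, hmem⟩ ^ classNumSqrtNeg l = 1 := pow_card_eq_one
  rw [← map_pow] at hone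
  exact (ClassGroup.mk0_eq_one_iff _).mp hone

theorem exists_mul_conj_eq_pow_classNumSqrtNeg (hp : p.Prime) (hA : A.valuation (p : ℂ) < 1)
    (hl : Squarefree l) (hl4 : l % 4 = 3) {w : ℂ} (hwl : w ∈ ℚ⟮sqrtNeg l⟯)
    (hw : IsIntegral ℤ w) (hv : A.valuation w < 1) (hv' : A.valuation (starRingEnd ℂ w) = 1) :
    ∃ α ∈ ℚ⟮sqrtNeg l⟯, IsIntegral ℤ α ∧ α * starRingEnd ℂ α = p ^ classNumSqrtNeg l ∧
      A.valuation (starRingEnd ℂ α) = 1 := by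
  obtain ⟨w, rfl⟩ := exists_ringOfIntegers_coe_eq hwl hw
  have hmem := mem_valuationIdeal.mpr hv
  obtain ⟨α, hα⟩ := isPrincipal_pow_classNumSqrtNeg (valuationIdeal_ne_bot (l := l) hp hA)
  rw [← Ideal.span] at hα
  have hnorm : (Algebra.norm ℤ α).natAbs = p ^ classNumSqrtNeg l := by
    rw [← Ideal.absNorm_span_singleton, ← hα, map_pow, absNorm_valuationIdeal hp hA hl hl4 hmem hv']
  have hnormSq := norm_ringOfIntegers_eq_normSq hl hl4 α
  have hpos : 0 ≤ Algebra.norm ℤ α := by exact_mod_cast hnormSq ▸ normSq_nonneg _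
  refine ⟨_, (α : ℚ⟮sqrtNeg l⟯).2, isIntegral_ringOfIntegers α, ?_, ?_⟩
  · rw [mul_conj, ← hnormSq, ← Int.natAbs_of_nonneg hpos, hnorm]
    push_cast
    rfl
  · have hint (x : 𝓞 ℚ⟮sqrtNeg l⟯) : A.valuation (starRingEnd ℂ (x : ℚ⟮sqrtNeg l⟯)) ≤ 1 :=
      valuation_le_one_of_isIntegral (isIntegral_conj (isIntegral_ringOfIntegers x))
    obtain ⟨y, hy⟩ := Ideal.mem_span_singleton.mp
      (hα ▸ Ideal.pow_mem_pow hmem (classNumSqrtNeg l))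
    have hwα : starRingEnd ℂ (w : ℚ⟮sqrtNeg l⟯) ^ classNumSqrtNeg l =
        starRingEnd ℂ (α : ℚ⟮sqrtNeg l⟯) * starRingEnd ℂ (y : ℚ⟮sqrtNeg l⟯) := by
      simpa using congrArg (fun x : 𝓞 ℚ⟮sqrtNeg l⟯ ↦ starRingEnd ℂ (x : ℚ⟮sqrtNeg l⟯)) hy
    have hval := congrArg A.valuation hwα
    rw [map_pow, hv', one_pow, map_mul] at hval
    exact le_antisymm (hint α) (hval ▸ mul_le_of_le_one_right zero_le (hint y))

end Valuation

section ImaginaryQuadraticGenerator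

variable {A B : ValuationSubring ℂ} {p l : ℕ}

theorem exists_eq_sq_or_eq_neg_sq [Fact l.Prime] (hp : p.Prime) (hA : A.valuation (p : ℂ) < 1)
    (hl4 : l % 4 = 3) (hl3 : 3 < l) {w : ℂ} (hwl : w ∈ ℚ⟮sqrtNeg l⟯) (hw : IsIntegral ℤ w)
    (hww : w * starRingEnd ℂ w = p ^ (2 * classNumSqrtNeg l))
    (hv : A.valuation w = A.valuation (p : ℂ) ^ (2 * classNumSqrtNeg l))
    (hv' : A.valuation (starRingEnd ℂ w) = 1) :
    ∃ α ∈ ℚ⟮sqrtNeg l⟯, IsIntegral ℤ α ∧ α * starRingEnd ℂ α = p ^ classNumSqrtNeg l ∧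
      (w = α ^ 2 ∨ w = -α ^ 2) := by
  have hl : Squarefree l := (Fact.out : l.Prime).squarefree
  have hh : classNumSqrtNeg l ≠ 0 := (odd_classNumSqrtNeg hl4 hl3).pos.ne'
  have hlt : A.valuation w < 1 := hv ▸ pow_lt_one₀ zero_le hA (by omega)
  obtain ⟨α, hαl, hα, hαα, hvα'⟩ :=
    exists_mul_conj_eq_pow_classNumSqrtNeg hp hA hl hl4 hwl hw hlt hv'
  have hvα : A.valuation α = A.valuation (p : ℂ) ^ classNumSqrtNeg l := by
    simpa [hvα'] using congrArg A.valuation hαα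
  exact ⟨α, hαl, hα, hαα, eq_or_eq_neg_of_mul_conj_eq_pow hp hA hl hl4 hl3 hwl (pow_mem hαl 2) hw
    (hα.pow 2) hww (by rw [map_pow, ← mul_pow, hαα, ← pow_mul, mul_comm])
    (by rw [map_pow, hvα, hv, ← pow_mul, mul_comm])⟩

theorem valuation_conj_eq_of_mul_conj_eq_pow (hp : p ≠ 0) {z : ℂ} {s t : ℕ}
    (hzz : z * starRingEnd ℂ z = p ^ (s + t)) (hv : A.valuation z = A.valuation (p : ℂ) ^ s) :
    A.valuation (starRingEnd ℂ z) = A.valuation (p : ℂ) ^ t := by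
  have hpv : A.valuation (p : ℂ) ≠ 0 := (Valuation.ne_zero_iff _).mpr (Nat.cast_ne_zero.mpr hp)
  refine mul_left_cancel₀ (pow_ne_zero s hpv) ?_
  rw [← hv, ← map_mul, hzz, hv, map_pow, pow_add]

theorem exists_eq_or_eq_neg_pow_mul_sq_of_valuation_eq [Fact l.Prime] (hp : p.Prime)
    (hA : A.valuation (p : ℂ) < 1) (hl4 : l % 4 = 3) (hl3 : 3 < l) {z : ℂ} {d : ℕ}
    (hzl : z ∈ ℚ⟮sqrtNeg l⟯) (hz : IsIntegral ℤ z)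
    (hzz : z * starRingEnd ℂ z = p ^ (2 * (d + classNumSqrtNeg l)))
    (hv : A.valuation z = A.valuation (p : ℂ) ^ (d + 2 * classNumSqrtNeg l)) :
    ∃ α ∈ ℚ⟮sqrtNeg l⟯, IsIntegral ℤ α ∧ α * starRingEnd ℂ α = p ^ classNumSqrtNeg l ∧
      (z = p ^ d * α ^ 2 ∨ z = -(p ^ d * α ^ 2)) := by
  set h := classNumSqrtNeg l
  have hp0 : (p : ℂ) ≠ 0 := Nat.cast_ne_zero.mpr hp.ne_zero
  have hpd : A.valuation (p : ℂ) ^ d ≠ 0 := pow_ne_zero d ((Valuation.ne_zero_iff _).mpr hp0)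
  set w : ℂ := z / p ^ d with hw
  have hpw : p ^ d * w = z := mul_div_cancel₀ _ (pow_ne_zero d hp0)
  have hww : w * starRingEnd ℂ w = p ^ (2 * h) := by
    rw [hw, map_div₀, map_pow, conj_natCast, div_mul_div_comm, hzz,
      div_eq_iff (mul_ne_zero (pow_ne_zero d hp0) (pow_ne_zero d hp0))]
    ring
  have hvw : A.valuation w = A.valuation (p : ℂ) ^ (2 * h) :=
    mul_left_cancel₀ hpd (by rw [← map_pow, ← map_mul, hpw, hv, map_pow, pow_add])
  have hvw' : A.valuation (starRingEnd ℂ w) = 1 := by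
    simpa using valuation_conj_eq_of_mul_conj_eq_pow (t := 0) hp.ne_zero hww hvw
  have hwl : w ∈ ℚ⟮sqrtNeg l⟯ := div_mem hzl (pow_mem (_root_.natCast_mem _ p) d)
  have hwint : IsIntegral ℤ w := isIntegral_of_valuation_le_one hp hA hwl (hpw ▸ hz)
    (hvw ▸ pow_le_one₀ zero_le hA.le) hvw'.le
  obtain ⟨α, hαl, hα, hαα, hwα⟩ :=
    exists_eq_sq_or_eq_neg_sq hp hA hl4 hl3 hwl hwint hww hvw hvw'
  refine ⟨α, hαl, hα, hαα, hwα.imp ?_ ?_⟩ <;> intro h1 <;> rw [← hpw, h1]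
  rw [mul_neg]

theorem exists_eq_or_eq_neg_pow_mul_sq [Fact l.Prime] (hp : p.Prime)
    (hA : A.valuation (p : ℂ) < 1) (hl4 : l % 4 = 3) (hl3 : 3 < l) {z : ℂ} {d : ℕ}
    (hzl : z ∈ ℚ⟮sqrtNeg l⟯) (hz : IsIntegral ℤ z)
    (hzz : z * starRingEnd ℂ z = p ^ (2 * (d + classNumSqrtNeg l)))
    (hv : A.valuation z = A.valuation (p : ℂ) ^ d ∨
      A.valuation z = A.valuation (p : ℂ) ^ (d + 2 * classNumSqrtNeg l)) :
    ∃ α ∈ ℚ⟮sqrtNeg l⟯, IsIntegral ℤ α ∧ α * starRingEnd ℂ α = p ^ classNumSqrtNeg l ∧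
      (z = p ^ d * α ^ 2 ∨ z = -(p ^ d * α ^ 2)) := by
  rcases hv with hv | hv
  · have hvc : A.valuation (starRingEnd ℂ z) =
        A.valuation (p : ℂ) ^ (d + 2 * classNumSqrtNeg l) :=
      valuation_conj_eq_of_mul_conj_eq_pow hp.ne_zero (by rw [hzz]; ring) hv
    obtain ⟨α, hαl, hα, hαα, hzα⟩ :=
      exists_eq_or_eq_neg_pow_mul_sq_of_valuation_eq hp hA hl4 hl3 (conj_mem_adjoin_sqrtNeg hzl)
        (isIntegral_conj hz) (by rw [conj_conj, mul_comm, hzz]) hvc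
    refine ⟨_, conj_mem_adjoin_sqrtNeg hαl, isIntegral_conj hα, by rw [conj_conj, mul_comm, hαα],
      hzα.imp ?_ ?_⟩ <;> intro h1 <;> rw [← conj_conj z, h1] <;> simp
  · exact exists_eq_or_eq_neg_pow_mul_sq_of_valuation_eq hp hA hl4 hl3 hzl hz hzz hv

theorem valuation_sqrtNeg_lt_one (hB : B.valuation (l : ℂ) < 1) :
    B.valuation (sqrtNeg l) < 1 := by
  refine lt_of_pow_lt_pow_left₀ 2 zero_le ?_
  rwa [← map_pow, sqrtNeg_sq, Valuation.map_neg, one_pow]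

theorem valuation_sub_conj_lt_one (hB : B.valuation (l : ℂ) < 1) (hl : Squarefree l)
    (hl4 : l % 4 = 3) {α : ℂ} (hαl : α ∈ ℚ⟮sqrtNeg l⟯) (hα : IsIntegral ℤ α) :
    B.valuation (α - starRingEnd ℂ α) < 1 := by
  obtain ⟨a, b, rfl⟩ := exists_int_eq_add_mul_theta hl hl4 hαl hα
  have hsub : a + b * theta l - starRingEnd ℂ (a + b * theta l) = b * sqrtNeg l := by
    simp only [theta, map_add, map_mul, map_div₀, map_intCast, map_one, map_ofNat, conj_sqrtNeg]
    ring
  rw [hsub, map_mul]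
  exact mul_lt_one_of_nonneg_of_lt_one_right
    (valuation_le_one_of_isIntegral isIntegral_algebraMap) zero_le (valuation_sqrtNeg_lt_one hB)

theorem modEq_or_neg_modEq_of_four_mul_pow_eq [Fact l.Prime] (hl4 : l % 4 = 3) {h : ℕ}
    (hh : Odd h) (hlp : legendreSym l p = 1) {a b : ℤ} (hab : 4 * (p : ℤ) ^ h = a ^ 2 + l * b ^ 2) :
    a ≡ -2 * p ^ ((l - 1 + 2 * h) / 4) [ZMOD l] ∨ -a ≡ -2 * p ^ ((l - 1 + 2 * h) / 4) [ZMOD l] := by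
  obtain ⟨k, rfl⟩ := hh
  set e := (l - 1 + 2 * (2 * k + 1)) / 4
  have hsq : ((p : ZMod l) ^ e) ^ 2 = (p : ZMod l) ^ (2 * k + 1) := by
    have hone := legendreSym.eq_pow l p
    rw [hlp, Int.cast_one, Int.cast_natCast] at hone
    rw [← pow_mul, show e * 2 = l / 2 + (2 * k + 1) by omega, pow_add, ← hone, one_mul]
  have hmod := congrArg (Int.cast : ℤ → ZMod l) hab
  push_cast at hmod
  rw [ZMod.natCast_self l, ← hsq] at hmod
  simp only [← ZMod.intCast_eq_intCast_iff]
  push_cast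
  have hfactor : (a : ZMod l) ^ 2 = (-2 * (p : ZMod l) ^ e) ^ 2 := by linear_combination -hmod
  exact (sq_eq_sq_iff_eq_or_eq_neg.mp hfactor).imp_right fun h1 ↦ by rw [h1, neg_neg]

theorem exists_four_mul_pow_eq_sq_add_mul_sq [Fact l.Prime] (hl4 : l % 4 = 3) {h : ℕ} (hh : Odd h)
    (hlp : legendreSym l p = 1) {α : ℂ} (hαl : α ∈ ℚ⟮sqrtNeg l⟯) (hα : IsIntegral ℤ α)
    (hαα : α * starRingEnd ℂ α = p ^ h) :
    ∃ a b : ℤ, 4 * (p : ℤ) ^ h = a ^ 2 + l * b ^ 2 ∧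
      a ≡ -2 * p ^ ((l - 1 + 2 * h) / 4) [ZMOD l] ∧ α ^ 2 = ((a + b * sqrtNeg l) / 2) ^ 2 := by
  obtain ⟨u, b, rfl⟩ := exists_int_eq_add_mul_theta (Fact.out : l.Prime).squarefree hl4 hαl hα
  have hab : 4 * (p : ℤ) ^ h = (2 * u + b) ^ 2 + l * b ^ 2 := by
    rw [mul_conj] at hαα
    have hnorm := four_mul_normSq_add_mul_theta l u b
    rw [show normSq (u + b * theta l) = (p : ℝ) ^ h by exact_mod_cast hαα] at hnorm
    exact_mod_cast hnorm
  rcases modEq_or_neg_modEq_of_four_mul_pow_eq hl4 hh hlp hab with hmod | hmod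
  · exact ⟨2 * u + b, b, hab, hmod, by rw [add_mul_theta_eq]; push_cast; rfl⟩
  · exact ⟨-(2 * u + b), -b, by rw [hab]; ring, hmod, by rw [add_mul_theta_eq]; push_cast; ring⟩

end ImaginaryQuadraticGenerator

/-! ### Gauss sums of order `4 * l ^ r` -/

section StickelbergerSum

variable {l : ℕ} [Fact l.Prime] {r p c m : ℕ}

theorem sum_pow_mul_mod_of_mod_eight_eq_seven (hl8 : l % 8 = 7)
    (hp : p.Coprime (4 * l ^ (r + 1))) (hlp : legendreSym l p = 1)
    (hord : 2 * orderOf (p : ZMod (4 * l ^ (r + 1))) = (4 * l ^ (r + 1)).totient)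
    (hm : orderOf (p : ZMod (4 * l ^ (r + 1))) = 2 * m) (hc : c.Coprime (4 * l ^ (r + 1))) :
    ∑ i ∈ Finset.range (2 * m), p ^ i * c % (4 * l ^ (r + 1)) = 4 * l ^ (r + 1) * m := by
  have hsum := two_mul_sum_pow_mul_mod (by omega) r hp hlp hord hc
  rw [legendreSym_two_of_mod_four_eq_three (by omega), if_pos hl8, hm] at hsum
  zify
  push_cast at hsum
  linarith

theorem exists_sum_pow_mul_mod_of_mod_eight_eq_three (hl8 : l % 8 = 3) (hl3 : 3 < l)
    (hp : p.Coprime (4 * l ^ (r + 1))) (hlp : legendreSym l p = 1)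
    (hord : 2 * orderOf (p : ZMod (4 * l ^ (r + 1))) = (4 * l ^ (r + 1)).totient)
    (hm : orderOf (p : ZMod (4 * l ^ (r + 1))) = 2 * m) (hc : c.Coprime (4 * l ^ (r + 1))) :
    ∃ d, m = d + classNumSqrtNeg l ∧
      (∑ i ∈ Finset.range (2 * m), p ^ i * c % (4 * l ^ (r + 1)) = 4 * l ^ (r + 1) * d ∨
        ∑ i ∈ Finset.range (2 * m), p ^ i * c % (4 * l ^ (r + 1)) =
          4 * l ^ (r + 1) * (d + 2 * classNumSqrtNeg l)) := by
  have hl4 : l % 4 = 3 := by omega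
  have hsum := two_mul_sum_pow_mul_mod hl4 r hp hlp hord hc
  rw [legendreSym_two_of_mod_four_eq_three hl4, if_neg (by omega), hm] at hsum
  set N := 4 * l ^ (r + 1) with hN
  set T := ∑ i ∈ Finset.range (2 * m), p ^ i * c % N with hT
  set h := classNumSqrtNeg l
  have hN0 : 0 < N := mul_pos four_pos (pow_pos (Fact.out : l.Prime).pos _)
  have hTle : T ≤ N * (2 * m) := by
    refine (Finset.sum_le_card_nsmul _ _ N fun i _ ↦ (Nat.mod_lt _ hN0).le).trans_eq ?_
    rw [Finset.card_range, smul_eq_mul, mul_comm]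
  have hlc : ((c : ℤ) : ZMod l) ≠ 0 := by
    rw [Int.cast_natCast, Ne, ZMod.natCast_eq_zero_iff]
    intro hdvd
    exact (Fact.out : l.Prime).not_dvd_one
      (hc ▸ Nat.dvd_gcd hdvd (dvd_mul_of_dvd_right (dvd_pow_self l r.succ_ne_zero) 4))
  have hmoment : legendreSym l c * legendreMoment l = l * h ∨
      legendreSym l c * legendreMoment l = -(l * h) := by
    rw [← sq_eq_sq_iff_eq_or_eq_neg, mul_pow, legendreSym.sq_one l hlc, one_mul,
      sq_legendreMoment hl4 hl3]
  have hNl : (N : ℤ) = 4 * (l ^ r * l) := by rw [hN]; push_cast; ring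
  have hTN : (T : ℤ) = N * m + 4 * l ^ r * (legendreSym l c * legendreMoment l) := by
    rw [hT]
    push_cast at hsum ⊢
    linarith
  have hh0 : (T : ℤ) = N * (m + h) ∨ (T : ℤ) = N * (m - h) := by
    refine hmoment.imp ?_ ?_ <;> intro h1 <;> rw [hTN, h1, hNl] <;> ring
  have hNh : (N : ℤ) * h ≤ N * m := by
    have : (T : ℤ) ≤ N * (2 * m) := mod_cast hTle
    rcases hh0 with h1 | h1 <;> linarith [Int.natCast_nonneg T]
  obtain ⟨d, hd⟩ := Nat.exists_eq_add_of_le'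
    (show h ≤ m by exact_mod_cast le_of_mul_le_mul_left hNh (mod_cast hN0))
  refine ⟨d, hd, hh0.symm.imp ?_ ?_⟩ <;> intro h1 <;> zify <;> rw [h1, hd] <;> push_cast <;> ring

end StickelbergerSum

theorem four_mul_prime_pow_dvd_sum_range_pow {l p r : ℕ} (hl : l.Prime) (hl3 : 3 < l)
    (hr : r ≠ 0) (hp4 : p % 4 = 3) (hord : orderOf (p : ZMod (l ^ r)) = (l ^ r).totient / 2) :
    4 * l ^ r ∣ ∑ i ∈ Finset.range (l ^ r).totient, p ^ i := by
  have hl2 : 2 < l := by omega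
  have htot := totient_pow_eq_two_mul hl2 hr
  exact (((Nat.coprime_primes Nat.prime_two hl).mpr hl2.ne).pow 2 r).mul_dvd_of_dvd_of_dvd
    (four_dvd_sum_range_pow hp4 (htot ▸ even_two_mul _))
    (prime_pow_dvd_sum_range_pow hl (not_modEq_one_of_orderOf_eq hl hl3 hr hord)
      (hord ▸ Dvd.intro_left 2 htot.symm))

section GaussSum

variable {p : ℕ} [Fact p.Prime] {F : Type*} [Field F] [Fintype F] [Algebra (ZMod p) F]
  {χ : MulChar F ℂ}

theorem map_algebraMap_zmod_eq_one {N f : ℕ} (hF : Fintype.card F = p ^ f) (hχ : χ ^ N = 1)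
    (hN : N ∣ ∑ i ∈ Finset.range f, p ^ i) {a : ZMod p} (ha : a ≠ 0) :
    χ (algebraMap (ZMod p) F a) = 1 := by
  have hfin : Module.finrank (ZMod p) F = f := by
    have := Module.card_eq_pow_finrank (K := ZMod p) (V := F)
    rw [hF, ZMod.card] at this
    exact (Nat.pow_right_injective (Fact.out : p.Prime).two_le this).symm
  exact map_algebraMap_eq_one_of_dvd hχ (by rwa [hfin, Nat.card_zmod]) ha

theorem gaussSum_traceChar_mul_conj {f : ℕ} (hF : Fintype.card F = p ^ f) (hχ : χ ≠ 1) :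
    gaussSum χ (traceChar p F) * starRingEnd ℂ (gaussSum χ (traceChar p F)) = (p : ℂ) ^ f := by
  rw [gaussSum_mul_conj hχ (isPrimitive_traceChar p F), hF, Nat.cast_pow]

theorem exists_coprime_valuation_gaussSum_eq_pow {f : ℕ} {A : ValuationSubring ℂ}
    (hA : A.valuation (p : ℂ) < 1) (hF : Fintype.card F = p ^ f) (hχ : χ ≠ 1) :
    ∃ c : ℕ, c.Coprime (orderOf χ) ∧ ∀ s,
      ∑ i ∈ Finset.range f, p ^ i * c % orderOf χ = orderOf χ * s →
        A.valuation (gaussSum χ (traceChar p F)) = A.valuation (p : ℂ) ^ s := by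
  obtain ⟨c, hc, hv⟩ := exists_valuation_gaussSum_pow_orderOf hA hF hχ
  refine ⟨c, hc, fun s hs ↦ ?_⟩
  rw [hs, mul_comm, pow_mul] at hv
  exact (pow_left_inj₀ zero_le zero_le χ.orderOf_pos.ne').mp hv

variable {l : ℕ} [Fact l.Prime]

theorem gaussSum_traceChar_mem_adjoin_sqrtNeg {N : ℕ} [NeZero N] (hl4 : l % 4 = 3) (hlN : l ∣ N)
    (hp : p.Coprime N) (hlp : legendreSym l p = 1)
    (hord : 2 * orderOf (p : ZMod N) = N.totient) (hχ1 : χ ≠ 1) (hχ : χ ^ N = 1)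
    (htriv : ∀ a : ZMod p, a ≠ 0 → χ (algebraMap (ZMod p) F a) = 1) :
    gaussSum χ (traceChar p F) ∈ ℚ⟮sqrtNeg l⟯ := by
  obtain ⟨a, b, h⟩ := exists_gaussSum_traceChar_eq hl4 hlN hp hlp hord hχ1 hχ htriv
  rw [h]
  convert ratCast_add_mul_sqrtNeg_mem_adjoin l (a / 2) (b / 2) using 1
  push_cast
  ring

theorem gaussSum_traceChar_eq_of_eq_or_eq_neg {r d k : ℕ} {α : ℂ} (hl4 : l % 4 = 3)
    (hp4 : p % 4 = 3) (hpl : p ≠ l) (hdk : Odd (d + k)) (hF : Fintype.card F = p ^ (2 * (d + k)))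
    (hχ : orderOf χ = 4 * l ^ r)
    (htriv : ∀ a : ZMod p, a ≠ 0 → χ (algebraMap (ZMod p) F a) = 1)
    (hαl : α ∈ ℚ⟮sqrtNeg l⟯) (hα : IsIntegral ℤ α) (hαα : α * starRingEnd ℂ α = p ^ k)
    (hz : gaussSum χ (traceChar p F) = p ^ d * α ^ 2 ∨
      gaussSum χ (traceChar p F) = -(p ^ d * α ^ 2)) :
    gaussSum χ (traceChar p F) = (-1) ^ ((p + 1) / 4) * (p ^ d * α ^ 2) := by
  have hl : l.Prime := Fact.out
  obtain ⟨δ, hδ, hz⟩ : ∃ δ : ℤ, (δ = 1 ∨ δ = -1) ∧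
      gaussSum χ (traceChar p F) = δ * (p ^ d * α ^ 2) := by
    rcases hz with hz | hz
    · exact ⟨1, .inl rfl, by simp [hz]⟩
    · exact ⟨-1, .inr rfl, by simp [hz]⟩
  obtain ⟨B, hB⟩ := exists_valuationSubring_natCast_lt_one (K := ℂ) hl
  obtain ⟨j, hj⟩ := hdk
  have hsub : gaussSum χ (traceChar p F) - δ * (p : ℂ) ^ (2 * (d + k) / 2) =
      δ * p ^ d * α * (α - starRingEnd ℂ α) := by
    rw [hz, Nat.mul_div_cancel_left _ two_pos, pow_add, ← hαα]
    ring
  have hlt : B.valuation (gaussSum χ (traceChar p F) - δ * (p : ℂ) ^ (2 * (d + k) / 2)) < 1 := by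
    rw [hsub, map_mul]
    exact mul_lt_one_of_nonneg_of_lt_one_right
      (valuation_le_one_of_isIntegral (((isIntegral_intCast δ).mul
        ((isIntegral_natCast p).pow d)).mul hα)) zero_le
      (valuation_sub_conj_lt_one hB hl.squarefree hl4 hαl hα)
  rw [hz, eq_neg_one_pow_of_valuation_gaussSum_sub_lt_one hB (by omega) hpl hp4 (by omega) hF hχ
    htriv hδ hlt, Int.cast_pow, Int.cast_neg, Int.cast_one]

theorem gaussSum_traceChar_eq_of_mod_eight_eq_seven {r m : ℕ} (hl8 : l % 8 = 7)
    (hp4 : p % 4 = 3) (hm : Odd m) (hp : p.Coprime (4 * l ^ (r + 1))) (hlp : legendreSym l p = 1)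
    (hord : orderOf (p : ZMod (4 * l ^ (r + 1))) = 2 * m)
    (hind : 2 * orderOf (p : ZMod (4 * l ^ (r + 1))) = (4 * l ^ (r + 1)).totient)
    (hF : Fintype.card F = p ^ (2 * m)) (hχ : orderOf χ = 4 * l ^ (r + 1))
    (htriv : ∀ a : ZMod p, a ≠ 0 → χ (algebraMap (ZMod p) F a) = 1) :
    gaussSum χ (traceChar p F) = (-1) ^ ((p + 1) / 4) * (p : ℂ) ^ m := by
  have hχ1 : χ ≠ 1 := by
    rw [Ne, ← orderOf_eq_one_iff, hχ]
    omega
  have hlN : l ∣ 4 * l ^ (r + 1) := dvd_mul_of_dvd_right (dvd_pow_self l r.succ_ne_zero) 4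
  have hpl : p ≠ l := by
    rintro rfl
    simp [legendreSym] at hlp
  obtain ⟨A, hA⟩ := exists_valuationSubring_natCast_lt_one (K := ℂ) (Fact.out : p.Prime)
  obtain ⟨c, hc, hv⟩ := exists_coprime_valuation_gaussSum_eq_pow hA hF hχ1
  rw [hχ] at hc hv
  have hz : gaussSum χ (traceChar p F) = p ^ m ∨ gaussSum χ (traceChar p F) = -p ^ m := by
    refine eq_or_eq_neg_of_mul_conj_eq_pow (Fact.out : p.Prime) hA
      (Fact.out : l.Prime).squarefree (by omega) (by omega)
      (gaussSum_traceChar_mem_adjoin_sqrtNeg (by omega) hlN hp hlp hind hχ1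
        (hχ ▸ pow_orderOf_eq_one χ) htriv)
      (pow_mem (_root_.natCast_mem _ p) m) (isIntegral_gaussSum _ _)
      ((isIntegral_natCast p).pow m) (gaussSum_traceChar_mul_conj hF hχ1) ?_ ?_
    · rw [map_pow, conj_natCast, ← pow_add, two_mul]
    · rw [map_pow]
      exact hv m (sum_pow_mul_mod_of_mod_eight_eq_seven hl8 hp hlp hind hord hc)
  have hsign := gaussSum_traceChar_eq_of_eq_or_eq_neg (d := m) (k := 0) (α := 1) (by omega) hp4
    hpl hm hF hχ htriv (one_mem _) isIntegral_one (by simp) (by simpa using hz)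
  simpa using hsign

theorem exists_gaussSum_traceChar_eq_of_mod_eight_eq_three {r m : ℕ} (hl8 : l % 8 = 3)
    (hl3 : 3 < l) (hp4 : p % 4 = 3) (hm : Odd m) (hp : p.Coprime (4 * l ^ (r + 1)))
    (hlp : legendreSym l p = 1) (hord : orderOf (p : ZMod (4 * l ^ (r + 1))) = 2 * m)
    (hind : 2 * orderOf (p : ZMod (4 * l ^ (r + 1))) = (4 * l ^ (r + 1)).totient)
    (hF : Fintype.card F = p ^ (2 * m)) (hχ : orderOf χ = 4 * l ^ (r + 1))
    (htriv : ∀ a : ZMod p, a ≠ 0 → χ (algebraMap (ZMod p) F a) = 1) :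
    ∃ d, m = d + classNumSqrtNeg l ∧ ∃ a b : ℤ,
      4 * (p : ℤ) ^ classNumSqrtNeg l = a ^ 2 + l * b ^ 2 ∧
      a ≡ -2 * p ^ ((l - 1 + 2 * classNumSqrtNeg l) / 4) [ZMOD l] ∧
      gaussSum χ (traceChar p F) =
        (-1) ^ ((p + 1) / 4) * (p : ℂ) ^ d * ((a + b * sqrtNeg l) / 2) ^ 2 := by
  have hχ1 : χ ≠ 1 := by
    rw [Ne, ← orderOf_eq_one_iff, hχ]
    omega
  have hl4 : l % 4 = 3 := by omega
  have hlN : l ∣ 4 * l ^ (r + 1) := dvd_mul_of_dvd_right (dvd_pow_self l r.succ_ne_zero) 4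
  have hpl : p ≠ l := by
    rintro rfl
    simp [legendreSym] at hlp
  obtain ⟨A, hA⟩ := exists_valuationSubring_natCast_lt_one (K := ℂ) (Fact.out : p.Prime)
  obtain ⟨c, hc, hv⟩ := exists_coprime_valuation_gaussSum_eq_pow hA hF hχ1
  rw [hχ] at hc hv
  obtain ⟨d, rfl, hsum⟩ :=
    exists_sum_pow_mul_mod_of_mod_eight_eq_three hl8 hl3 hp hlp hind hord hc
  obtain ⟨α, hαl, hα, hαα, hz⟩ := exists_eq_or_eq_neg_pow_mul_sq (Fact.out : p.Prime) hA hl4 hl3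
    (gaussSum_traceChar_mem_adjoin_sqrtNeg hl4 hlN hp hlp hind hχ1
      (hχ ▸ pow_orderOf_eq_one χ) htriv)
    (isIntegral_gaussSum _ _) (gaussSum_traceChar_mul_conj hF hχ1) (hsum.imp (hv _) (hv _))
  refine ⟨d, rfl, ?_⟩
  obtain ⟨a, b, hab, hmod, hsq⟩ := exists_four_mul_pow_eq_sq_add_mul_sq hl4
    (odd_classNumSqrtNeg hl4 hl3) hlp hαl hα hαα
  refine ⟨a, b, hab, hmod, ?_⟩
  rw [gaussSum_traceChar_eq_of_eq_or_eq_neg hl4 hp4 hpl hm hF hχ htriv hαl hα hαα hz, hsq,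
    mul_assoc]

end GaussSum

theorem statement15 (p l r N f : ℕ) (hp : p.Prime) (hl : l.Prime) (hl4 : l % 4 = 3)
    (hl3 : 3 < l) (hr : 1 ≤ r) (hN : N = 4 * l ^ r) (hNp : Nat.gcd N p = 1)
    (hp4 : p % 4 = 3)
    (hord : orderOf (p : ZMod (l ^ r)) = Nat.totient (l ^ r) / 2)
    (hf : orderOf (p : ZMod N) = f) (hind : f = Nat.totient N / 2)
    (F : Type) [Field F] [Fintype F] [Algebra (ZMod p) F]
    (hcard : Fintype.card F = p ^ f)
    (χ : MulChar F ℂ) (hχord : orderOf χ = N) :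
    (l % 8 = 7 →
      gaussSumN p χ 1 = (-1 : ℂ) ^ ((p + 1) / 4) * (p : ℂ) ^ ((f : ℤ) / 2)) ∧
    (l % 8 = 3 →
      ∃ a b : ℤ,
        4 * (p : ℤ) ^ classNumSqrtNeg l = a ^ 2 + (l : ℤ) * b ^ 2 ∧
        a ≡ -2 * (p : ℤ) ^ ((l - 1 + 2 * classNumSqrtNeg l) / 4) [ZMOD (l : ℤ)] ∧
        gaussSumN p χ 1 =
          (-1 : ℂ) ^ ((p + 1) / 4) *
            (p : ℂ) ^ ((f : ℤ) / 2 - (classNumSqrtNeg l : ℤ)) *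
            (((a : ℂ) + (b : ℂ) * sqrtNeg l) / 2) ^ 2) := by
  have := Fact.mk hp
  have := Fact.mk hl
  obtain ⟨s, rfl⟩ := Nat.exists_eq_add_of_le' hr
  subst hN hf
  have hm := odd_totient_prime_pow_div_two hl hl4 s.succ_ne_zero
  have hlp : legendreSym l p = 1 := legendreSym_eq_one_of_odd_orderOf s.succ_ne_zero (hord ▸ hm)
  have htot := totient_pow_eq_two_mul (by omega : 2 < l) s.succ_ne_zero
  have hdvd := four_mul_prime_pow_dvd_sum_range_pow hl hl3 s.succ_ne_zero hp4 hord
  generalize (l ^ (s + 1)).totient / 2 = m at hm htot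
  have htot' : (4 * l ^ (s + 1)).totient = 2 * (2 * m) := by
    rw [totient_four_mul_prime_pow hl (by omega), htot]
  rw [htot', Nat.mul_div_cancel_left _ two_pos] at hind
  rw [← hind] at htot'
  rw [hind] at hcard ⊢
  have htriv (a : ZMod p) (ha : a ≠ 0) : χ (algebraMap (ZMod p) F a) = 1 :=
    map_algebraMap_zmod_eq_one hcard (hχord ▸ pow_orderOf_eq_one χ) (htot ▸ hdvd) ha
  rw [gaussSumN_eq_gaussSum, pow_one, Nat.cast_mul, Nat.cast_two,
    Int.mul_ediv_cancel_left _ two_ne_zero]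
  refine ⟨fun hl8 ↦ ?_, fun hl8 ↦ ?_⟩
  · rw [zpow_natCast, gaussSum_traceChar_eq_of_mod_eight_eq_seven hl8 hp4 hm (.symm hNp) hlp hind
      htot'.symm hcard hχord htriv]
  · obtain ⟨d, rfl, a, b, hab, hmod, hz⟩ := exists_gaussSum_traceChar_eq_of_mod_eight_eq_three
      hl8 hl3 hp4 hm (.symm hNp) hlp hind htot'.symm hcard hχord htriv
    exact ⟨a, b, hab, hmod, by rw [hz, Nat.cast_add, add_sub_cancel_right, zpow_natCast]⟩
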